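/- arXiv:2503.02536 — 2 statements merged into one kernel-verified Lean document; each statement's English description precedes it below -/
import Mathlib

section
/- Assume m ≥ n+1 and that f_1,…,f_m satisfy the SNC hypothesis. Then the likelihood ideal equals the determinantal ideal: I_A = I_{m+1}(Q^s_{∖1}) + ⟨d_1·s_1 + d_2·s_2 + ⋯ + d_m·s_m⟩. In particular, I_A is generated by the linear form Σ_{i=1}^m d_i·s_i together with all (m+1)×(m+1) minors of the matrix Q^s_{∖1}. -/
open MvPolynomial

noncomputable section

/-- The polynomial ring `R = ℂ[x_1,…,x_n]`. -/
abbrev Rp (n : ℕ) := MvPolynomial (Fin n) ℂ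

/-- The polynomial ring `S = ℂ[s_1,…,s_m,x_1,…,x_n]`; `Sum.inl i ↦ s_i`, `Sum.inr j ↦ x_j`. -/
abbrev Sp (n m : ℕ) := MvPolynomial (Fin m ⊕ Fin n) ℂ

/-- The inclusion `R ⊆ S`. -/
def toS (n m : ℕ) : Rp n →ₐ[ℂ] Sp n m := rename Sum.inr

/-- Column index set for `Q_{∖1}`: diagonal columns `2,…,m` and the `n` Jacobian columns. -/
abbrev Col (n m : ℕ) := {k : Fin m // (k : ℕ) ≠ 0} ⊕ Fin n

/-- The SNC (strict normal crossing) hypothesis, via the Jacobian criterion. -/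
def SNC (n m : ℕ) (f : Fin m → Rp n) : Prop :=
  (∀ i, Irreducible (f i)) ∧
  ∀ I : Finset (Fin m), 1 ≤ I.card → I.card ≤ n →
    ∀ p : Fin n → ℂ, p ≠ 0 → (∀ i ∈ I, eval p (f i) = 0) →
      (Matrix.of fun (i : I) (j : Fin n) => eval p (pderiv j (f i.1))).rank = I.card

/-- The matrix `Q = (diag(f_1,…,f_m) | J_f)`. -/
def Qmat (n m : ℕ) (f : Fin m → Rp n) : Matrix (Fin m) (Fin m ⊕ Fin n) (Rp n) :=
  Matrix.of fun i => Sum.elim (fun k => if i = k then f i else 0) (fun j => pderiv j (f i))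

/-- The matrix `Q_{∖1}`, obtained from `Q` by deleting the first column. -/
def Q1 (n m : ℕ) (f : Fin m → Rp n) : Matrix (Fin m) (Col n m) (Rp n) :=
  Matrix.of fun i => Sum.elim (fun k => if i = (k : Fin m) then f i else 0)
    (fun j => pderiv j (f i))

/-- The matrix `Q^s_{∖1}`: `Q_{∖1}` (over `S`) with the row `(s_2,…,s_m,0,…,0)` appended. -/
def Qs1 (n m : ℕ) (f : Fin m → Rp n) : Matrix (Option (Fin m)) (Col n m) (Sp n m) :=
  Matrix.of fun i? c =>
    i?.elim (Sum.elim (fun k : {k : Fin m // (k : ℕ) ≠ 0} => (X (Sum.inl (k : Fin m)) : Sp n m)) (fun _ : Fin n => (0 : Sp n m)) c)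
      (fun i => toS n m (Q1 n m f i c))

/-- The ideal generated by all `k × k` minors of a matrix. -/
def minorsIdeal {A : Type*} [CommRing A] {ι κ : Type*} (k : ℕ) (M : Matrix ι κ A) : Ideal A :=
  Ideal.span {x | ∃ r : Fin k → ι, ∃ c : Fin k → κ,
    Function.Injective r ∧ Function.Injective c ∧ x = (M.submatrix r c).det}

/-- `h_j = Σ_i s_i·(Π_{k≠i} f_k)·∂f_i/∂x_j`. -/
def hpoly (n m : ℕ) (f : Fin m → Rp n) (j : Fin n) : Sp n m :=
  ∑ i, X (Sum.inl i) * toS n m (((Finset.univ.erase i).prod f) * pderiv j (f i))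

/-- The linear form `Σ_i d_i·s_i`. -/
def linForm (n m : ℕ) (d : Fin m → ℕ) : Sp n m := ∑ i, (d i : Sp n m) * X (Sum.inl i)

/-- The likelihood ideal `I_A`: contraction to `S` of the ideal `⟨h_1,…,h_n⟩` of `S_f`. -/
def IA (n m : ℕ) (f : Fin m → Rp n) : Ideal (Sp n m) :=
  (Ideal.span (Set.range fun j =>
      algebraMap (Sp n m) (Localization.Away (toS n m (∏ i, f i))) (hpoly n m f j))).comap
    (algebraMap (Sp n m) (Localization.Away (toS n m (∏ i, f i))))

section PartP1
open RingTheory.Sequence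
open scoped Pointwise
universe uHR vHR

/-- `W` has a partial resolution of length `L` by modules on which `gs` is weakly regular. -/
def HasRes {A : Type uHR} [CommRing A] (gs : List A) :
    ℕ → ∀ (W : Type vHR) [AddCommGroup W] [Module A W], Prop
  | 0 => fun W _ _ => IsWeaklyRegular W gs
  | L + 1 => fun W _ _ => ∃ (B C : Type vHR) (_ : AddCommGroup B) (_ : Module A B)
      (_ : AddCommGroup C) (_ : Module A C) (i : B →ₗ[A] C) (π : C →ₗ[A] W),
      Function.Injective i ∧ Function.Surjective π ∧ Function.Exact i π ∧
      IsWeaklyRegular C gs ∧ HasRes gs L B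

lemma mem_smul_top_iff' {A M : Type*} [CommRing A] [AddCommGroup M] [Module A M] (g : A) (x : M) :
    x ∈ g • (⊤ : Submodule A M) ↔ ∃ y, g • y = x := by
  constructor
  · intro h
    obtain ⟨y, _, hy⟩ := (Submodule.mem_smul_pointwise_iff_exists x g ⊤).1 h
    exact ⟨y, hy⟩
  · rintro ⟨y, rfl⟩
    exact Submodule.smul_mem_pointwise_smul _ _ _ Submodule.mem_top

lemma HasRes.quot {A : Type*} [CommRing A] (g : A) (gs : List A) (L : ℕ) :
    ∀ (B : Type*) [AddCommGroup B] [Module A B], HasRes (g :: gs) L B → IsSMulRegular B g →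
      HasRes gs L (QuotSMulTop g B) := by
  induction L with
  | zero =>
    intro B _ _ h _
    exact ((isWeaklyRegular_cons_iff B g gs).1 h).2
  | succ L ih =>
    intro B _ _ h hg
    obtain ⟨B', C, _, _, _, _, i, π, hi, hπ, hex, hC, hB'⟩ := h
    rw [isWeaklyRegular_cons_iff] at hC
    have hgB' : IsSMulRegular B' g := by
      intro x y hxy
      apply hi
      apply hC.1
      simpa using congrArg i hxy
    refine ⟨QuotSMulTop g B', QuotSMulTop g C, inferInstance, inferInstance, inferInstance,
      inferInstance, QuotSMulTop.map g i, QuotSMulTop.map g π, ?_,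
      QuotSMulTop.map_surjective g hπ, QuotSMulTop.map_exact g hex hπ, hC.2, ih B' hB' hgB'⟩
    rw [injective_iff_map_eq_zero]
    intro x hx
    obtain ⟨b, rfl⟩ := Submodule.mkQ_surjective _ x
    simp only [Submodule.mkQ_apply] at hx ⊢
    rw [QuotSMulTop.map_apply_mk, Submodule.Quotient.mk_eq_zero, mem_smul_top_iff'] at hx
    obtain ⟨c, hc⟩ := hx
    rw [Submodule.Quotient.mk_eq_zero, mem_smul_top_iff']
    have h0 : π c = 0 := by
      apply hg
      simp only [smul_zero]
      rw [← map_smul, hc]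
      exact hex.apply_apply_eq_zero b
    obtain ⟨b', rfl⟩ := (hex c).1 h0
    exact ⟨b', hi (by simpa using hc)⟩

lemma HasRes.eq_zero {A : Type*} [CommRing A] (P : Ideal A) (L : ℕ) :
    ∀ (gs : List A) (W : Type*) [AddCommGroup W] [Module A W], HasRes gs L W → L < gs.length →
      (∀ g ∈ gs, g ∈ P) → ∀ w : W, (∀ a ∈ P, a • w = 0) → w = 0 := by
  induction L with
  | zero =>
    intro gs W _ _ h hL hP w hw
    obtain _ | ⟨g, gs⟩ := gs
    · simp at hL
    · have := ((isWeaklyRegular_cons_iff W g gs).1 h).1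
      exact this (by simpa using hw g (hP g (by simp)))
  | succ L ih =>
    intro gs W _ _ h hL hP w hw
    obtain _ | ⟨g, gs⟩ := gs
    · simp at hL
    obtain ⟨B, C, _, _, _, _, i, π, hi, hπ, hex, hC, hB⟩ := h
    rw [isWeaklyRegular_cons_iff] at hC
    have hgB : IsSMulRegular B g := by
      intro x y hxy
      apply hi
      apply hC.1
      simpa using congrArg i hxy
    obtain ⟨c, rfl⟩ := hπ w
    have hgc : π (g • c) = 0 := by rw [map_smul]; exact hw g (hP g (by simp))
    obtain ⟨b, hb⟩ := (hex _).1 hgc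
    have key : (Submodule.Quotient.mk b : QuotSMulTop g B) = 0 := by
      refine ih gs _ (HasRes.quot g gs L B hB hgB) (by simpa using hL)
        (fun x hx => hP x (by simp [hx])) _ ?_
      intro a ha
      rw [← Submodule.Quotient.mk_smul, Submodule.Quotient.mk_eq_zero, mem_smul_top_iff']
      have hac : π (a • c) = 0 := by rw [map_smul]; exact hw a ha
      obtain ⟨b', hb'⟩ := (hex _).1 hac
      refine ⟨b', hi ?_⟩
      rw [map_smul, map_smul, hb, hb', smul_comm]
    rw [Submodule.Quotient.mk_eq_zero, mem_smul_top_iff'] at key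
    obtain ⟨b', hb'⟩ := key
    have : c = i b' := by
      apply hC.1
      simp only
      rw [← hb, ← hb', map_smul]
    rw [this]
    exact hex.apply_apply_eq_zero b'

lemma isWeaklyRegular_flat {A C : Type*} [CommRing A] [AddCommGroup C] [Module A C]
    [Module.Flat A C] {gs : List A} (h : IsWeaklyRegular A gs) : IsWeaklyRegular C gs :=
  ((TensorProduct.rid A C).isWeaklyRegular_congr gs).1 h.isWeaklyRegular_lTensor

end PartP1

section PartP2
open RingTheory.Sequence
open scoped Pointwise

namespace NNcopy
open Polynomial MvPolynomial Ideal Nat RingHom List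

variable {k : Type*} [Field k] {n : ℕ} (f : MvPolynomial (Fin (n + 1)) k)
variable (v w : Fin (n + 1) →₀ ℕ)


variable {f v} in
lemma lt_up (vlt : ∀ i, v i < 2 + f.totalDegree) : ∀ l ∈ ofFn v, l < 2 + f.totalDegree := by
  grind


/-- We construct an algebra map `T1 f c` which maps `X_i` into `X_i + c • X_0 ^ r_i` when `i ≠ 0`
and `X_0` to `X_0`. -/
noncomputable abbrev T1 (c : k) :
    MvPolynomial (Fin (n + 1)) k →ₐ[k] MvPolynomial (Fin (n + 1)) k :=
  aeval fun i ↦ if i = 0 then X 0 else X i + c • X 0 ^ ((2 + f.totalDegree) ^ i.1)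

lemma t1_comp_t1_neg (c : k) : (T1 f c).comp (T1 f (-c)) = AlgHom.id _ _ := by
  rw [comp_aeval, ← MvPolynomial.aeval_X_left]
  ext i v
  cases i using Fin.cases <;> simp

/-- `T1 f 1` leads to an algebra equiv `T f`. -/
noncomputable abbrev T := AlgEquiv.ofAlgHom (T1 f 1) (T1 f (-1))
  (t1_comp_t1_neg f 1) (by simpa using t1_comp_t1_neg f (-1))

lemma sum_r_mul_ne (vlt : ∀ i, v i < 2 + f.totalDegree) (wlt : ∀ i, w i < 2 + f.totalDegree) (ne : v ≠ w) :
    ∑ x : Fin (n + 1), (2 + f.totalDegree) ^ x.1 * v x ≠ ∑ x : Fin (n + 1), (2 + f.totalDegree) ^ x.1 * w x := by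
  intro h
  refine ne <| Finsupp.ext <| congrFun <| ofFn_inj.mp ?_
  apply ofDigits_inj_of_len_eq (Nat.lt_add_right f.totalDegree one_lt_two)
    (by simp) (lt_up vlt) (lt_up wlt)
  simpa only [ofDigits_eq_sum_mapIdx, mapIdx_eq_ofFn, get_ofFn, length_ofFn,
    Fin.val_cast, mul_comm, sum_ofFn] using! h

lemma degreeOf_zero_t {a : k} (ha : a ≠ 0) : ((T f) (monomial v a)).degreeOf 0 =
    ∑ i : Fin (n + 1), ((2 + f.totalDegree) ^ i.1) * v i := by
  rw [← natDegree_finSuccEquiv, monomial_eq, Finsupp.prod_pow v fun a ↦ X a]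
  simp only [Fin.prod_univ_succ, Fin.sum_univ_succ, map_mul, map_prod, map_pow,
    AlgEquiv.ofAlgHom_apply, MvPolynomial.aeval_C, MvPolynomial.aeval_X, if_pos, Fin.succ_ne_zero,
    ite_false, one_smul, map_add, finSuccEquiv_X_zero, finSuccEquiv_X_succ, algebraMap_eq]
  have h (i : Fin n) :
      (Polynomial.C (X (R := k) i) + Polynomial.X ^ (2 + f.totalDegree) ^ i.succ.1) ^ v i.succ ≠ 0 :=
    pow_ne_zero (v i.succ) (leadingCoeff_ne_zero.mp <| by simp [add_comm, leadingCoeff_X_pow_add_C])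
  rw [natDegree_mul (by simp [ha]) (mul_ne_zero (by simp) (Finset.prod_ne_zero_iff.mpr
    (fun i _ ↦ h i))), natDegree_mul (by simp) (Finset.prod_ne_zero_iff.mpr (fun i _ ↦ h i)),
    natDegree_prod _ _ (fun i _ ↦ h i), natDegree_finSuccEquiv, degreeOf_C]
  simpa only [natDegree_pow, zero_add, natDegree_X, mul_one, Fin.val_zero, pow_zero, one_mul,
    add_right_inj] using Finset.sum_congr rfl (fun i _ ↦ by
    rw [add_comm (Polynomial.C _), natDegree_X_pow_add_C, mul_comm])

/-- `T` maps different monomials of `f` to polynomials with different degrees in `X_0`. -/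
lemma degreeOf_t_ne_of_ne (hv : v ∈ f.support) (hw : w ∈ f.support) (ne : v ≠ w) :
    (T f <| monomial v <| coeff v f).degreeOf 0 ≠
    (T f <| monomial w <| coeff w f).degreeOf 0 := by
  rw [degreeOf_zero_t _ _ <| mem_support_iff.mp hv, degreeOf_zero_t _ _ <| mem_support_iff.mp hw]
  refine sum_r_mul_ne f v w (fun i ↦ ?_) (fun i ↦ ?_) ne <;>
  exact lt_of_le_of_lt ((monomial_le_degreeOf i ‹_›).trans (degreeOf_le_totalDegree f i))
    (by lia)

lemma leadingCoeff_finSuccEquiv_t :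
    (finSuccEquiv k n ((T f) ((monomial v) (coeff v f)))).leadingCoeff =
    algebraMap k _ (coeff v f) := by
  rw [monomial_eq, Finsupp.prod_fintype]
  · simp only [map_mul, map_prod, leadingCoeff_mul, leadingCoeff_prod]
    rw [AlgEquiv.ofAlgHom_apply, algHom_C, algebraMap_eq, finSuccEquiv_apply,
      eval₂Hom_C, coe_comp]
    simp only [AlgEquiv.ofAlgHom_apply, Function.comp_apply, leadingCoeff_C, map_pow,
      leadingCoeff_pow, algebraMap_eq]
    have : ∀ j, ((finSuccEquiv k n) ((T1 f) 1 (X j))).leadingCoeff = 1 := fun j ↦ by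
      by_cases h : j = 0
      · simp [h, finSuccEquiv_apply]
      · simp only [aeval_eq_bind₁, bind₁_X_right, if_neg h, one_smul, map_add, map_pow]
        obtain ⟨i, rfl⟩ := Fin.exists_succ_eq.mpr h
        simp [finSuccEquiv_X_succ, finSuccEquiv_X_zero, add_comm]
    simp only [this, one_pow, Finset.prod_const_one, mul_one]
  exact fun i ↦ pow_zero _

/-- `T` maps `f` into some polynomial in `X_0` such that the leading coefficient is invertible. -/
lemma T_leadingcoeff_isUnit (fne : f ≠ 0) :
    IsUnit (finSuccEquiv k n (T f f)).leadingCoeff := by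
  obtain ⟨v, vin, vs⟩ := Finset.exists_max_image f.support
    (fun v ↦ (T f ((monomial v) (coeff v f))).degreeOf 0) (support_nonempty.mpr fne)
  set h := fun w ↦ (MvPolynomial.monomial w) (coeff w f)
  simp only [← natDegree_finSuccEquiv] at vs
  replace vs : ∀ x ∈ f.support \ {v}, (finSuccEquiv k n ((T f) (h x))).degree <
      (finSuccEquiv k n ((T f) (h v))).degree := by
    intro x hx
    obtain ⟨h1, h2⟩ := Finset.mem_sdiff.mp hx
    apply degree_lt_degree <| lt_of_le_of_ne (vs x h1) ?_
    simpa only [natDegree_finSuccEquiv]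
      using degreeOf_t_ne_of_ne f _ _ h1 vin <| ne_of_not_mem_cons h2
  have coeff : (finSuccEquiv k n ((T f) (h v + ∑ x ∈ f.support \ {v}, h x))).leadingCoeff =
      (finSuccEquiv k n ((T f) (h v))).leadingCoeff := by
    simp only [map_add, map_sum]
    rw [add_comm]
    apply leadingCoeff_add_of_degree_lt <| (lt_of_le_of_lt <| degree_sum_le _ _) ?_
    have h2 : h v ≠ 0 := by simpa [h] using mem_support_iff.mp vin
    replace h2 : (finSuccEquiv k n ((T f) (h v))) ≠ 0 := fun eq ↦ h2 <|
      by simpa only [map_eq_zero_iff _ (AlgEquiv.injective _)] using eq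
    exact (Finset.sup_lt_iff <| Ne.bot_lt (fun x ↦ h2 <| degree_eq_bot.mp x)).mpr vs
  nth_rw 2 [← f.support_sum_monomial_coeff]
  rw [Finset.sum_eq_add_sum_sdiff_singleton_of_mem vin h]
  rw [leadingCoeff_finSuccEquiv_t] at coeff
  simpa only [coeff, algebraMap_eq] using (mem_support_iff.mp vin).isUnit.map MvPolynomial.C

end NNcopy

lemma trdeg_quot_ker_le {k A B : Type} [Field k] [CommRing A] [CommRing B] [Algebra k A]
    [Algebra k B] (φ : A →ₐ[k] B) (q : Ideal A) (hq : q = RingHom.ker φ) :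
    Algebra.trdeg k (A ⧸ q) ≤ Algebra.trdeg k B := by
  subst hq
  exact trdeg_le_of_injective (Ideal.kerLiftAlg φ) (Ideal.kerLiftAlg_injective φ)

lemma exists_regular_seq {k : Type} [Field k] (N : ℕ) :
    ∀ (P : Ideal (MvPolynomial (Fin N) k)) [P.IsPrime],
    ∃ gs : List (MvPolynomial (Fin N) k), (∀ g ∈ gs, g ∈ P) ∧
      IsWeaklyRegular (MvPolynomial (Fin N) k) gs ∧
      (N : Cardinal) ≤ gs.length + Algebra.trdeg k (MvPolynomial (Fin N) k ⧸ P) := by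
  induction N with
  | zero => intro P _; exact ⟨[], by simp, .nil _ _, by simp⟩
  | succ N ih =>
    intro P hP
    by_cases hbot : P = ⊥
    · subst hbot
      refine ⟨[], by simp, .nil _ _, ?_⟩
      have := (AlgEquiv.quotientBot k (MvPolynomial (Fin (N + 1)) k)).trdeg_eq
      rw [this, MvPolynomial.trdeg_of_isDomain]
      simp
    obtain ⟨g, hgP, hg0⟩ := Submodule.exists_mem_ne_zero_of_ne_bot hbot
    let A := MvPolynomial (Fin N) k
    obtain ⟨e, he⟩ : ∃ e : MvPolynomial (Fin (N + 1)) k ≃ₐ[k] Polynomial A,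
        IsUnit (e g).leadingCoeff :=
      ⟨(NNcopy.T g).trans (MvPolynomial.finSuccEquiv k N), NNcopy.T_leadingcoeff_isUnit g hg0⟩
    let P' : Ideal (Polynomial A) := P.comap e.symm
    have hP' : P'.IsPrime := Ideal.comap_isPrime _ _
    let q : Ideal A := P'.comap (Polynomial.C)
    have hq : q.IsPrime := Ideal.comap_isPrime _ _
    obtain ⟨gs, hgs, hreg, hle⟩ := ih q
    let g1 : Polynomial A := Polynomial.C (he.unit⁻¹ : Aˣ).val * e g
    have hmon : g1.Monic := by
      have := Polynomial.monic_of_isUnit_leadingCoeff_inv_smul he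
      rw [Units.smul_def, Polynomial.smul_eq_C_mul] at this
      exact this
    have hg1 : g1 ∈ P' := by
      apply Ideal.mul_mem_left
      change e.symm (e g) ∈ P
      simpa using hgP
    let L := g1 :: gs.map (algebraMap A (Polynomial A))
    have hL : IsWeaklyRegular (Polynomial A) L := by
      apply IsWeaklyRegular.cons
      · intro x y hxy
        exact mul_left_cancel₀ hmon.ne_zero hxy
      · rw [isWeaklyRegular_map_algebraMap_iff]
        have := hmon.free_quotient
        have e1 : (QuotSMulTop g1 (Polynomial A)) ≃ₗ[A] (Polynomial A ⧸ Ideal.span {g1}) :=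
          (Submodule.quotEquivOfEq _ _ (by
            ext x
            rw [Submodule.mem_smul_pointwise_iff_exists, Ideal.mem_span_singleton']
            simp [mul_comm])).restrictScalars A
        rw [e1.isWeaklyRegular_congr]
        exact isWeaklyRegular_flat hreg
    refine ⟨L.map e.symm, ?_, ?_, ?_⟩
    · intro x hx
      simp only [L, List.map_cons, List.map_map, List.mem_cons, List.mem_map] at hx
      rcases hx with rfl | ⟨y, hy, rfl⟩
      · exact hg1
      · exact hgs y hy
    · refine (AddEquiv.isWeaklyRegular_congr (e := e.symm.toAddEquiv) ?_).1 hL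
      refine List.forall₂_map_right_iff.mpr <| List.forall₂_same.mpr fun r _ x => ?_
      simp
    · have hinj : Algebra.trdeg k (A ⧸ q) ≤ Algebra.trdeg k (MvPolynomial (Fin (N+1)) k ⧸ P) := by
        let φ : A →ₐ[k] MvPolynomial (Fin (N+1)) k ⧸ P :=
          ((Ideal.Quotient.mkₐ k P).comp e.symm.toAlgHom).comp (IsScalarTower.toAlgHom k A (Polynomial A))
        have hker : q = RingHom.ker φ := by
          ext x
          rw [RingHom.mem_ker]
          change _ ↔ Ideal.Quotient.mk P (e.symm (Polynomial.C x)) = 0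
          rw [Ideal.Quotient.eq_zero_iff_mem]
          rfl
        exact trdeg_quot_ker_le φ q hker
      simp only [L, List.length_map, List.length_cons]
      push_cast
      calc (N : Cardinal) + 1 ≤ (gs.length + Algebra.trdeg k (A ⧸ q)) + 1 := by gcongr
        _ ≤ (gs.length + Algebra.trdeg k (MvPolynomial (Fin (N+1)) k ⧸ P)) + 1 := by gcongr
        _ = _ := by ring

lemma exists_regular_seq' {k : Type} [Field k] {σ : Type} [Fintype σ]
    (P : Ideal (MvPolynomial σ k)) [P.IsPrime] :
    ∃ gs : List (MvPolynomial σ k), (∀ g ∈ gs, g ∈ P) ∧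
      IsWeaklyRegular (MvPolynomial σ k) gs ∧
      (Fintype.card σ : Cardinal) ≤ gs.length + Algebra.trdeg k (MvPolynomial σ k ⧸ P) := by
  let e : MvPolynomial (Fin (Fintype.card σ)) k ≃ₐ[k] MvPolynomial σ k :=
    MvPolynomial.renameEquiv k (Fintype.equivFin σ).symm
  have hP' : (P.comap e).IsPrime := Ideal.comap_isPrime _ _
  obtain ⟨gs, h1, h2, h3⟩ := exists_regular_seq _ (P.comap e)
  refine ⟨gs.map e, ?_, ?_, ?_⟩
  · intro g hg
    obtain ⟨y, hy, rfl⟩ := List.mem_map.1 hg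
    exact h1 y hy
  · refine (AddEquiv.isWeaklyRegular_congr (e := e.toAddEquiv) ?_).1 h2
    refine List.forall₂_map_right_iff.mpr <| List.forall₂_same.mpr fun r _ x => ?_
    simp
  · rw [List.length_map]
    refine h3.trans_eq ?_
    congr 1
    refine (Ideal.quotientEquivAlg _ P e ?_).trdeg_eq
    rw [show (Ideal.comap e P) = Ideal.comap e.toRingEquiv P from rfl]
    exact (Ideal.map_comap_of_surjective e.toRingEquiv e.surjective P).symm

end PartP2

section PartP3a
open RingTheory.Sequence

/-- Acyclicity lemma (Peskine–Szpiro style), elementary form. -/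
lemma acyclicity {A V : Type} [CommRing A] [IsNoetherianRing A] [AddCommGroup V] [Module A V]
    (I : Ideal A) (G : Set A) (hG : I = Ideal.span G) (N : ℕ)
    (C : ℕ → Submodule A V) (D : ℕ → V →ₗ[A] V)
    (hflat : ∀ j, Module.Flat A (C j))
    (hmap : ∀ j, ∀ x ∈ C (j + 1), D j x ∈ C j)
    (hdd : ∀ j, ∀ x ∈ C (j + 2), D j (D (j + 1) x) = 0)
    (hzero : C (N + 1) = ⊥)
    (htors : ∀ j, ∀ x ∈ C (j + 1), D j x = 0 → ∀ δ ∈ G, ∃ k : ℕ, ∃ y ∈ C (j + 2),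
      δ ^ k • x = D (j + 1) y)
    (hdepth : ∀ P : Ideal A, P.IsPrime → I ≤ P → ∃ gs : List A, (∀ g ∈ gs, g ∈ P) ∧
      IsWeaklyRegular A gs ∧ N ≤ gs.length) :
    ∀ L j, j + L = N → ∀ gs : List A, IsWeaklyRegular A gs →
      HasRes gs L ((C j) ⧸ LinearMap.range ((D j).restrict (hmap j))) := by
  intro L
  induction L with
  | zero =>
    intro j hj gs hgs
    obtain rfl : j = N := by omega
    have hb : LinearMap.range ((D j).restrict (hmap j)) = ⊥ := by
      rw [LinearMap.range_eq_bot]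
      ext ⟨x, hx⟩
      have hx' := hx
      rw [hzero, Submodule.mem_bot] at hx'
      subst hx'
      simp
    have e := Submodule.quotEquivOfEqBot _ hb
    have := hflat j
    exact (e.isWeaklyRegular_congr gs).2 (isWeaklyRegular_flat hgs)
  | succ L ih =>
    intro j hj gs hgs
    have hR := ih (j + 1) (by omega)
    -- exactness
    have hex : ∀ x : C (j + 1), D j x = 0 →
        x ∈ LinearMap.range ((D (j + 1)).restrict (hmap (j + 1))) := by
      set B := LinearMap.range ((D (j + 1)).restrict (hmap (j + 1))) with hB
      let K : Submodule A (C (j + 1) ⧸ B) :=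
        (LinearMap.ker ((D j).restrict (hmap j))).map B.mkQ
      suffices hK : K = ⊥ by
        intro x hx
        have : B.mkQ x ∈ K := Submodule.mem_map_of_mem (by
          rw [LinearMap.mem_ker]; ext; simpa using hx)
        rw [hK, Submodule.mem_bot, Submodule.mkQ_apply, Submodule.Quotient.mk_eq_zero] at this
        exact this
      by_contra hne
      have : Nontrivial K := (Submodule.nontrivial_iff_ne_bot).2 hne
      obtain ⟨P, hP⟩ := associatedPrimes.nonempty A K
      obtain ⟨hPp, ⟨w, hwK⟩, hPw⟩ := isAssociatedPrime_iff.1 (AssociatedPrimes.mem_iff.1 hP)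
      obtain ⟨z, hz, hzw⟩ := (Submodule.mem_map).1 hwK
      have hmem : ∀ a, a ∈ P ↔ a • w = 0 := by
        intro a
        rw [hPw]
        simp [Submodule.mem_colon_singleton, ← Subtype.val_inj]
      have hIP : I ≤ P := by
        rw [hG, Ideal.span_le]
        intro δ hδ
        have hz0 : D j z = 0 := by
          have := congrArg Subtype.val (LinearMap.mem_ker.1 hz)
          simpa using this
        obtain ⟨k, y, hy, hk⟩ := htors j z z.2 hz0 δ hδ
        refine hPp.mem_of_pow_mem k ((hmem _).2 ?_)
        rw [← hzw, ← map_smul, Submodule.mkQ_apply, Submodule.Quotient.mk_eq_zero]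
        exact ⟨⟨y, hy⟩, by ext; simpa using hk.symm⟩
      obtain ⟨gs', h1, h2, h3⟩ := hdepth P hPp hIP
      have hw0 := HasRes.eq_zero P L gs' _ (hR gs' h2) (by omega) h1 w
        (fun a ha => (hmem a).1 ha)
      exact hPp.ne_top ((Ideal.eq_top_iff_one _).2 ((hmem 1).2 (by simp [hw0])))
    refine ⟨(C (j + 1)) ⧸ LinearMap.range ((D (j + 1)).restrict (hmap (j + 1))), C j,
      inferInstance, inferInstance, inferInstance, inferInstance,
      Submodule.liftQ _ ((D j).restrict (hmap j)) ?_, Submodule.mkQ _, ?_,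
      Submodule.mkQ_surjective _, ?_, ?_, hR gs hgs⟩
    · rintro _ ⟨⟨x, hx⟩, rfl⟩
      rw [LinearMap.mem_ker]
      ext
      simpa using hdd j x hx
    · rw [← LinearMap.ker_eq_bot]
      apply Submodule.ker_liftQ_eq_bot
      intro x hx
      exact hex x (by simpa using congrArg Subtype.val (LinearMap.mem_ker.1 hx))
    · rw [LinearMap.exact_iff, Submodule.ker_mkQ, Submodule.range_liftQ]
    · have := hflat j
      exact isWeaklyRegular_flat hgs

lemma comm_idem_prod {B ι : Type*} [CommRing B] [DecidableEq ι] (δ : B) (n : ι → B)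
    (hn : ∀ i, n i * n i = δ * n i) (s : Finset ι) :
    δ ^ s.card * ∏ a ∈ Finset.range (s.card + 1), (∑ i ∈ s, n i - a * δ) = 0 := by
  induction s using Finset.induction_on with
  | empty => simp
  | insert i s hi ih =>
    rw [Finset.card_insert_of_notMem hi, Finset.sum_insert hi]
    set U := ∑ i ∈ s, n i
    set k := s.card
    have h1 : ∀ r : ℕ, n i * ∏ a ∈ Finset.range r, (n i + U - a * δ)
        = n i * ∏ a ∈ Finset.range r, (δ + U - a * δ) := by
      intro r
      induction r with
      | zero => simp
      | succ r ihr =>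
        rw [Finset.prod_range_succ, Finset.prod_range_succ, ← mul_assoc, ihr]
        linear_combination (∏ a ∈ Finset.range r, (δ + U - a * δ)) * hn i
    have h2 : ∀ r : ℕ, (δ - n i) * ∏ a ∈ Finset.range r, (n i + U - a * δ)
        = (δ - n i) * ∏ a ∈ Finset.range r, (U - a * δ) := by
      intro r
      induction r with
      | zero => simp
      | succ r ihr =>
        rw [Finset.prod_range_succ, Finset.prod_range_succ, ← mul_assoc, ihr]
        linear_combination -(∏ a ∈ Finset.range r, (U - a * δ)) * hn i
    have h3 : ∏ a ∈ Finset.range (k + 1 + 1), (δ + U - a * δ)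
        = (δ + U) * ∏ a ∈ Finset.range (k + 1), (U - a * δ) := by
      rw [Finset.prod_range_succ']
      have : ∀ a : ℕ, (δ + U - ((a + 1 : ℕ) : B) * δ) = U - a * δ := by
        intro a; push_cast; ring
      simp only [this]
      simp; ring
    have h4 : ∏ a ∈ Finset.range (k + 1 + 1), (U - a * δ)
        = (∏ a ∈ Finset.range (k + 1), (U - a * δ)) * (U - (k + 1 : ℕ) * δ) :=
      Finset.prod_range_succ _ _
    have e1 := h1 (k + 1 + 1)
    have e2 := h2 (k + 1 + 1)
    rw [h3] at e1
    rw [h4] at e2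
    linear_combination δ ^ k * e1 + δ ^ k * e2 + (n i * (δ + U) + (δ - n i) * (U - (k + 1 : ℕ) * δ)) * ih

/-- The Koszul-type operator relations. -/
structure KRel {A V : Type} [CommRing A] [AddCommGroup V] [Module A V] {p : ℕ}
    (a b D z : Fin p → Module.End A V) (δ : A) : Prop where
  asq : ∀ i, a i * a i = 0
  aa : ∀ i j, a i * a j = - (a j * a i)
  bb : ∀ i j, b i * b j = - (b j * b i)
  ab : ∀ i j, a i * b j = (if i = j then δ • 1 else 0) - b j * a i
  Dz : ∀ i j, D i * z j = z j * D i + (if i = j then 1 else 0)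
  aD : ∀ i j, a i * D j = D j * a i
  az : ∀ i j, a i * z j = z j * a i
  bD : ∀ i j, b i * D j = D j * b i
  bz : ∀ i j, b i * z j = z j * b i

section
variable {A V : Type} [CommRing A] [AddCommGroup V] [Module A V] {p : ℕ}
    {a b D z : Fin p → Module.End A V} {δ : A}

lemma KRel.homotopy (H : KRel a b D z δ) (i : Fin p) :
    (∑ j, a j * D j) * (b i * z i) + (b i * z i) * (∑ j, a j * D j) =
      δ • (z i * D i) + a i * b i := by
  rw [Finset.sum_mul, Finset.mul_sum, ← Finset.sum_add_distrib]
  have : ∀ j, a j * D j * (b i * z i) + b i * z i * (a j * D j) =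
      if j = i then δ • (z i * D i) + a i * b i else 0 := by
    intro j
    have e1 : a j * D j * (b i * z i) = a j * b i * (z i * D j) + a j * b i * (if j = i then 1 else 0) := by
      rw [mul_assoc, ← mul_assoc (D j), ← H.bD, mul_assoc (b i), H.Dz]; noncomm_ring
    have e2 : b i * z i * (a j * D j) = b i * a j * (z i * D j) := by
      rw [mul_assoc, ← mul_assoc (z i), ← H.az]; noncomm_ring
    rw [e1, e2, H.ab]
    split_ifs with h
    · subst h
      simp only [mul_one, sub_mul, smul_mul_assoc, one_mul, H.ab, if_true]
      abel
    · simp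
  rw [Finset.sum_congr rfl (fun j _ => this j)]
  simp

lemma KRel.n_sq (H : KRel a b D z δ) (i : Fin p) :
    (a i * b i) * (a i * b i) = δ • (a i * b i) := by
  have h0 : a i * b i * (a i * b i) = a i * (b i * a i) * b i := by noncomm_ring
  have h1 : b i * a i = δ • 1 - a i * b i := by
    have := H.ab i i
    simp only [if_true] at this
    rw [this]; abel
  rw [h0, h1]
  have h2 : a i * (δ • 1 - a i * b i) * b i = δ • (a i * b i) - (a i * a i) * (b i * b i) := by
    simp only [mul_sub, sub_mul, mul_smul_comm, smul_mul_assoc, mul_one, mul_assoc]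
  rw [h2, H.asq]; simp

lemma KRel.n_comm (H : KRel a b D z δ) (i j : Fin p) :
    (a i * b i) * (a j * b j) = (a j * b j) * (a i * b i) := by
  rcases eq_or_ne i j with rfl | hij
  · rfl
  have h1 : b i * a j = - (a j * b i) := by
    have := H.ab j i
    rw [if_neg hij.symm] at this
    rw [this]; simp
  have h2 : b j * a i = - (a i * b j) := by
    have := H.ab i j
    rw [if_neg hij] at this
    rw [this]; simp
  calc (a i * b i) * (a j * b j) = a i * (b i * a j) * b j := by noncomm_ring
    _ = -((a i * a j) * (b i * b j)) := by rw [h1]; noncomm_ring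
    _ = -((a j * a i) * (b j * b i)) := by rw [H.aa i j, H.bb i j]; noncomm_ring
    _ = a j * (b j * a i) * b i := by rw [h2]; noncomm_ring
    _ = _ := by noncomm_ring

lemma KRel.na (H : KRel a b D z δ) (i j : Fin p) :
    (a i * b i) * a j = a j * (a i * b i) + if i = j then δ • a i else 0 := by
  have h1 : b i * a j = (if j = i then δ • 1 else 0) - (a j * b i) := by
    rw [H.ab j i]; abel
  rw [mul_assoc, h1, mul_sub, ← mul_assoc, H.aa i j]
  by_cases h : i = j
  · subst h; simp; noncomm_ring
  · simp [h, Ne.symm h]; noncomm_ring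

lemma KRel.Ud (H : KRel a b D z δ) :
    (∑ i, a i * b i) * (∑ j, a j * D j) =
      (∑ j, a j * D j) * ((∑ i, a i * b i) + δ • 1) := by
  have h1 : ∀ j, (∑ i, a i * b i) * a j = a j * (∑ i, a i * b i) + δ • a j := by
    intro j
    rw [Finset.sum_mul, Finset.mul_sum, Finset.sum_congr rfl (fun i _ => H.na i j),
      Finset.sum_add_distrib]
    simp
  have h2 : ∀ j, D j * (∑ i, a i * b i) = (∑ i, a i * b i) * D j := by
    intro j
    rw [Finset.sum_mul, Finset.mul_sum]
    refine Finset.sum_congr rfl fun i _ => ?_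
    rw [← mul_assoc, ← H.aD, mul_assoc, ← H.bD, mul_assoc]
  rw [Finset.mul_sum, Finset.sum_mul]
  refine Finset.sum_congr rfl fun j _ => ?_
  rw [← mul_assoc, h1, mul_add, mul_assoc (a j) (D j), h2]
  simp [add_mul, mul_assoc]

lemma KRel.prodU (H : KRel a b D z δ) :
    Polynomial.aeval (∑ i, a i * b i : Module.End A V) (Polynomial.C (δ ^ p) *
      ∏ k ∈ Finset.range (p + 1), (Polynomial.X - Polynomial.C ((k : A) * δ))) = 0 := by
  let s : Set (Module.End A V) := Set.range fun i => a i * b i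
  have hcomm : IsMulCommutative (Algebra.adjoin A s) := Algebra.isMulCommutative_adjoin A (by
    rintro _ ⟨i, rfl⟩ _ ⟨j, rfl⟩
    exact H.n_comm i j)
  let inst : CommRing (Algebra.adjoin A s) :=
    { (inferInstance : Ring (Algebra.adjoin A s)) with
      mul_comm := fun x y => hcomm.is_comm.comm x y }
  let n : Fin p → Algebra.adjoin A s := fun i => ⟨a i * b i, Algebra.subset_adjoin ⟨i, rfl⟩⟩
  have h := comm_idem_prod (B := Algebra.adjoin A s) (algebraMap A _ δ) n (by
    intro i
    apply Subtype.ext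
    have := H.n_sq i
    simp only [n, Algebra.algebraMap_eq_smul_one]
    simpa using this) Finset.univ
  have hU : (∑ i, a i * b i : Module.End A V) = (Algebra.adjoin A s).val (∑ i, n i) := by
    rw [map_sum]; rfl
  rw [hU, Polynomial.aeval_algHom_apply]
  rw [map_mul, map_prod, Polynomial.aeval_C]
  simp only [map_sub, Polynomial.aeval_X, Polynomial.aeval_C, Finset.card_univ, Fintype.card_fin] at h ⊢
  simp only [map_mul, map_natCast, map_pow] at h ⊢
  rw [← map_pow, ← map_mul]
  rw [h]
  rfl

lemma KRel.torsion_pos [Algebra ℚ A] (H : KRel a b D z δ) (e : ℕ) (he : 1 ≤ e) (x : V)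
    (hd : (∑ j, a j * D j) x = 0) (hx : (∑ j, z j * D j) x = (e : A) • x) :
    ∃ k : ℕ, ∃ y, δ ^ k • x = (∑ j, a j * D j) y := by
  set d := ∑ j, a j * D j with hdd
  set U : Module.End A V := ∑ i, a i * b i with hU
  set c : A := -((e : A) * δ) with hc
  let K := LinearMap.range d
  have hUK : ∀ v ∈ K, U v ∈ K := by
    rintro _ ⟨v, rfl⟩
    have := LinearMap.congr_fun H.Ud v
    exact ⟨_, this.symm⟩
  have hUx : U x - c • x ∈ K := by
    refine ⟨(∑ i, b i * z i) x, ?_⟩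
    have h1 : d * (∑ i, b i * z i) + (∑ i, b i * z i) * d = δ • (∑ i, z i * D i) + U := by
      rw [Finset.mul_sum, Finset.sum_mul, ← Finset.sum_add_distrib,
        Finset.sum_congr rfl (fun i _ => H.homotopy i), Finset.sum_add_distrib, Finset.smul_sum]
    have h2 := LinearMap.congr_fun h1 x
    simp only [LinearMap.add_apply, Module.End.mul_apply, LinearMap.smul_apply] at h2
    rw [hd, hx, map_zero, add_zero] at h2
    rw [h2, hc, smul_smul]
    rw [neg_smul, mul_comm]; abel
  have hpoly : ∀ q : Polynomial A, ∀ v ∈ K, Polynomial.aeval U q v ∈ K := by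
    intro q v hv
    induction q using Polynomial.induction_on' with
    | add q r hq hr => rw [map_add]; exact K.add_mem hq hr
    | monomial k t =>
      rw [Polynomial.aeval_monomial]
      simp only [Module.End.mul_apply, Module.algebraMap_end_apply]
      apply K.smul_mem
      induction k with
      | zero => simpa
      | succ k ih => rw [pow_succ']; exact hUK _ ih
  have hq : ∀ q : Polynomial A, Polynomial.aeval U q x - q.eval c • x ∈ K := by
    intro q
    obtain ⟨r, hr⟩ := Polynomial.X_sub_C_dvd_sub_C_eval (a := c) (p := q)
    have h1 : Polynomial.aeval U q = Polynomial.aeval U (r * (Polynomial.X - Polynomial.C c) + Polynomial.C (q.eval c)) := by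
      rw [mul_comm, ← hr]; simp
    rw [h1, map_add, map_mul]
    simp only [map_sub, Polynomial.aeval_X, Polynomial.aeval_C, LinearMap.add_apply,
      Module.End.mul_apply, LinearMap.sub_apply, Module.algebraMap_end_apply, add_sub_cancel_right]
    rw [← map_sub]
    exact hpoly _ _ hUx
  have h3 := hq (Polynomial.C (δ ^ p) *
      ∏ k ∈ Finset.range (p + 1), (Polynomial.X - Polynomial.C ((k : A) * δ)))
  rw [H.prodU] at h3
  have h4 : (Polynomial.C (δ ^ p) *
      ∏ k ∈ Finset.range (p + 1), (Polynomial.X - Polynomial.C ((k : A) * δ))).eval c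
      = algebraMap ℚ A (∏ k ∈ Finset.range (p + 1), (-((e : ℚ) + k))) * δ ^ (p + (p + 1)) := by
    rw [Polynomial.eval_mul, Polynomial.eval_C, Polynomial.eval_prod, map_prod, pow_add]
    have : ∀ k : ℕ, Polynomial.eval c (Polynomial.X - Polynomial.C ((k : A) * δ))
        = algebraMap ℚ A (-((e : ℚ) + k)) * δ := by
      intro k
      simp [hc]; ring
    simp only [this]
    rw [Finset.prod_mul_distrib]
    simp; ring
  rw [h4] at h3
  set r : ℚ := ∏ k ∈ Finset.range (p + 1), (-((e : ℚ) + k)) with hr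
  have hr0 : r ≠ 0 := by
    rw [hr, Finset.prod_ne_zero_iff]
    intro k _
    have : (0 : ℚ) < e + k := by positivity
    linarith
  have h5 := K.smul_mem (algebraMap ℚ A (-r⁻¹)) h3
  obtain ⟨y, hy⟩ := h5
  refine ⟨p + (p + 1), y, ?_⟩
  rw [hy]
  simp only [LinearMap.zero_apply, zero_sub, smul_neg, smul_smul, ← mul_assoc, ← map_mul]
  rw [neg_mul, inv_mul_cancel₀ hr0]
  simp

/-- ordered product `α [i₁,…,i_k] = a_{i_k} ⋯ a_{i₁}` -/
def revProd {E : Type*} [Monoid E] {ι : Type*} (a : ι → E) : List ι → E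
  | [] => 1
  | i :: l => revProd a l * a i

lemma KRel.torsion_zero (H : KRel a b D z δ) (x : V)
    (hD : ∀ i, D i x = 0) (l : List (Fin p)) (hl : l.Nodup) (hx : revProd a l x = 0) :
    ∃ k : ℕ, ∃ y, δ ^ k • x = (∑ j, a j * D j) y := by
  have h1 : ∀ l : List (Fin p), ∀ i ∉ l, revProd a l * b i = (-1) ^ l.length * (b i * revProd a l) := by
    intro l
    induction l with
    | nil => intro i _; simp [revProd]
    | cons j l ih =>
      intro i hi
      simp only [List.mem_cons, not_or] at hi
      simp only [revProd, List.length_cons, pow_succ]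
      rw [mul_assoc, H.ab j i, if_neg (Ne.symm hi.1), zero_sub, mul_neg, ← mul_assoc, ih i hi.2]
      noncomm_ring
  have h2 : ∀ l : List (Fin p), l.Nodup → ∃ β, revProd (fun i => b i * a i) l = β * revProd a l := by
    intro l
    induction l with
    | nil => intro _; exact ⟨1, by simp [revProd]⟩
    | cons j l ih =>
      intro hl
      obtain ⟨β, hβ⟩ := ih (List.nodup_cons.1 hl).2
      refine ⟨β * (-1) ^ l.length * b j, ?_⟩
      simp only [revProd]
      rw [hβ, ← mul_assoc, mul_assoc β, h1 l j (List.nodup_cons.1 hl).1]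
      noncomm_ring
  have h3 : ∀ l : List (Fin p), ∀ x, (∀ i, D i x = 0) →
      δ ^ l.length • x - revProd (fun i => b i * a i) l x ∈ LinearMap.range (∑ j, a j * D j) := by
    intro l
    induction l with
    | nil => intro x _; simp [revProd]
    | cons j l ih =>
      intro x hx
      have hdx : (∑ j, a j * D j) x = 0 := by
        simp [LinearMap.sum_apply, hx]
      have hn : (a j * b j) x ∈ LinearMap.range (∑ j, a j * D j) := by
        refine ⟨(b j * z j) x, ?_⟩
        have := LinearMap.congr_fun (H.homotopy j) x
        simp only [LinearMap.add_apply, Module.End.mul_apply, LinearMap.smul_apply, hx, hdx,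
          map_zero, smul_zero, zero_add, add_zero] at this
        simpa using this
      have hba : (b j * a j) x = δ • x - (a j * b j) x := by
        have := LinearMap.congr_fun (H.ab j j) x
        simp only [if_true, LinearMap.sub_apply, LinearMap.smul_apply, Module.End.one_apply] at this
        rw [this]; abel
      have h := ih ((b j * a j) x) (by
        intro i
        have : D i * (b j * a j) = (b j * a j) * D i := by
          rw [← mul_assoc, ← H.bD, mul_assoc, ← H.aD, mul_assoc]
        rw [← Module.End.mul_apply, this, Module.End.mul_apply, hx, map_zero])
      simp only [revProd, Module.End.mul_apply, List.length_cons] at h ⊢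
      have h' := Submodule.add_mem _ h (Submodule.smul_mem _ (δ ^ l.length) hn)
      convert h' using 1
      simp only [Module.End.mul_apply] at hba
      nth_rewrite 2 [hba]
      rw [smul_sub, smul_smul, pow_succ]
      simp only [Module.End.mul_apply]
      abel
  obtain ⟨y, hy⟩ := h3 l x hD
  obtain ⟨β, hβ⟩ := h2 l hl
  refine ⟨l.length, y, ?_⟩
  rw [hy, hβ, Module.End.mul_apply, hx, map_zero, sub_zero]
end

end PartP3a

section PartP3b
open RingTheory.Sequence

section ext
variable {A F : Type} [CommRing A] [AddCommGroup F] [Module A F]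

/-- contraction on the exterior algebra -/
noncomputable def ctr (M : Module.Dual A F) : Module.End A (ExteriorAlgebra A F) :=
  CliffordAlgebra.contractLeft (Q := (0 : QuadraticForm A F)) M

lemma ctr_ι_mul (M : Module.Dual A F) (v : F) (x : ExteriorAlgebra A F) :
    ctr M (ExteriorAlgebra.ι A v * x) = M v • x - ExteriorAlgebra.ι A v * ctr M x :=
  CliffordAlgebra.contractLeft_ι_mul M v x

lemma ctr_one (M : Module.Dual A F) : ctr M (1 : ExteriorAlgebra A F) = 0 :=
  CliffordAlgebra.contractLeft_one (Q := (0 : QuadraticForm A F)) M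

lemma ctr_ιMulti (M : Module.Dual A F) (k : ℕ) : ∀ (v : Fin (k + 1) → F),
    ctr M (ExteriorAlgebra.ιMulti A (k + 1) v) =
      ∑ j : Fin (k + 1), ((-1) ^ (j : ℕ) * M (v j)) •
        ExteriorAlgebra.ιMulti A k (fun i => v (j.succAbove i)) := by
  induction k with
  | zero =>
    intro v
    rw [ExteriorAlgebra.ιMulti_succ_apply, ctr_ι_mul]
    simp [ExteriorAlgebra.ιMulti_zero_apply, ctr_one]
  | succ k ih =>
    intro v
    rw [ExteriorAlgebra.ιMulti_succ_apply, ctr_ι_mul, Fin.sum_univ_succ, ih, Finset.mul_sum,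
      sub_eq_add_neg, ← Finset.sum_neg_distrib]
    congr 1
    · simp [Matrix.vecTail, Function.comp_def]
    · refine Finset.sum_congr rfl fun j _ => ?_
      rw [ExteriorAlgebra.ιMulti_succ_apply]
      simp only [Fin.succ_succAbove_zero, Fin.val_succ, pow_succ, Matrix.vecTail, Function.comp_def,
        Fin.succ_succAbove_succ, mul_smul_comm]
      rw [← neg_smul]
      congr 1
      ring

lemma ctr_mem (M : Module.Dual A F) (k : ℕ) (x : ExteriorAlgebra A F)
    (hx : x ∈ ⋀[A]^(k + 1) F) : ctr M x ∈ ⋀[A]^k F := by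
  rw [← ExteriorAlgebra.ιMulti_span_fixedDegree] at hx ⊢
  induction hx using Submodule.span_induction with
  | mem x hx =>
    obtain ⟨v, rfl⟩ := hx
    rw [ctr_ιMulti]
    exact Submodule.sum_mem _ fun j _ => Submodule.smul_mem _ _ (Submodule.subset_span ⟨_, rfl⟩)
  | zero => simp
  | add x y _ _ hx hy => rw [map_add]; exact Submodule.add_mem _ hx hy
  | smul a x _ hx => rw [map_smul]; exact Submodule.smul_mem _ _ hx

/-- degree projection on the exterior algebra -/
noncomputable def extProj (k : ℕ) : Module.End A (ExteriorAlgebra A F) :=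
  GradedAlgebra.proj (fun i : ℕ => ⋀[A]^i F) k

lemma extProj_same {k : ℕ} {x : ExteriorAlgebra A F} (hx : x ∈ ⋀[A]^k F) : extProj k x = x :=
  DirectSum.decompose_of_mem_same (fun i : ℕ => ⋀[A]^i F) hx

lemma extProj_ne {k l : ℕ} {x : ExteriorAlgebra A F} (hx : x ∈ ⋀[A]^k F) (h : k ≠ l) :
    extProj l x = 0 :=
  DirectSum.decompose_of_mem_ne (fun i : ℕ => ⋀[A]^i F) hx h

lemma extProj_mem (k : ℕ) (x : ExteriorAlgebra A F) : extProj k x ∈ ⋀[A]^k F :=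
  (DirectSum.decompose (fun i : ℕ => ⋀[A]^i F) x k).2

lemma extProj_idem (k : ℕ) : (extProj k * extProj k : Module.End A (ExteriorAlgebra A F)) = extProj k := by
  refine LinearMap.ext fun x => ?_
  exact extProj_same (extProj_mem k _)

lemma ctr_extProj (M : Module.Dual A F) (k : ℕ) :
    ctr M * extProj (k + 1) = extProj k * ctr M := by
  refine LinearMap.ext fun x => ?_
  induction x using DirectSum.Decomposition.inductionOn (fun i : ℕ => ⋀[A]^i F) with
  | zero => simp
  | add x y hx hy => rw [map_add, map_add, hx, hy]
  | @homogeneous i x =>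
    obtain ⟨x, hx⟩ := x
    simp only [Module.End.mul_apply]
    obtain _ | i := i
    · rw [extProj_ne hx (by omega), map_zero]
      have hx' := hx
      simp only [pow_zero, Submodule.mem_one] at hx'
      obtain ⟨r, rfl⟩ := hx'
      rw [Algebra.algebraMap_eq_smul_one, map_smul, ctr_one]; simp
    · by_cases h : i = k
      · subst h
        rw [extProj_same hx, extProj_same (ctr_mem M _ _ hx)]
      · rw [extProj_ne hx (by omega), map_zero, extProj_ne (ctr_mem M _ _ hx) h]

lemma extProj_eq_zero [IsDomain A] [Module.Free A F] [Module.Finite A F] (k : ℕ)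
    (hk : Module.finrank A F < k) : (extProj k : Module.End A (ExteriorAlgebra A F)) = 0 := by
  have h := exteriorPower.finrank_eq A k (M := F)
  rw [Nat.choose_eq_zero_of_lt hk] at h
  have : Subsingleton (⋀[A]^k F) := Module.finrank_zero_iff.1 h
  refine LinearMap.ext fun x => ?_
  have h1 : (⟨extProj k x, extProj_mem k x⟩ : ⋀[A]^k F) = 0 := Subsingleton.elim _ _
  exact congrArg Subtype.val h1

lemma ctr_det (k : ℕ) : ∀ (M : Fin k → Module.Dual A F) (v : Fin k → F),
    revProd (fun i => ctr (M i)) (List.finRange k) (ExteriorAlgebra.ιMulti A k v) =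
      (Matrix.of fun i j => M i (v j)).det • (1 : ExteriorAlgebra A F) := by
  have key : ∀ (ι κ : Type) (a : κ → Module.End A (ExteriorAlgebra A F)) (g : ι → κ) (l : List ι),
      revProd a (l.map g) = revProd (fun i => a (g i)) l := by
    intro ι κ a g l
    induction l with
    | nil => rfl
    | cons i l ih => simp [revProd, ih]
  induction k with
  | zero => intro M v; simp [revProd]
  | succ k ih =>
    intro M v
    rw [List.finRange_succ]
    simp only [revProd, Module.End.mul_apply]
    rw [key, ctr_ιMulti, map_sum, Matrix.det_succ_row_zero, Finset.sum_smul]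
    refine Finset.sum_congr rfl fun j _ => ?_
    rw [map_smul, ih, smul_smul]
    rfl

instance extFree [Module.Free A F] : Module.Free A (ExteriorAlgebra A F) := by
  classical
  let b := Module.Free.chooseBasis A F
  let : LinearOrder (Module.Free.ChooseBasisIndex A F) := linearOrderOfSTO WellOrderingRel
  exact Module.Free.of_basis b.ExteriorAlgebra
end ext

section pol
variable {A : Type} [CommRing A] {p : ℕ}
open MvPolynomial

lemma pderiv_homComp (i : Fin p) (e : ℕ) (x : MvPolynomial (Fin p) A) :
    pderiv i (homogeneousComponent (e + 1) x) = homogeneousComponent e (pderiv i x) := by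
  induction x using MvPolynomial.induction_on' with
  | add x y hx hy => simp only [map_add, hx, hy]
  | monomial u a =>
    have h1 : (monomial u a).IsHomogeneous u.degree := isHomogeneous_monomial a rfl
    have h2 := h1.pderiv (i := i)
    rw [homogeneousComponent_of_mem h1, homogeneousComponent_of_mem h2]
    by_cases h : u.degree = 0
    · have hu : u = 0 := (Finsupp.degree_eq_zero_iff u).1 h
      subst hu
      have : pderiv i (monomial (0 : Fin p →₀ ℕ) a) = 0 := pderiv_C
      simp [this]
    · have : (e + 1 = u.degree) ↔ (e = u.degree - 1) := by omega
      simp only [this]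
      split_ifs <;> simp

lemma homComp_idem (e : ℕ) (x : MvPolynomial (Fin p) A) :
    homogeneousComponent e (homogeneousComponent e x) = homogeneousComponent e x := by
  rw [homogeneousComponent_of_mem (homogeneousComponent_isHomogeneous e x), if_pos rfl]

lemma euler_homComp (e : ℕ) (x : MvPolynomial (Fin p) A) :
    ∑ i, X i * pderiv i (homogeneousComponent e x) = (e : A) • homogeneousComponent e x := by
  rw [(homogeneousComponent_isHomogeneous e x).sum_X_mul_pderiv, Nat.cast_smul_eq_nsmul]
end pol

end PartP3b

section PartP3c
open RingTheory.Sequence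
open scoped TensorProduct

section EN
variable {A F : Type} [CommRing A] [AddCommGroup F] [Module A F] {p : ℕ}

/-- The underlying module of the Eagon–Northcott type complex. -/
abbrev ENV (A F : Type) [CommRing A] [AddCommGroup F] [Module A F] (p : ℕ) :=
  ExteriorAlgebra A F ⊗[A] MvPolynomial (Fin p) A

/-- operator on the left factor -/
noncomputable abbrev opL (p : ℕ) : Module.End A (ExteriorAlgebra A F) →ₐ[A] Module.End A (ENV A F p) :=
  Module.End.rTensorAlgHom A _ _

/-- operator on the right factor -/
noncomputable abbrev opR (F : Type) [AddCommGroup F] [Module A F] (p : ℕ) :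
    Module.End A (MvPolynomial (Fin p) A) →ₐ[A] Module.End A (ENV A F p) :=
  Module.End.lTensorAlgHom A _ _

lemma opL_opR (f : Module.End A (ExteriorAlgebra A F)) (g : Module.End A (MvPolynomial (Fin p) A)) :
    opL p f * opR F p g = opR F p g * opL p f := by
  ext x y
  rfl

noncomputable def opa (M : Fin p → Module.Dual A F) (i : Fin p) : Module.End A (ENV A F p) :=
  opL p (ctr (M i))
noncomputable def opb (w : Fin p → F) (i : Fin p) : Module.End A (ENV A F p) :=
  opL p (LinearMap.mulLeft A (ExteriorAlgebra.ι A (w i)))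
noncomputable def opD (A F : Type) [CommRing A] [AddCommGroup F] [Module A F] (p : ℕ) (i : Fin p) :
    Module.End A (ENV A F p) :=
  opR F p (MvPolynomial.pderiv i).toLinearMap
noncomputable def opz (A F : Type) [CommRing A] [AddCommGroup F] [Module A F] (p : ℕ) (i : Fin p) :
    Module.End A (ENV A F p) :=
  opR F p (LinearMap.mulLeft A (MvPolynomial.X i))

lemma end_eq_neg {V : Type} [AddCommGroup V] [Module A V] (f g : Module.End A V) (h : f + g = 0) :
    f = -g := eq_neg_of_add_eq_zero_left h

lemma op_krel (M : Fin p → Module.Dual A F) (w : Fin p → F) (δ : A)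
    (h : ∀ i j, M i (w j) = if i = j then δ else 0) :
    KRel (opa M) (opb w) (opD A F p) (opz A F p) δ where
  asq i := by
    unfold opa
    rw [← map_mul]
    have : ctr (M i) * ctr (M i) = 0 := by
      refine LinearMap.ext fun x => ?_
      exact CliffordAlgebra.contractLeft_contractLeft (M i) x
    rw [this, map_zero]
  aa i j := by
    unfold opa
    refine end_eq_neg _ _ ?_
    have h0 : ctr (M i) * ctr (M j) + ctr (M j) * ctr (M i) = 0 := by
      refine LinearMap.ext fun x => ?_
      have := CliffordAlgebra.contractLeft_comm (M i) (M j) x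
      exact (add_eq_zero_iff_eq_neg (G := ExteriorAlgebra A F)).2 this
    have h1 := congrArg (opL (A := A) (F := F) p) h0
    rw [map_add, map_mul, map_mul, map_zero] at h1
    exact h1
  bb i j := by
    unfold opb
    refine end_eq_neg _ _ ?_
    have h0 : LinearMap.mulLeft A (ExteriorAlgebra.ι A (w i)) * LinearMap.mulLeft A (ExteriorAlgebra.ι A (w j))
      + LinearMap.mulLeft A (ExteriorAlgebra.ι A (w j)) * LinearMap.mulLeft A (ExteriorAlgebra.ι A (w i)) = 0 := by
      refine LinearMap.ext fun x => ?_
      have := ExteriorAlgebra.ι_add_mul_swap (R := A) (w i) (w j)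
      have := congrArg (· * x) this
      simp only [add_mul, mul_assoc, zero_mul] at this
      exact this
    have h1 := congrArg (opL (A := A) (F := F) p) h0
    rw [map_add, map_mul, map_mul, map_zero] at h1
    exact h1
  ab i j := by
    unfold opa opb
    rw [← map_mul, ← map_mul]
    have : ctr (M i) * LinearMap.mulLeft A (ExteriorAlgebra.ι A (w j)) =
        (if i = j then δ • (1 : Module.End A (ExteriorAlgebra A F)) else 0)
          - LinearMap.mulLeft A (ExteriorAlgebra.ι A (w j)) * ctr (M i) := by
      refine LinearMap.ext fun x => ?_
      simp only [Module.End.mul_apply, LinearMap.mulLeft_apply, ctr_ι_mul, h, LinearMap.sub_apply]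
      congr 1
      split_ifs <;> simp
    rw [this, map_sub]
    congr 1
    split_ifs <;> simp
  Dz i j := by
    unfold opD opz
    rw [← map_mul, ← map_mul]
    have : ((MvPolynomial.pderiv i).toLinearMap * LinearMap.mulLeft A (MvPolynomial.X j) :
          Module.End A (MvPolynomial (Fin p) A)) =
        LinearMap.mulLeft A (MvPolynomial.X j) * (MvPolynomial.pderiv i).toLinearMap
          + if i = j then 1 else 0 := by
      refine LinearMap.ext fun x => ?_
      simp only [Module.End.mul_apply, LinearMap.mulLeft_apply, LinearMap.add_apply,
        Derivation.coeFn_coe, Derivation.leibniz, MvPolynomial.pderiv_X, smul_eq_mul]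
      congr 1
      by_cases hij : i = j
      · subst hij; simp
      · simp [hij, Pi.single_apply, Ne.symm hij]
    rw [this, map_add]
    congr 1
    split_ifs <;> simp
  aD i j := opL_opR _ _
  az i j := opL_opR _ _
  bD i j := opL_opR _ _
  bz i j := opL_opR _ _

/-- strand projections -/
noncomputable def strand (A F : Type) [CommRing A] [AddCommGroup F] [Module A F] (p j : ℕ) :
    Module.End A (ENV A F p) :=
  opL p (extProj (p + j)) * opR F p (MvPolynomial.homogeneousComponent j)

lemma strand_idem (j : ℕ) : strand A F p j * strand A F p j = strand A F p j := by
  unfold strand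
  have h2 : (MvPolynomial.homogeneousComponent j * MvPolynomial.homogeneousComponent j :
      Module.End A (MvPolynomial (Fin p) A)) = MvPolynomial.homogeneousComponent j :=
    LinearMap.ext fun x => homComp_idem j x
  rw [mul_assoc, ← mul_assoc (opR F p _), ← opL_opR, mul_assoc (opL p _), ← map_mul, h2,
    ← mul_assoc, ← map_mul, extProj_idem]

lemma d_strand (M : Fin p → Module.Dual A F) (j : ℕ) :
    (∑ i, opa M i * opD A F p i) * strand A F p (j + 1) =
      strand A F p j * (∑ i, opa M i * opD A F p i) := by
  rw [Finset.sum_mul, Finset.mul_sum]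
  refine Finset.sum_congr rfl fun i _ => ?_
  unfold strand opa opD
  have h2 : ((MvPolynomial.pderiv i).toLinearMap * MvPolynomial.homogeneousComponent (j + 1) :
      Module.End A (MvPolynomial (Fin p) A)) =
      MvPolynomial.homogeneousComponent j * (MvPolynomial.pderiv i).toLinearMap :=
    LinearMap.ext fun x => pderiv_homComp i j x
  rw [mul_assoc, ← mul_assoc (opR F p _), ← opL_opR, mul_assoc (opL p _), ← map_mul, h2,
    ← mul_assoc, ← map_mul, ← add_assoc, ctr_extProj, mul_assoc (opL p _) (opR F p _),
    ← mul_assoc (opR F p _) (opL p _), ← opL_opR, map_mul, map_mul]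
  noncomm_ring

lemma range_idem_flat {V : Type} [AddCommGroup V] [Module A V] [Module.Flat A V]
    (f : Module.End A V) (hf : f * f = f) : Module.Flat A (LinearMap.range f) := by
  refine Module.Flat.of_retract (LinearMap.range f).subtype f.rangeRestrict ?_
  ext ⟨_, y, rfl⟩
  exact LinearMap.congr_fun hf y

lemma KRel.revProd_mul {V : Type} [AddCommGroup V] [Module A V] {a b D z : Fin p → Module.End A V}
    {δ : A} (H : KRel a b D z δ) (l : List (Fin p)) :
    ∀ i ∈ l, revProd a l * a i = 0 := by
  induction l with
  | nil => simp
  | cons k l ih =>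
    intro i hi
    simp only [revProd]
    rw [mul_assoc]
    by_cases hik : i = k
    · subst hik; rw [H.asq, mul_zero]
    · rw [H.aa, mul_neg, ← mul_assoc, ih i (by simpa [hik] using hi)]; simp

lemma revProd_mul_self (M : Fin p → Module.Dual A F) (l : List (Fin p)) :
    ∀ i ∈ l, revProd (opa M) l * opa M i = 0 :=
  (op_krel M (fun _ => 0) 0 (by simp)).revProd_mul l

end EN

end PartP3c

section PartP3d
open RingTheory.Sequence
open scoped TensorProduct
section EN2
variable {A F : Type} [CommRing A] [AddCommGroup F] [Module A F] {p : ℕ}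

lemma opD_comm (i j : Fin p) : opD A F p i * opD A F p j = opD A F p j * opD A F p i := by
  unfold opD
  rw [← map_mul, ← map_mul]
  congr 1
  refine LinearMap.ext fun x => ?_
  have h : ⁅MvPolynomial.pderiv (R := A) i, MvPolynomial.pderiv (R := A) j⁆ = 0 := by
    apply MvPolynomial.derivation_ext
    intro k
    simp [Derivation.commutator_apply, MvPolynomial.pderiv_X, Pi.single_apply, apply_ite]
  have := congrArg (fun D => D x) h
  simpa [Derivation.commutator_apply, sub_eq_zero] using this

lemma KRel.dd [Algebra ℚ A] {V : Type} [AddCommGroup V] [Module A V] {a b D z : Fin p → Module.End A V}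
    {δ : A} (H : KRel a b D z δ) (hD : ∀ i j, D i * D j = D j * D i) :
    (∑ j, a j * D j) * (∑ j, a j * D j) = 0 := by
  have h1 : (∑ j, a j * D j) * (∑ j, a j * D j) = ∑ i, ∑ j, (a i * a j) * (D i * D j) := by
    rw [Finset.sum_mul]
    refine Finset.sum_congr rfl fun i _ => ?_
    rw [Finset.mul_sum]
    refine Finset.sum_congr rfl fun j _ => ?_
    rw [mul_assoc, ← mul_assoc (D i), ← H.aD]
    noncomm_ring
  set S := (∑ j, a j * D j) * (∑ j, a j * D j)
  have h2 : S = -S := by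
    conv_lhs => rw [h1, Finset.sum_comm]
    rw [h1, ← Finset.sum_neg_distrib]
    refine Finset.sum_congr rfl fun i _ => ?_
    rw [← Finset.sum_neg_distrib]
    refine Finset.sum_congr rfl fun j _ => ?_
    rw [H.aa, hD]; simp
  have h3 : (2 : A) • S = 0 := by
    rw [two_smul]; nth_rewrite 2 [h2]; simp
  have h4 := congrArg (fun T => (algebraMap ℚ A (1/2)) • T) h3
  simp only [smul_smul, smul_zero] at h4
  rw [show (2 : A) = algebraMap ℚ A 2 from (map_ofNat _ 2).symm, ← map_mul] at h4
  norm_num at h4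
  exact h4

lemma D0_d (M : Fin p → Module.Dual A F) :
    revProd (opa M) (List.finRange p) * (∑ i, opa M i * opD A F p i) = 0 := by
  rw [Finset.mul_sum]
  refine Finset.sum_eq_zero fun i _ => ?_
  rw [← mul_assoc, revProd_mul_self M _ i (List.mem_finRange i), zero_mul]

lemma opD_strand_zero (i : Fin p) : opD A F p i * strand A F p 0 = 0 := by
  unfold opD strand
  have h2 : ((MvPolynomial.pderiv i).toLinearMap * MvPolynomial.homogeneousComponent 0 :
      Module.End A (MvPolynomial (Fin p) A)) = 0 := by
    refine LinearMap.ext fun x => ?_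
    simp [MvPolynomial.homogeneousComponent_zero]
  rw [← mul_assoc, ← opL_opR, mul_assoc, ← map_mul, h2, map_zero, mul_zero]

lemma euler_strand (e : ℕ) : (∑ i, opz A F p i * opD A F p i) * strand A F p e
    = (e : A) • strand A F p e := by
  unfold opz opD strand
  have h2 : (∑ i, (LinearMap.mulLeft A (MvPolynomial.X i)) * (MvPolynomial.pderiv i).toLinearMap) *
      MvPolynomial.homogeneousComponent e = 
      ((e : A) • MvPolynomial.homogeneousComponent e : Module.End A (MvPolynomial (Fin p) A)) := by
    refine LinearMap.ext fun x => ?_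
    simpa [LinearMap.sum_apply] using euler_homComp e x
  simp only [← map_mul]
  rw [← map_sum, ← mul_assoc, ← opL_opR, mul_assoc, ← map_mul, h2, map_smul, mul_smul_comm]


lemma revProd_opa (M : Fin p → Module.Dual A F) (l : List (Fin p)) :
    revProd (opa M) l = opL p (revProd (fun i => ctr (M i)) l) := by
  induction l with
  | nil => simp [revProd]
  | cons i l ih => simp only [revProd, map_mul, ih]; rfl

/-- the complex -/
noncomputable def ENC (A F : Type) [CommRing A] [AddCommGroup F] [Module A F] (p : ℕ) :
    ℕ → Submodule A (ENV A F p)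
  | 0 => ⊤
  | j + 1 => LinearMap.range (strand A F p j)

/-- the differential -/
noncomputable def END (M : Fin p → Module.Dual A F) : ℕ → Module.End A (ENV A F p)
  | 0 => revProd (opa M) (List.finRange p)
  | _ + 1 => ∑ i, opa M i * opD A F p i

lemma mem_ENC_succ (j : ℕ) (x : ENV A F p) : x ∈ ENC A F p (j + 1) ↔ strand A F p j x = x := by
  constructor
  · rintro ⟨y, rfl⟩
    exact LinearMap.congr_fun (strand_idem j) y
  · intro h
    exact ⟨x, h⟩

lemma EN_flat [Module.Free A F] (j : ℕ) : Module.Flat A (ENC A F p j) := by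
  cases j with
  | zero =>
    exact Module.Flat.of_linearEquiv (Submodule.topEquiv)
  | succ j => exact range_idem_flat _ (strand_idem j)

lemma EN_map (M : Fin p → Module.Dual A F) (j : ℕ) (x) (hx : x ∈ ENC A F p (j + 1)) :
    END M j x ∈ ENC A F p j := by
  cases j with
  | zero => exact Submodule.mem_top
  | succ j =>
    rw [mem_ENC_succ] at *
    have := LinearMap.congr_fun (d_strand M j) x
    simp only [Module.End.mul_apply, hx] at this
    exact this.symm

lemma EN_dd [Algebra ℚ A] (M : Fin p → Module.Dual A F) (j : ℕ) (x) :
    END M j (END M (j + 1) x) = 0 := by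
  cases j with
  | zero => exact LinearMap.congr_fun (D0_d M) x
  | succ j =>
    exact LinearMap.congr_fun ((op_krel M (fun _ => 0) 0 (by simp)).dd opD_comm) x

lemma EN_tors [Algebra ℚ A] (M : Fin p → Module.Dual A F) (w : Fin p → F) (δ : A)
    (h : ∀ i j, M i (w j) = if i = j then δ else 0) (j : ℕ) (x) (hx : x ∈ ENC A F p (j + 1))
    (hD : END M j x = 0) : ∃ k : ℕ, ∃ y ∈ ENC A F p (j + 2), δ ^ k • x = END M (j + 1) y := by
  have H := op_krel M w δ h
  rw [mem_ENC_succ] at hx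
  have key : ∃ k : ℕ, ∃ y, δ ^ k • x = (∑ i, opa M i * opD A F p i) y := by
    cases j with
    | zero =>
      refine H.torsion_zero x (fun i => ?_) (List.finRange p) (List.nodup_finRange p) hD
      have := LinearMap.congr_fun (opD_strand_zero (A := A) (F := F) i) x
      simp only [Module.End.mul_apply, hx] at this
      exact this
    | succ j =>
      refine H.torsion_pos (j + 1) (by omega) x hD ?_
      have := LinearMap.congr_fun (euler_strand (A := A) (F := F) (p := p) (j + 1)) x
      simpa only [Module.End.mul_apply, LinearMap.smul_apply, hx] using this
  obtain ⟨k, y, hy⟩ := key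
  refine ⟨k, strand A F p (j + 1) y, ⟨y, rfl⟩, ?_⟩
  have := LinearMap.congr_fun (d_strand M j) y
  simp only [Module.End.mul_apply] at this
  rw [END, this, ← hy, map_smul, hx]

end EN2

section EN3
variable {A : Type} [CommRing A] {ι : Type} [Fintype ι] [DecidableEq ι] {p : ℕ}

/-- rows of a matrix as functionals -/
noncomputable def rowF (Mx : Matrix (Fin p) ι A) (i : Fin p) : Module.Dual A (ι → A) :=
  (LinearMap.proj i) ∘ₗ Mx.mulVecLin

lemma rowF_single (Mx : Matrix (Fin p) ι A) (i : Fin p) (c : ι) :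
    rowF Mx i (Pi.single c 1) = Mx i c := by
  simp [rowF]

lemma exists_dual (Mx : Matrix (Fin p) ι A) (c : Fin p → ι) :
    ∃ w : Fin p → (ι → A), ∀ i j, rowF Mx i (w j) = if i = j then (Mx.submatrix id c).det else 0 := by
  refine ⟨fun j => ∑ k, (Mx.submatrix id c).adjugate k j • Pi.single (c k) 1, fun i j => ?_⟩
  have := congrFun (congrFun (Matrix.mul_adjugate (Mx.submatrix id c)) i) j
  rw [Matrix.mul_apply] at this
  simp only [map_sum, map_smul, rowF_single, smul_eq_mul]
  simp only [Matrix.submatrix_apply, id, Matrix.smul_apply, Matrix.one_apply, smul_eq_mul, mul_ite,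
    mul_one, mul_zero] at this
  rw [← this]
  exact Finset.sum_congr rfl fun k _ => mul_comm _ _

/-- ideal of maximal minors -/
def maxMin (Mx : Matrix (Fin p) ι A) : Set A := {x | ∃ c : Fin p → ι, x = (Mx.submatrix id c).det}

lemma D0_image_sub (Mx : Matrix (Fin p) ι A) (x : ENV A (ι → A) p) :
    ∃ a ∈ Ideal.span (maxMin Mx), END (rowF Mx) 0 (strand A (ι → A) p 0 x) = a • ((1 : ExteriorAlgebra A (ι → A)) ⊗ₜ (1 : MvPolynomial (Fin p) A)) := by
  have key : ∀ u ∈ ⋀[A]^p (ι → A), ∃ a ∈ Ideal.span (maxMin Mx),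
      revProd (fun i => ctr (rowF Mx i)) (List.finRange p) u = a • 1 := by
    intro u hu
    have hs : Submodule.span A (Set.range fun c : ι => (Pi.single c 1 : ι → A)) = ⊤ := by
      have := (Pi.basisFun A ι).span_eq
      rw [← this]
      congr 2
      funext c
      simp
    rw [← exteriorPower.ιMulti_span_fixedDegree_of_span_eq_top A p _ hs] at hu
    induction hu using Submodule.span_induction with
    | mem u hu =>
      obtain ⟨v, hv, rfl⟩ := hu
      have hv' : ∀ i, ∃ c : ι, Pi.single c 1 = v i := fun i => hv ⟨i, rfl⟩
      choose c hc using hv'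
      refine ⟨(Mx.submatrix id c).det, Ideal.subset_span ⟨c, rfl⟩, ?_⟩
      rw [ctr_det]
      congr 2
      ext i j
      simp [← hc, rowF_single]
    | zero => exact ⟨0, Ideal.zero_mem _, by simp⟩
    | add u v _ _ hu hv =>
      obtain ⟨a, ha, hu⟩ := hu
      obtain ⟨b, hb, hv⟩ := hv
      exact ⟨a + b, Ideal.add_mem _ ha hb, by rw [map_add, hu, hv, add_smul]⟩
    | smul r u _ hu =>
      obtain ⟨a, ha, hu⟩ := hu
      exact ⟨r * a, Ideal.mul_mem_left _ _ ha, by rw [map_smul, hu, mul_smul]⟩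
  induction x using TensorProduct.induction_on with
  | zero => exact ⟨0, Ideal.zero_mem _, by simp⟩
  | add x y hx hy =>
    obtain ⟨a, ha, hu⟩ := hx
    obtain ⟨b, hb, hv⟩ := hy
    exact ⟨a + b, Ideal.add_mem _ ha hb, by rw [map_add, map_add, hu, hv, add_smul]⟩
  | tmul u g =>
    obtain ⟨a, ha, hu⟩ := key (extProj p u) (extProj_mem p u)
    refine ⟨MvPolynomial.coeff 0 g * a, Ideal.mul_mem_left _ _ ha, ?_⟩
    have e1 : strand A (ι → A) p 0 (u ⊗ₜ g) = extProj p u ⊗ₜ (MvPolynomial.coeff 0 g • 1) := by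
      change (extProj (p + 0) u) ⊗ₜ[A] (MvPolynomial.homogeneousComponent 0 g) = _
      rw [MvPolynomial.homogeneousComponent_zero, MvPolynomial.smul_eq_C_mul, mul_one]
      rfl
    rw [e1, END, revProd_opa]
    change (revProd (fun i => ctr (rowF Mx i)) (List.finRange p) (extProj p u)) ⊗ₜ[A] (MvPolynomial.coeff 0 g • (1 : MvPolynomial (Fin p) A)) = _
    rw [hu, TensorProduct.smul_tmul_smul, mul_comm]

lemma D0_image_sup (Mx : Matrix (Fin p) ι A) (a : A) (ha : a ∈ Ideal.span (maxMin Mx)) :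
    ∃ x, END (rowF Mx) 0 (strand A (ι → A) p 0 x) = a • ((1 : ExteriorAlgebra A (ι → A)) ⊗ₜ (1 : MvPolynomial (Fin p) A)) := by
  induction ha using Submodule.span_induction with
  | mem a ha =>
    obtain ⟨c, rfl⟩ := ha
    refine ⟨(ExteriorAlgebra.ιMulti A p fun j => Pi.single (c j) 1) ⊗ₜ 1, ?_⟩
    have e1 : strand A (ι → A) p 0 ((ExteriorAlgebra.ιMulti A p fun j => Pi.single (c j) 1) ⊗ₜ 1) = 
        (ExteriorAlgebra.ιMulti A p fun j => Pi.single (c j) 1) ⊗ₜ 1 := by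
      change (extProj (p + 0) (ExteriorAlgebra.ιMulti A p fun j => Pi.single (c j) 1)) ⊗ₜ[A]
        (MvPolynomial.homogeneousComponent 0 1) = _
      rw [MvPolynomial.homogeneousComponent_zero, extProj_same]
      · simp
      · rw [← ExteriorAlgebra.ιMulti_span_fixedDegree]
        exact Submodule.subset_span ⟨_, rfl⟩
    rw [e1, END, revProd_opa]
    change (revProd (fun i => ctr (rowF Mx i)) (List.finRange p) _) ⊗ₜ[A] _ = _
    rw [ctr_det, TensorProduct.smul_tmul']
    congr 3
    ext i j
    simp [rowF_single]
  | zero => exact ⟨0, by simp⟩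
  | add a b _ _ ha hb =>
    obtain ⟨x, hx⟩ := ha
    obtain ⟨y, hy⟩ := hb
    exact ⟨x + y, by rw [map_add, map_add, hx, hy, add_smul]⟩
  | smul r a _ ha =>
    obtain ⟨x, hx⟩ := ha
    exact ⟨r • x, by rw [map_smul, map_smul, hx, smul_eq_mul, mul_smul]⟩

lemma one_tmul_inj (F : Type) [AddCommGroup F] [Module A F] (a b : A) (h : a • ((1 : ExteriorAlgebra A F) ⊗ₜ[A] (1 : MvPolynomial (Fin p) A))
    = b • ((1 : ExteriorAlgebra A F) ⊗ₜ[A] (1 : MvPolynomial (Fin p) A))) : a = b := by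
  have := congrArg ((TensorProduct.lid A A).toLinearMap ∘ₗ TensorProduct.map
    (ExteriorAlgebra.algebraMapInv (R := A) (M := F)).toLinearMap
    (MvPolynomial.aeval (0 : Fin p → A)).toLinearMap) h
  simpa using this

/-- Depth sensitivity for the ideal of maximal minors. -/
theorem EN_final [IsDomain A] [IsNoetherianRing A] [Algebra ℚ A] (N : ℕ) (Mx : Matrix (Fin p) ι A)
    (hcard : Fintype.card ι + 1 = p + N)
    (hdepth : ∀ P : Ideal A, P.IsPrime → Ideal.span (maxMin Mx) ≤ P →
      ∃ gs : List A, (∀ g ∈ gs, g ∈ P) ∧ IsWeaklyRegular A gs ∧ N ≤ gs.length)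
    (P : Ideal A) (gs : List A) (hgP : ∀ g ∈ gs, g ∈ P) (hgs : IsWeaklyRegular A gs)
    (hlen : N < gs.length) (w : A) (hw : ∀ a ∈ P, a * w ∈ Ideal.span (maxMin Mx)) :
    w ∈ Ideal.span (maxMin Mx) := by
  have hzero : ENC A (ι → A) p (N + 1) = ⊥ := by
    have : strand A (ι → A) p N = 0 := by
      unfold strand
      rw [extProj_eq_zero (p + N) (by rw [Module.finrank_fintype_fun_eq_card]; omega), map_zero, zero_mul]
    change LinearMap.range _ = _
    rw [this, LinearMap.range_zero]
  have H := acyclicity (Ideal.span (maxMin Mx)) (maxMin Mx) rfl N (ENC A (ι → A) p) (END (rowF Mx))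
    EN_flat (EN_map _) (fun j x _ => EN_dd _ j x) hzero (by
      rintro j x hx hD _ ⟨c, rfl⟩
      obtain ⟨w, hw⟩ := exists_dual Mx c
      exact EN_tors _ w _ hw j x hx hD) hdepth N 0 (by omega) gs hgs
  set e : ENV A (ι → A) p := (1 : ExteriorAlgebra A (ι → A)) ⊗ₜ[A] (1 : MvPolynomial (Fin p) A) with he
  have h1 := H.eq_zero P N gs _ hlen hgP (Submodule.Quotient.mk ⟨w • e, Submodule.mem_top⟩) (by
    intro a ha
    obtain ⟨x, hx⟩ := D0_image_sup Mx _ (hw a ha)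
    rw [← Submodule.Quotient.mk_smul, Submodule.Quotient.mk_eq_zero]
    refine ⟨⟨strand A (ι → A) p 0 x, ⟨x, rfl⟩⟩, ?_⟩
    apply Subtype.ext
    rw [LinearMap.coe_restrict_apply, hx, mul_smul]
    rfl)
  rw [Submodule.Quotient.mk_eq_zero] at h1
  obtain ⟨⟨y, x, rfl⟩, hx⟩ := h1
  have hx := congrArg Subtype.val hx
  rw [LinearMap.coe_restrict_apply] at hx
  obtain ⟨a, ha, h2⟩ := D0_image_sub Mx x
  rw [h2] at hx
  have := one_tmul_inj _ _ _ hx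
  rwa [← this]

end EN3

end PartP3d

section PartP3e
open RingTheory.Sequence

lemma minorsIdeal_eq {A : Type} [CommRing A] {ι : Type} {m : ℕ} (M : Matrix (Option (Fin m)) ι A) :
    minorsIdeal (m + 1) M = Ideal.span (maxMin (M.submatrix (finSuccEquiv m) id)) := by
  apply le_antisymm
  · refine Ideal.span_le.2 ?_
    rintro _ ⟨r, c, hr, hc, rfl⟩
    have hbij : Function.Bijective ((finSuccEquiv m).symm ∘ r) :=
      Finite.injective_iff_bijective.1 ((finSuccEquiv m).symm.injective.comp hr)
    let σ : Equiv.Perm (Fin (m + 1)) := Equiv.ofBijective _ hbij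
    have h1 : M.submatrix r c = ((M.submatrix (finSuccEquiv m) c).submatrix σ id) := by
      ext i j
      simp [σ]
    rw [h1, Matrix.det_permute]
    refine Ideal.mul_mem_left _ _ (Ideal.subset_span ⟨c, ?_⟩)
    rfl
  · refine Ideal.span_le.2 ?_
    rintro _ ⟨c, rfl⟩
    by_cases hc : Function.Injective c
    · exact Ideal.subset_span ⟨finSuccEquiv m, c, (finSuccEquiv m).injective, hc, rfl⟩
    · have : ∃ i j, c i = c j ∧ i ≠ j := by simpa [Function.Injective] using hc
      obtain ⟨i, j, hij, hne⟩ := this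
      rw [Matrix.det_zero_of_column_eq hne (fun k => by simp [hij])]
      exact Ideal.zero_mem _

lemma nat_le_of_trdeg (a b k : ℕ) (t : Cardinal) (h : ((a : ℕ) : Cardinal) ≤ (k : Cardinal) + t)
    (ht : t ≤ (b : Cardinal)) : a ≤ k + b := by
  have : (a : Cardinal) ≤ ((k + b : ℕ) : Cardinal) := by
    rw [Nat.cast_add]
    exact h.trans (by gcongr)
  exact_mod_cast this

lemma saturated_of_trdeg (n m : ℕ) (hn : 2 ≤ n) (hm : n + 1 ≤ m) (f : Fin m → Rp n)
    (h1 : ∀ P : Ideal (Sp n m), P.IsPrime → minorsIdeal (m + 1) (Qs1 n m f) ≤ P →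
      Algebra.trdeg ℂ (Sp n m ⧸ P) ≤ ((m + 1 : ℕ) : Cardinal))
    (h2 : ∀ P : Ideal (Sp n m), P.IsPrime → minorsIdeal (m + 1) (Qs1 n m f) ≤ P →
      toS n m (∏ i, f i) ∈ P → Algebra.trdeg ℂ (Sp n m ⧸ P) ≤ (m : Cardinal))
    (g : Sp n m) (K : ℕ) (hg : toS n m (∏ i, f i) ^ K * g ∈ minorsIdeal (m + 1) (Qs1 n m f)) :
    g ∈ minorsIdeal (m + 1) (Qs1 n m f) := by
  classical
  set I := minorsIdeal (m + 1) (Qs1 n m f) with hI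
  have hIe : I = Ideal.span (maxMin ((Qs1 n m f).submatrix (finSuccEquiv m) id)) := minorsIdeal_eq _
  have hcs : Fintype.card (Fin m ⊕ Fin n) = m + n := by simp
  by_contra hgI
  obtain ⟨P, hP, hle⟩ := exists_le_isAssociatedPrime_of_isNoetherianRing (Sp n m)
    (Ideal.Quotient.mk I g) (by rwa [Ne, Ideal.Quotient.eq_zero_iff_mem])
  rw [isAssociatedPrime_iff] at hP
  obtain ⟨hprime, x, hPx⟩ := hP
  obtain ⟨w, rfl⟩ := Ideal.Quotient.mk_surjective x
  have hmem : ∀ a u : Sp n m, a ∈ (⊥ : Submodule (Sp n m) (Sp n m ⧸ I)).colon {Ideal.Quotient.mk I u} ↔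
      a * u ∈ I := by
    intro a u
    rw [Submodule.mem_colon_singleton, Submodule.mem_bot, ← Ideal.Quotient.eq_zero_iff_mem, map_mul]
    rfl
  have hIP : I ≤ P := by
    intro a ha
    rw [hPx, hmem]
    exact Ideal.mul_mem_right _ _ ha
  have hfP : toS n m (∏ i, f i) ∈ P := hprime.mem_of_pow_mem K (hle ((hmem _ _).2 hg))
  obtain ⟨gs, hgP, hreg, hlen⟩ := exists_regular_seq' P
  rw [hcs] at hlen
  have hlen' := nat_le_of_trdeg _ _ _ _ hlen (h2 P hprime hIP hfP)
  have hwI : w ∈ I := by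
    rw [hIe]
    refine EN_final (n - 1) _ ?_ ?_ P gs hgP hreg (by omega) w ?_
    · have : Fintype.card {k : Fin m // (k : ℕ) ≠ 0} = m - 1 := by
        rw [Fintype.card_subtype_compl (fun k : Fin m => (k : ℕ) = 0), Fintype.card_fin]
        congr 1
        rw [Fintype.card_eq_one_iff]
        exact ⟨⟨⟨0, by omega⟩, rfl⟩, fun y => Subtype.ext (Fin.ext y.2)⟩
      rw [Fintype.card_sum, this, Fintype.card_fin]
      omega
    · intro P' hP' hle'
      obtain ⟨gs, hgP, hreg, hlen⟩ := exists_regular_seq' P'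
      rw [hcs] at hlen
      have hlen' := nat_le_of_trdeg _ _ _ _ hlen (h1 P' hP' (hIe ▸ hle'))
      exact ⟨gs, hgP, hreg, by omega⟩
    · intro a ha
      rw [hPx, hmem, hIe] at ha
      exact ha
  apply hprime.ne_top
  rw [Ideal.eq_top_iff_one, hPx, hmem, one_mul]
  exact hwI

end PartP3e

section PartP4a
open MvPolynomial

section FI
variable {n : ℕ} {K : Type} [CommRing K] [Algebra ℂ K]

lemma mem_of_components {R M : Type*} [CommRing R] [AddCommGroup M] [Module R M] {σ : Type*}
    {k : Type*} [CommRing k]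
    (φ : MvPolynomial σ k →+ M) (W : Submodule R M) (h : MvPolynomial σ k)
    (H : ∀ e, φ (homogeneousComponent e h) ∈ W) : φ h ∈ W := by
  rw [← sum_homogeneousComponent h, map_sum]
  exact Submodule.sum_mem _ fun e _ => H e

lemma fin_integral (φ : MvPolynomial (Fin n) ℂ →ₐ[ℂ] K) (G : Subalgebra ℂ K)
    (B gset : Set (MvPolynomial (Fin n) ℂ))
    (hB : ∀ b ∈ B, φ b = 0 ∧ ∃ e, b.IsHomogeneous e)
    (hg : ∀ g ∈ gset, φ g ∈ G ∧ ∃ e, 1 ≤ e ∧ g.IsHomogeneous e) (N : ℕ)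
    (hN : ∀ j, X j ^ N ∈ Ideal.span (B ∪ gset)) (y : MvPolynomial (Fin n) ℂ) :
    IsIntegral G (φ y) := by
  classical
  set Sm : Set K := (fun u : Fin n → Fin (N + 1) => φ (∏ j, X j ^ (u j : ℕ))) '' Set.univ with hSm
  have hfin : Sm.Finite := Set.finite_univ.image _
  set W : Submodule G K := Submodule.span G Sm with hW
  have hC : ∀ (c : ℂ) (w : K), w ∈ W → algebraMap ℂ K c * w ∈ W := by
    intro c w hw
    have : algebraMap ℂ K c * w = (algebraMap ℂ G c) • w := by
      rw [Algebra.smul_def]; rfl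
    rw [this]
    exact W.smul_mem _ hw
  -- step
  have step : ∀ e, (∀ e' < e, ∀ h : MvPolynomial (Fin n) ℂ, h.IsHomogeneous e' → φ h ∈ W) →
      ∀ y ∈ Ideal.span (B ∪ gset), ∀ r, φ (homogeneousComponent e (r * y)) ∈ W := by
    intro e ih y hy
    induction hy using Submodule.span_induction with
    | mem y hy =>
      intro r
      have hr : r * y = ∑ k ∈ Finset.range (r.totalDegree + 1), homogeneousComponent k r * y := by
        rw [← Finset.sum_mul, sum_homogeneousComponent]
      rw [hr, map_sum, map_sum]
      refine Submodule.sum_mem _ fun k _ => ?_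
      rcases hy with hy | hy
      · obtain ⟨h0, e', he'⟩ := hB y hy
        rw [homogeneousComponent_of_mem ((homogeneousComponent_isHomogeneous k r).mul he')]
        split_ifs
        · rw [map_mul, h0, mul_zero]; exact W.zero_mem
        · rw [map_zero]; exact W.zero_mem
      · obtain ⟨h0, e', he1, he'⟩ := hg y hy
        rw [homogeneousComponent_of_mem ((homogeneousComponent_isHomogeneous k r).mul he')]
        split_ifs with hk
        · rw [map_mul, mul_comm]
          have := W.smul_mem ⟨_, h0⟩ (ih k (by omega) _ (homogeneousComponent_isHomogeneous k r))
          exact this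
        · rw [map_zero]; exact W.zero_mem
    | zero => intro r; simp
    | add a b _ _ ha hb => intro r; rw [mul_add, map_add, map_add]; exact W.add_mem (ha r) (hb r)
    | smul a y _ hy =>
      intro r
      rw [smul_eq_mul, ← mul_assoc]
      exact hy _
  have main : ∀ e, ∀ h : MvPolynomial (Fin n) ℂ, h.IsHomogeneous e → φ h ∈ W := by
    intro e
    induction e using Nat.strong_induction_on with
    | _ e ih =>
      intro h hh
      rw [h.as_sum, map_sum]
      refine Submodule.sum_mem _ fun u hu => ?_
      have hmon : monomial u (coeff u h) = C (coeff u h) * ∏ j, X j ^ (u j) := by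
        rw [monomial_eq, Finsupp.prod_fintype _ _ (by simp)]
      have hmh : (monomial u (coeff u h)).IsHomogeneous e :=
        isHomogeneous_monomial _ (by
          have := hh (mem_support_iff.1 hu)
          rw [← this, Finsupp.degree_eq_weight_one]; rfl)
      by_cases hsm : ∀ j, u j < N + 1
      · rw [hmon, map_mul]
        have : φ (C (coeff u h)) = algebraMap ℂ K (coeff u h) := by
          rw [← algebraMap_eq, AlgHom.commutes]
        rw [this]
        exact hC _ _ (Submodule.subset_span ⟨fun j => ⟨u j, hsm j⟩, trivial, rfl⟩)
      · push Not at hsm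
        obtain ⟨j, hj⟩ := hsm
        have hd : X j ^ N ∣ monomial u (coeff u h) := by
          rw [hmon]
          refine Dvd.dvd.mul_left ?_ _
          exact (pow_dvd_pow _ (by omega)).trans (Finset.dvd_prod_of_mem _ (Finset.mem_univ j))
        obtain ⟨r, hr⟩ := hd
        have := step e ih _ (hN j) r
        rw [mul_comm, ← hr, homogeneousComponent_of_mem hmh, if_pos rfl] at this
        exact this
  have hall : ∀ h : MvPolynomial (Fin n) ℂ, φ h ∈ W := fun h =>
    mem_of_components φ.toRingHom.toAddMonoidHom W h
      fun e => main e _ (homogeneousComponent_isHomogeneous e h)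
  refine IsIntegral.of_mem_of_fg (Algebra.adjoin G (Set.range φ)) ?_ _ (Algebra.subset_adjoin ⟨y, rfl⟩)
  have hcl : ((Submonoid.closure (Set.range φ) : Submonoid K) : Set K) = Set.range φ := by
    have : Set.range φ = ((MonoidHom.mrange (φ : MvPolynomial (Fin n) ℂ →* K) : Submonoid K) : Set K) := rfl
    rw [this, Submonoid.closure_eq]
  have : Subalgebra.toSubmodule (Algebra.adjoin G (Set.range φ)) = W := by
    rw [Algebra.adjoin_eq_span, hcl]
    apply le_antisymm
    · rw [Submodule.span_le]
      rintro _ ⟨h, rfl⟩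
      exact hall h
    · refine Submodule.span_mono ?_
      rintro _ ⟨u, _, rfl⟩
      exact ⟨_, rfl⟩
  rw [this]
  exact ⟨hfin.toFinset, by rw [hfin.coe_toFinset]⟩
end FI

end PartP4a

section PartP4b
open MvPolynomial

lemma exists_minor_ne_zero {K : Type} [Field K] {k : ℕ} {ι : Type} [Fintype ι] (M : Matrix (Fin k) ι K)
    (h : LinearIndependent K M.row) : ∃ c : Fin k → ι, (M.submatrix id c).det ≠ 0 := by
  classical
  have hr := h.rank_matrix
  rw [Fintype.card_fin, Matrix.rank_eq_finrank_span_cols] at hr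
  obtain ⟨κ, a, ha, hs, hli⟩ := exists_linearIndependent' K M.col
  have : Finite κ := Finite.of_injective a ha
  have := Fintype.ofFinite κ
  have hc : Fintype.card κ = k := by
    rw [linearIndependent_iff_card_eq_finrank_span.1 hli, Set.finrank, hs, hr]
  let e : Fin k ≃ κ := (Fintype.equivFinOfCardEq hc).symm
  refine ⟨a ∘ e, ?_⟩
  have h2 : LinearIndependent K (M.submatrix id (a ∘ e)).col := by
    have := hli.comp e e.injective
    exact this
  rw [Matrix.linearIndependent_cols_iff_isUnit, Matrix.isUnit_iff_isUnit_det] at h2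
  exact h2.ne_zero

lemma row_indep_of_minor {K : Type} [Field K] {k : ℕ} {ι : Type} (M : Matrix (Fin k) ι K)
    (c : Fin k → ι) (h : (M.submatrix id c).det ≠ 0) : LinearIndependent K M.row := by
  have h2 : LinearIndependent K (M.submatrix id c).row := by
    rw [Matrix.linearIndependent_rows_iff_isUnit, Matrix.isUnit_iff_isUnit_det]
    exact h.isUnit
  exact LinearIndependent.of_comp (LinearMap.funLeft K K c) h2

lemma nullst {n : ℕ} (J : Ideal (MvPolynomial (Fin n) ℂ))
    (h : ∀ p : Fin n → ℂ, p ≠ 0 → ∃ q ∈ J, eval p q ≠ 0) : ∃ N, ∀ j, X j ^ N ∈ J := by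
  have h1 : ∀ j, ∃ N, (X j : MvPolynomial (Fin n) ℂ) ^ N ∈ J := by
    intro j
    have : (X j : MvPolynomial (Fin n) ℂ) ∈ J.radical := by
      rw [← vanishingIdeal_zeroLocus_eq_radical (K := ℂ), mem_vanishingIdeal_iff]
      intro p hp
      rw [mem_zeroLocus_iff] at hp
      by_cases hp0 : p = 0
      · simp [hp0]
      · obtain ⟨q, hq, hq0⟩ := h p hp0
        exact absurd (hp q hq) hq0
    exact this
  choose N hN using h1
  refine ⟨∑ j, N j, fun j => ?_⟩
  exact J.pow_mem_of_pow_mem (hN j) (Finset.single_le_sum (fun _ _ => Nat.zero_le _) (Finset.mem_univ j))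

section pts
variable {n m : ℕ} {f : Fin m → Rp n} {d : Fin m → ℕ}

lemma euler_eval (hfh : ∀ i, (f i).IsHomogeneous (d i)) (p : Fin n → ℂ) (i : Fin m) :
    ∑ j, eval p (pderiv j (f i)) * p j = d i * eval p (f i) := by
  have := congrArg (eval p) (hfh i).sum_X_mul_pderiv
  simp only [map_sum, map_mul, eval_X, nsmul_eq_mul, map_natCast] at this
  rw [← this]
  exact Finset.sum_congr rfl fun j _ => mul_comm _ _

lemma snc_indep (hsnc : SNC n m f) (p : Fin n → ℂ) (hp : p ≠ 0) (I : Finset (Fin m)) (hI : I.card ≤ n)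
    (h0 : ∀ i ∈ I, eval p (f i) = 0) :
    LinearIndependent ℂ (fun (i : I) (j : Fin n) => eval p (pderiv j (f i.1))) := by
  by_cases hc : I.card = 0
  · have : IsEmpty I := by rw [Finset.card_eq_zero] at hc; subst hc; infer_instance
    exact linearIndependent_empty_type
  · have := hsnc.2 I (by omega) hI p hp h0
    rw [Matrix.rank_eq_finrank_span_row] at this
    rw [linearIndependent_iff_card_eq_finrank_span, Fintype.card_coe, ← this]
    rfl

lemma snc_card (hfh : ∀ i, (f i).IsHomogeneous (d i)) (hsnc : SNC n m f) (p : Fin n → ℂ) (hp : p ≠ 0)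
    (I : Finset (Fin m)) (h0 : ∀ i ∈ I, eval p (f i) = 0) : I.card < n := by
  by_contra hcon
  obtain ⟨I', hsub, hcard⟩ := Finset.exists_subset_card_eq (not_lt.1 hcon)
  have hn : 1 ≤ n := by
    rcases Nat.eq_zero_or_pos n with rfl | h
    · exact absurd (Subsingleton.elim p 0) hp
    · exact h
  have hr := hsnc.2 I' (by omega) (by omega) p hp (fun i hi => h0 i (hsub hi))
  set A := Matrix.of fun (i : I') (j : Fin n) => eval p (pderiv j (f i.1)) with hA
  have h1 : A * (Matrix.of fun (j : Fin n) (_ : Fin 1) => p j) = 0 := by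
    ext i j
    rw [Matrix.mul_apply]
    have := euler_eval hfh p i.1
    rw [h0 i.1 (hsub i.2), mul_zero] at this
    simpa [hA] using this
  have h2 := Matrix.rank_add_rank_le_card_of_mul_eq_zero h1
  rw [hr, hcard, Fintype.card_fin] at h2
  have h3 : (Matrix.of fun (j : Fin n) (_ : Fin 1) => p j).rank = 0 := by omega
  rw [Matrix.rank_eq_finrank_span_cols, Submodule.finrank_eq_zero, Submodule.span_eq_bot] at h3
  exact hp (h3 _ ⟨0, rfl⟩)

lemma Q1_indep (hfh : ∀ i, (f i).IsHomogeneous (d i)) (hd : ∀ i, 1 ≤ d i) (hsnc : SNC n m f)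
    (p : Fin n → ℂ) (hp : p ≠ 0) :
    LinearIndependent ℂ ((Q1 n m f).map (eval p)).row := by
  classical
  rw [Fintype.linearIndependent_iff]
  intro g hg
  have hcol : ∀ k : Fin m, (k : ℕ) ≠ 0 → g k * eval p (f k) = 0 := by
    intro k hk
    have := congrFun hg (Sum.inl ⟨k, hk⟩)
    simp only [Finset.sum_apply, Pi.smul_apply, Matrix.row, Matrix.map_apply, Q1, Matrix.of_apply,
      Sum.elim_inl, smul_eq_mul, Pi.zero_apply] at this
    rw [Finset.sum_eq_single k] at this
    · simpa using this
    · intro i _ hik; simp [hik]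
    · simp
  have hjac : ∀ j : Fin n, ∑ i, g i * eval p (pderiv j (f i)) = 0 := by
    intro j
    have := congrFun hg (Sum.inr j)
    simpa only [Finset.sum_apply, Pi.smul_apply, Matrix.row, Matrix.map_apply, Q1, Matrix.of_apply,
      Sum.elim_inr, smul_eq_mul, Pi.zero_apply] using this
  have hsum : ∑ i, (d i : ℂ) * (g i * eval p (f i)) = 0 := by
    have h1 : ∑ j, (∑ i, g i * eval p (pderiv j (f i))) * p j = 0 := by simp [hjac]
    simp only [Finset.sum_mul] at h1
    rw [Finset.sum_comm] at h1
    rw [← h1]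
    refine Finset.sum_congr rfl fun i _ => ?_
    simp only [mul_assoc]
    rw [← Finset.mul_sum, euler_eval hfh p i]
    ring
  have hall : ∀ i, g i * eval p (f i) = 0 := by
    intro i
    by_cases hi : (i : ℕ) = 0
    · rw [Finset.sum_eq_single i] at hsum
      · have : (d i : ℂ) ≠ 0 := by have := hd i; exact_mod_cast (by omega : d i ≠ 0)
        exact (mul_eq_zero.1 hsum).resolve_left this
      · intro k _ hki
        rw [hcol k (fun h => hki (Fin.ext (by omega))), mul_zero]
      · simp
    · exact hcol i hi
  set I : Finset (Fin m) := Finset.univ.filter fun i => eval p (f i) = 0 with hI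
  have hI0 : ∀ i ∈ I, eval p (f i) = 0 := by intro i hi; simpa [hI] using hi
  have hIn := snc_card hfh hsnc p hp I hI0
  have hli := snc_indep hsnc p hp I hIn.le hI0
  have hout : ∀ i, i ∉ I → g i = 0 := by
    intro i hi
    have : eval p (f i) ≠ 0 := by simpa [hI] using hi
    exact (mul_eq_zero.1 (hall i)).resolve_right this
  rw [Fintype.linearIndependent_iff] at hli
  have h2 := hli (fun i => g i.1) (by
    funext j
    simp only [Finset.sum_apply, Pi.smul_apply, smul_eq_mul, Pi.zero_apply]
    rw [← hjac j, Finset.sum_coe_sort I (fun i => g i * eval p (pderiv j (f i)))]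
    exact Finset.sum_subset (Finset.subset_univ _) fun i _ hi => by rw [hout i hi, zero_mul])
  intro i
  by_cases hi : i ∈ I
  · exact h2 ⟨i, hi⟩
  · exact hout i hi

/-- Jacobian matrix. -/
noncomputable def Jmat (f : Fin m → Rp n) : Matrix (Fin m) (Fin n) (Rp n) := Matrix.of fun i j => pderiv j (f i)

lemma locus_zero (hnm : n ≤ m) (hfh : ∀ i, (f i).IsHomogeneous (d i)) (hd : ∀ i, 1 ≤ d i) (hsnc : SNC n m f)
    (p : Fin n → ℂ) (hp : p ≠ 0) (F : Finset (Fin m)) (hF : F.card ≤ n)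
    (h0 : ∀ i ∈ F, eval p (f i) = 0)
    (hmin : ∀ (r : Fin (F.card + 1) → Fin m) (c : Fin (F.card + 1) → Fin n),
      eval p ((Jmat f).submatrix r c).det = 0) : False := by
  classical
  have hli := snc_indep hsnc p hp F hF h0
  have hspan : ∀ i, (fun j => eval p (pderiv j (f i))) ∈
      Submodule.span ℂ (Set.range (fun (i : F) (j : Fin n) => eval p (pderiv j (f i.1)))) := by
    intro i
    by_contra hcon
    have h1 : LinearIndependent ℂ (fun o : Option F => (Option.casesOn' o
        (fun j => eval p (pderiv j (f i))) (fun (i : F) (j : Fin n) => eval p (pderiv j (f i.1))) : Fin n → ℂ)) :=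
      linearIndependent_option'.2 ⟨hli, hcon⟩
    let e : Fin (F.card + 1) ≃ Option F :=
      (finSuccEquiv F.card).trans (Equiv.optionCongr F.equivFin.symm)
    have h2 := h1.comp e e.injective
    let r : Fin (F.card + 1) → Fin m := fun k => Option.elim (e k) i Subtype.val
    have h3 : LinearIndependent ℂ (((Jmat f).submatrix r id).map (eval p)).row := by
      convert h2 using 1
      funext k j
      simp only [Matrix.row, Matrix.map_apply, Matrix.submatrix_apply, Jmat, Matrix.of_apply, r,
        Function.comp]
      cases e k <;> rfl
    obtain ⟨c, hc⟩ := exists_minor_ne_zero _ h3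
    apply hc
    rw [← hmin r c, RingHom.map_det]
    rfl
  have hz : ∀ i, eval p (f i) = 0 := by
    intro i
    let φ : (Fin n → ℂ) →ₗ[ℂ] ℂ := Fintype.linearCombination ℂ p
    have hφ : ∀ i, φ (fun j => eval p (pderiv j (f i))) = d i * eval p (f i) := by
      intro i
      rw [← euler_eval hfh p i]
      simp [φ, Fintype.linearCombination_apply]
    have h1 : Submodule.span ℂ (Set.range (fun (i : F) (j : Fin n) => eval p (pderiv j (f i.1)))) ≤ LinearMap.ker φ := by
      rw [Submodule.span_le]
      rintro _ ⟨k, rfl⟩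
      rw [SetLike.mem_coe, LinearMap.mem_ker, hφ, h0 k.1 k.2, mul_zero]
    have h2 := h1 (hspan i)
    rw [LinearMap.mem_ker, hφ] at h2
    have : (d i : ℂ) ≠ 0 := by have := hd i; exact_mod_cast (by omega : d i ≠ 0)
    exact (mul_eq_zero.1 h2).resolve_left this
  have := snc_card hfh hsnc p hp Finset.univ (fun i _ => hz i)
  rw [Finset.card_univ, Fintype.card_fin] at this
  omega
end pts

end PartP4b

section PartP4c
open MvPolynomial

section alg
variable {K : Type} [Field K] [Algebra ℂ K]

/-- The subfield of elements algebraic over a subalgebra. -/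
def algSub (B : Subalgebra ℂ K) : Subfield K where
  carrier := {z | IsAlgebraic B z}
  mul_mem' := fun ha hb => IsAlgebraic.mul ha hb
  one_mem' := isAlgebraic_one
  add_mem' := fun ha hb => IsAlgebraic.add ha hb
  zero_mem' := isAlgebraic_zero
  neg_mem' := fun ha => IsAlgebraic.neg ha
  inv_mem' := fun _ ha => IsAlgebraic.inv ha

lemma mem_algSub (B : Subalgebra ℂ K) (z : K) : z ∈ algSub B ↔ IsAlgebraic B z := Iff.rfl

lemma le_algSub (B : Subalgebra ℂ K) (z : K) (hz : z ∈ B) : z ∈ algSub B :=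
  isAlgebraic_algebraMap (⟨z, hz⟩ : B)

lemma poly_mem_algSub {σ : Type} (B : Subalgebra ℂ K) (φ : MvPolynomial σ ℂ →ₐ[ℂ] K)
    (h : ∀ v, φ (X v) ∈ algSub B) (q : MvPolynomial σ ℂ) : φ q ∈ algSub B := by
  induction q using MvPolynomial.induction_on with
  | C a =>
    rw [← algebraMap_eq, AlgHom.commutes]
    exact le_algSub B _ (B.algebraMap_mem a)
  | add p q hp hq => rw [map_add]; exact (algSub B).add_mem hp hq
  | mul_X p i hp => rw [map_mul]; exact (algSub B).mul_mem hp (h i)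

lemma trdeg_le_of_algSub {σ : Type} (Y : Set K) (φ : MvPolynomial σ ℂ →ₐ[ℂ] K)
    (hfrac : ∀ z : K, ∃ a b, z = φ a / φ b)
    (h : ∀ v, φ (X v) ∈ algSub (Algebra.adjoin ℂ Y)) : Algebra.trdeg ℂ K ≤ Cardinal.mk Y := by
  have : Algebra.IsAlgebraic (Algebra.adjoin ℂ Y) K := ⟨fun z => by
    obtain ⟨a, b, rfl⟩ := hfrac z
    exact (algSub (Algebra.adjoin ℂ Y)).div_mem (poly_mem_algSub _ φ h a) (poly_mem_algSub _ φ h b)⟩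
  exact Algebra.IsAlgebraic.trdeg_le_cardinalMk ℂ Y

lemma coeff_mem_subfield (L : Subfield K) {T : Type} [Fintype T] [DecidableEq T] {n : ℕ} (u : T → Fin n → K)
    (hu : ∀ i j, u i j ∈ L) (hli : LinearIndependent K u) (l : T → K)
    (hl : ∀ j, ∑ i, l i * u i j ∈ L) (i : T) : l i ∈ L := by
  let u' : T → Fin n → L := fun i j => ⟨u i j, hu i j⟩
  have hli' : LinearIndependent L u' := by
    rw [Fintype.linearIndependent_iff] at hli ⊢
    intro g hg i
    have := hli (fun i => (g i : K)) (by
      funext j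
      have := congrArg Subtype.val (congrFun hg j)
      simpa [u', Finset.sum_apply] using this) i
    exact Subtype.ext this
  obtain ⟨g, hg⟩ := LinearMap.exists_leftInverse_of_injective (Fintype.linearCombination L u')
    (by rw [LinearMap.ker_eq_bot]; exact hli'.fintypeLinearCombination_injective)
  let c : Fin n → L := fun j => g (Pi.single j 1) i
  have hc : ∀ k, ∑ j, u k j * (c j : K) = if i = k then 1 else 0 := by
    intro k
    have h1 := congrFun (LinearMap.congr_fun hg (Pi.single k 1)) i
    simp only [LinearMap.comp_apply, Fintype.linearCombination_apply_single, one_smul, LinearMap.id_apply] at h1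
    have h2 : g (u' k) i = ∑ j, u' k j * c j := by
      conv_lhs => rw [← Finset.univ_sum_single (u' k)]
      rw [map_sum, Finset.sum_apply]
      refine Finset.sum_congr rfl fun j _ => ?_
      have : (Pi.single j (u' k j) : Fin n → L) = u' k j • Pi.single j 1 := by
        rw [← Pi.single_smul, smul_eq_mul, mul_one]
      rw [this, map_smul]; rfl
    rw [h2] at h1
    have h3 := congrArg Subtype.val h1
    rw [Pi.single_apply] at h3
    push_cast at h3
    rw [← show (∑ j, (u' k j : K) * (c j : K)) = ∑ j, u k j * (c j : K) from rfl]
    refine Eq.trans ?_ (h3.trans ?_)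
    · simp
    · split_ifs <;> rfl
  have : l i = ∑ j, (∑ k, l k * u k j) * (c j : K) := by
    simp only [Finset.sum_mul]
    rw [Finset.sum_comm]
    simp only [mul_assoc, ← Finset.mul_sum, hc]
    simp
  rw [this]
  exact L.sum_mem fun j _ => L.mul_mem (hl j) (c j).2
end alg

section lam
variable {n m : ℕ} {f : Fin m → Rp n} {d : Fin m → ℕ} {K : Type} [Field K] [Algebra ℂ K]

lemma lam_exists (hfh : ∀ i, (f i).IsHomogeneous (d i)) (hd : ∀ i, 1 ≤ d i) (hsnc : SNC n m f)
    (φ : Sp n m →ₐ[ℂ] K) (hI : ∀ g ∈ minorsIdeal (m + 1) (Qs1 n m f), φ g = 0)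
    (hx : ∃ j, φ (X (Sum.inr j)) ≠ 0) :
    ∃ l : Fin m → K, (∀ k : Fin m, (k : ℕ) ≠ 0 → φ (X (Sum.inl k)) = l k * φ (toS n m (f k))) ∧
      ∀ j, ∑ i, l i * φ (toS n m (pderiv j (f i))) = 0 := by
  classical
  obtain ⟨N, hN⟩ := nullst (Ideal.span (maxMin (Q1 n m f))) (by
    intro p hp
    obtain ⟨c, hc⟩ := exists_minor_ne_zero _ (Q1_indep hfh hd hsnc p hp)
    refine ⟨_, Ideal.subset_span ⟨c, rfl⟩, ?_⟩
    rw [RingHom.map_det]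
    exact hc)
  let ψ : Rp n →ₐ[ℂ] K := φ.comp (toS n m)
  have hne : ∃ c : Fin m → Col n m, ψ ((Q1 n m f).submatrix id c).det ≠ 0 := by
    by_contra hcon
    push Not at hcon
    obtain ⟨j, hj⟩ := hx
    have h1 : Ideal.span (maxMin (Q1 n m f)) ≤ RingHom.ker ψ := by
      rw [Ideal.span_le]
      rintro _ ⟨c, rfl⟩
      exact hcon c
    have h2 := h1 (hN j)
    rw [RingHom.mem_ker, map_pow] at h2
    apply hj
    have h3 := eq_zero_of_pow_eq_zero h2
    simpa [ψ, toS] using h3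
  obtain ⟨c, hc⟩ := hne
  have hrow : LinearIndependent K ((Q1 n m f).map ψ).row := by
    refine row_indep_of_minor _ c ?_
    rw [AlgHom.map_det] at hc
    exact hc
  have hdep : ¬ LinearIndependent K ((Qs1 n m f).map φ).row := by
    intro hli
    have h2 := hli.comp (finSuccEquiv m) (finSuccEquiv m).injective
    have h3 : LinearIndependent K (((Qs1 n m f).submatrix (finSuccEquiv m) id).map φ).row := h2
    obtain ⟨c, hc⟩ := exists_minor_ne_zero _ h3
    apply hc
    rw [← hI (((Qs1 n m f).submatrix (finSuccEquiv m) id).submatrix id c).det, AlgHom.map_det]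
    · rfl
    · rw [minorsIdeal_eq]
      exact Ideal.subset_span ⟨c, rfl⟩
  rw [linearIndependent_option, not_and_not_right] at hdep
  have hmem := hdep hrow
  rw [Submodule.mem_span_range_iff_exists_fun] at hmem
  obtain ⟨l, hl⟩ := hmem
  refine ⟨l, fun k hk => ?_, fun j => ?_⟩
  · have := congrFun hl (Sum.inl ⟨k, hk⟩)
    simp only [Finset.sum_apply, Pi.smul_apply, Function.comp, Matrix.row, Matrix.map_apply, Qs1, Q1, Matrix.of_apply,
      Sum.elim_inl, smul_eq_mul, Option.elim] at this
    rw [Finset.sum_eq_single k] at this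
    · simpa using this.symm
    · intro i _ hik; simp [hik]
    · simp
  · have := congrFun hl (Sum.inr j)
    simpa only [Finset.sum_apply, Pi.smul_apply, Function.comp, Matrix.row, Matrix.map_apply, Qs1, Q1, Matrix.of_apply,
      Sum.elim_inr, smul_eq_mul, Option.elim, map_zero] using this
end lam

end PartP4c

section PartP4d
open MvPolynomial

section tr
variable {n m : ℕ} {f : Fin m → Rp n} {d : Fin m → ℕ} {K : Type} [Field K] [Algebra ℂ K]

lemma minor_hom (hfh : ∀ i, (f i).IsHomogeneous (d i)) (k : ℕ) (r : Fin k → Fin m) (c : Fin k → Fin n) :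
    ((Jmat f).submatrix r c).det.IsHomogeneous (∑ i, (d (r i) - 1)) := by
  rw [Matrix.det_apply]
  refine IsHomogeneous.sum _ _ _ fun σ _ => ?_
  have h1 : (∏ i, ((Jmat f).submatrix r c) (σ i) i).IsHomogeneous (∑ i, (d (r i) - 1)) := by
    rw [← Equiv.sum_comp σ (fun i => d (r i) - 1)]
    exact IsHomogeneous.prod _ _ _ fun i _ => (hfh _).pderiv
  rw [Units.smul_def]
  exact (homogeneousSubmodule (Fin n) ℂ _).toAddSubgroup.zsmul_mem h1 _

lemma trdeg_bound (hn1 : 1 ≤ n) (hnm : n ≤ m) (hfh : ∀ i, (f i).IsHomogeneous (d i)) (hd : ∀ i, 1 ≤ d i)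
    (hsnc : SNC n m f)
    (φ : Sp n m →ₐ[ℂ] K) (hfrac : ∀ z : K, ∃ a b, z = φ a / φ b)
    (hI : ∀ g ∈ minorsIdeal (m + 1) (Qs1 n m f), φ g = 0)
    (E : Finset (Fin m)) (hE1 : E.card ≤ 1) (hE : ∀ i ∈ E, φ (toS n m (f i)) = 0) :
    Algebra.trdeg ℂ K ≤ ((m + 1 - E.card : ℕ) : Cardinal) := by
  classical
  have hYcard : ∀ Y : Finset K, Y.card ≤ m + 1 - E.card →
      (∀ v, φ (X v) ∈ algSub (Algebra.adjoin ℂ (Y : Set K))) →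
      Algebra.trdeg ℂ K ≤ ((m + 1 - E.card : ℕ) : Cardinal) := by
    intro Y hY h
    refine (trdeg_le_of_algSub _ φ hfrac h).trans ?_
    have e : Cardinal.mk (Y : Set K) = Y.card := Cardinal.mk_coe_finset
    refine e.le.trans ?_
    exact_mod_cast hY
  by_cases hx : ∃ j, φ (X (Sum.inr j)) ≠ 0
  swap
  · push Not at hx
    refine hYcard (Finset.univ.image fun i => φ (X (Sum.inl i))) ?_ ?_
    · refine Finset.card_image_le.trans ?_
      rw [Finset.card_univ, Fintype.card_fin]; omega
    · rintro (i | j)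
      · exact le_algSub _ _ (Algebra.subset_adjoin (by simp))
      · rw [hx j]; exact Subfield.zero_mem _
  obtain ⟨l, hl1, hl2⟩ := lam_exists hfh hd hsnc φ hI hx
  let ψ : Rp n →ₐ[ℂ] K := φ.comp (toS n m)
  have hψX : ∀ j, ψ (X j) = φ (X (Sum.inr j)) := fun j => by simp [ψ, toS]
  let v : Fin m → Fin n → K := fun i j => ψ (pderiv j (f i))
  obtain ⟨κ, a, ha, hs, hli⟩ := exists_linearIndependent' K v
  have : Finite κ := Finite.of_injective a ha
  have := Fintype.ofFinite κ
  set T : Finset (Fin m) := Finset.univ.image a with hT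
  have hTc : T.card = Fintype.card κ := by
    rw [hT, Finset.card_image_of_injective _ ha, Finset.card_univ]
  have hTn : T.card ≤ n := by
    rw [hTc]
    simpa using hli.fintype_card_le_finrank
  have hTr : T.card = Module.finrank K (Submodule.span K (Set.range v)) := by
    rw [hTc, linearIndependent_iff_card_eq_finrank_span.1 hli, Set.finrank, hs]
  have hTli : LinearIndependent K (fun i : T => v i.1) := by
    have h1 : ∀ i : T, ∃ k, a k = i.1 := by
      intro i
      obtain ⟨k, _, hk⟩ := Finset.mem_image.1 i.2
      exact ⟨k, hk⟩
    choose g hg using h1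
    have hginj : Function.Injective g := by
      intro i i' h
      apply Subtype.ext
      rw [← hg i, ← hg i', h]
    have e : (fun i : T => v i.1) = (v ∘ a) ∘ g := by
      funext i
      simp [Function.comp, hg]
    rw [e]
    exact hli.comp g hginj
  have hmin : ∀ (r : Fin (T.card + 1) → Fin m) (c : Fin (T.card + 1) → Fin n),
      ψ ((Jmat f).submatrix r c).det = 0 := by
    intro r c
    by_contra hne
    have h1 : LinearIndependent K (((Jmat f).submatrix r id).map ψ).row := by
      refine row_indep_of_minor _ c ?_
      rw [AlgHom.map_det] at hne
      exact hne
    have h2 := linearIndependent_iff_card_eq_finrank_span.1 h1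
    rw [Fintype.card_fin, Set.finrank] at h2
    have h3 : Submodule.span K (Set.range (((Jmat f).submatrix r id).map ψ).row) ≤
        Submodule.span K (Set.range v) := by
      refine Submodule.span_mono ?_
      rintro _ ⟨k, rfl⟩
      exact ⟨r k, rfl⟩
    have h4 := Submodule.finrank_mono h3
    omega
  -- choose F
  have main : ∀ F : Finset (Fin m), F.card = T.card → ∃ N, ∀ j, X j ^ N ∈ Ideal.span
      ({b | ∃ (r : Fin (T.card + 1) → Fin m) (c : Fin (T.card + 1) → Fin n),
        b = ((Jmat f).submatrix r c).det} ∪ (f '' (F : Set (Fin m)))) := by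
    intro F hF
    refine nullst _ fun p hp => ?_
    by_contra hcon
    push Not at hcon
    refine locus_zero hnm hfh hd hsnc p hp F (by omega) ?_ ?_
    · intro i hi
      exact hcon _ (Ideal.subset_span (Or.inr ⟨i, hi, rfl⟩))
    · rw [hF]
      intro r c
      exact hcon _ (Ideal.subset_span (Or.inl ⟨r, c, rfl⟩))
  have hTpos : 1 ≤ T.card := by
    by_contra hcon
    have h0 : T.card = 0 := by omega
    obtain ⟨N, hN⟩ := main ∅ (by simp [h0])
    obtain ⟨j, hj⟩ := hx
    apply hj
    rw [← hψX]
    have : ψ (X j ^ N) = 0 := by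
      have hle : Ideal.span
        ({b | ∃ (r : Fin (T.card + 1) → Fin m) (c : Fin (T.card + 1) → Fin n),
        b = ((Jmat f).submatrix r c).det} ∪ (f '' ((∅ : Finset (Fin m)) : Set (Fin m)))) ≤ RingHom.ker ψ := by
        rw [Ideal.span_le]
        rintro _ (⟨r, c, rfl⟩ | ⟨i, hi, _⟩)
        · exact hmin r c
        · simp at hi
      exact hle (hN j)
    rw [map_pow] at this
    exact eq_zero_of_pow_eq_zero this
  obtain ⟨F, hEF, hFc⟩ := Finset.exists_superset_card_eq (s := E) (n := T.card) (by omega)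
    (by rw [Fintype.card_fin]; omega)
  obtain ⟨N, hN⟩ := main F hFc
  let s0 : K := φ (X (Sum.inl ⟨0, by omega⟩))
  refine hYcard (((F \ E).image fun i => ψ (f i)) ∪ (Tᶜ.image l) ∪ {s0}) ?_ ?_
  · have h1 := Finset.card_union_le (((F \ E).image fun i => ψ (f i)) ∪ (Tᶜ.image l)) {s0}
    have h2 := Finset.card_union_le ((F \ E).image fun i => ψ (f i)) (Tᶜ.image l)
    have h3 := Finset.card_image_le (s := F \ E) (f := fun i => ψ (f i))
    have h4 := Finset.card_image_le (s := Tᶜ) (f := l)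
    rw [Finset.card_sdiff_of_subset hEF] at h3
    rw [Finset.card_compl, Fintype.card_fin] at h4
    rw [Finset.card_singleton] at h1
    have : T.card ≤ m := by omega
    have := Finset.card_le_card hEF
    omega
  set Y : Finset K := (((F \ E).image fun i => ψ (f i)) ∪ (Tᶜ.image l) ∪ {s0}) with hY
  set G := Algebra.adjoin ℂ (Y : Set K) with hG
  have hYG : ∀ z ∈ Y, z ∈ G := fun z hz => Algebra.subset_adjoin hz
  have hR : ∀ q, ψ q ∈ algSub G := by
    intro q
    have := fin_integral ψ G _ _ (by
      rintro _ ⟨r, c, rfl⟩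
      exact ⟨hmin r c, _, minor_hom hfh _ r c⟩) (by
      rintro _ ⟨i, hi, rfl⟩
      refine ⟨?_, d i, hd i, hfh i⟩
      by_cases hiE : i ∈ E
      · have : ψ (f i) = 0 := hE i hiE
        rw [this]; exact G.zero_mem
      · refine hYG _ ?_
        rw [hY, Finset.mem_union, Finset.mem_union]
        left; left
        exact Finset.mem_image_of_mem _ (Finset.mem_sdiff.2 ⟨hi, hiE⟩)) N hN q
    exact this.isAlgebraic
  have hlc : ∀ i ∉ T, l i ∈ algSub G := by
    intro i hi
    refine le_algSub _ _ (hYG _ ?_)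
    rw [hY, Finset.mem_union, Finset.mem_union]
    left; right
    exact Finset.mem_image_of_mem _ (Finset.mem_compl.2 hi)
  have hlT : ∀ i : T, l i.1 ∈ algSub G := by
    refine coeff_mem_subfield (algSub G) (fun i : T => v i.1) (fun i j => hR _) hTli (fun i => l i.1) ?_
    intro j
    have h1 : ∑ i, l i * v i j = 0 := hl2 j
    have h2 := Finset.sum_add_sum_compl T (fun i => l i * v i j)
    rw [h1] at h2
    rw [Finset.sum_coe_sort T (fun i => l i * v i j), eq_neg_of_add_eq_zero_left h2]
    refine Subfield.neg_mem _ (Subfield.sum_mem _ fun i hi => ?_)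
    exact Subfield.mul_mem _ (hlc i (Finset.mem_compl.1 hi)) (hR _)
  have hlall : ∀ i, l i ∈ algSub G := fun i => by
    by_cases hi : i ∈ T
    · exact hlT ⟨i, hi⟩
    · exact hlc i hi
  rintro (i | j)
  · by_cases hi : (i : ℕ) = 0
    · have : i = ⟨0, by omega⟩ := Fin.ext hi
      rw [this]
      exact le_algSub _ _ (hYG _ (by rw [hY, Finset.mem_union]; right; exact Finset.mem_singleton.2 rfl))
    · rw [hl1 i hi]
      exact Subfield.mul_mem _ (hlall i) (hR _)
  · rw [← hψX]; exact hR _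

lemma trdeg_quot (hn1 : 1 ≤ n) (hnm : n ≤ m) (hfh : ∀ i, (f i).IsHomogeneous (d i)) (hd : ∀ i, 1 ≤ d i)
    (hsnc : SNC n m f) (P : Ideal (Sp n m)) (hP : P.IsPrime) (hI : minorsIdeal (m + 1) (Qs1 n m f) ≤ P)
    (E : Finset (Fin m)) (hE1 : E.card ≤ 1) (hE : ∀ i ∈ E, toS n m (f i) ∈ P) :
    Algebra.trdeg ℂ (Sp n m ⧸ P) ≤ ((m + 1 - E.card : ℕ) : Cardinal) := by
  let φ : Sp n m →ₐ[ℂ] FractionRing (Sp n m ⧸ P) :=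
    (IsScalarTower.toAlgHom ℂ (Sp n m ⧸ P) (FractionRing (Sp n m ⧸ P))).comp (Ideal.Quotient.mkₐ ℂ P)
  have h0 : ∀ g ∈ P, φ g = 0 := by
    intro g hg
    have : Ideal.Quotient.mkₐ ℂ P g = 0 := Ideal.Quotient.eq_zero_iff_mem.2 hg
    simp only [φ, AlgHom.comp_apply, this, map_zero]
  refine le_trans ?_ (trdeg_bound hn1 hnm hfh hd hsnc φ ?_ (fun g hg => h0 g (hI hg)) E hE1
    (fun i hi => h0 _ (hE i hi)))
  · exact _root_.trdeg_le_of_injective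
      (IsScalarTower.toAlgHom ℂ (Sp n m ⧸ P) (FractionRing (Sp n m ⧸ P)))
      (IsFractionRing.injective (Sp n m ⧸ P) (FractionRing (Sp n m ⧸ P)))
  · intro z
    obtain ⟨a, b, _, rfl⟩ := IsFractionRing.div_surjective (A := Sp n m ⧸ P) z
    obtain ⟨a, rfl⟩ := Ideal.Quotient.mk_surjective a
    obtain ⟨b, rfl⟩ := Ideal.Quotient.mk_surjective b
    exact ⟨a, b, rfl⟩

lemma saturated (hn : 2 ≤ n) (hm : n + 1 ≤ m) (hfh : ∀ i, (f i).IsHomogeneous (d i)) (hd : ∀ i, 1 ≤ d i)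
    (hsnc : SNC n m f)
    (g : Sp n m) (k : ℕ) (hg : toS n m (∏ i, f i) ^ k * g ∈ minorsIdeal (m + 1) (Qs1 n m f)) :
    g ∈ minorsIdeal (m + 1) (Qs1 n m f) := by
  refine saturated_of_trdeg n m hn hm f ?_ ?_ g k hg
  · intro P hP hI
    exact trdeg_quot (by omega) (by omega) hfh hd hsnc P hP hI ∅ (by simp) (by simp)
  · intro P hP hI hfP
    rw [map_prod, hP.prod_mem_iff] at hfP
    obtain ⟨i, _, hi⟩ := hfP
    exact trdeg_quot (by omega) (by omega) hfh hd hsnc P hP hI {i} (by simp) (by simpa using hi)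
end tr

end PartP4d

section PartP5
open MvPolynomial

section conn
variable {n m : ℕ} {f : Fin m → Rp n} {d : Fin m → ℕ} {B : Type} [CommRing B] [Algebra ℂ B]

lemma euler_img (hfh : ∀ i, (f i).IsHomogeneous (d i)) (π : Sp n m →ₐ[ℂ] B) (i : Fin m) :
    ∑ j, π (X (Sum.inr j)) * π (toS n m (pderiv j (f i))) = (d i : B) * π (toS n m (f i)) := by
  have h := congrArg (fun q => π (toS n m q)) (hfh i).sum_X_mul_pderiv
  simp only [map_sum, map_mul, nsmul_eq_mul, map_natCast] at h
  rw [← h]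
  simp [toS]

lemma hpoly_img (π : Sp n m →ₐ[ℂ] B) (u : Fin m → B) (hu : ∀ i, u i * π (toS n m (f i)) = 1) (j : Fin n) :
    π (hpoly n m f j) = (∏ i, π (toS n m (f i))) *
      ∑ i, π (X (Sum.inl i)) * u i * π (toS n m (pderiv j (f i))) := by
  classical
  rw [hpoly, map_sum, Finset.mul_sum]
  refine Finset.sum_congr rfl fun i _ => ?_
  rw [← Finset.mul_prod_erase _ _ (Finset.mem_univ i)]
  simp only [map_mul, map_prod]
  linear_combination (-π (X (Sum.inl i)) * (∏ x ∈ Finset.univ.erase i, π (toS n m (f x))) *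
    π (toS n m (pderiv j (f i)))) * hu i

lemma hpoly_img_iff (π : Sp n m →ₐ[ℂ] B) (u : Fin m → B) (hu : ∀ i, u i * π (toS n m (f i)) = 1) (j : Fin n) :
    π (hpoly n m f j) = 0 ↔
      ∑ i, π (X (Sum.inl i)) * u i * π (toS n m (pderiv j (f i))) = 0 := by
  rw [hpoly_img π u hu]
  constructor
  · intro h
    have h2 : (∏ i, u i) * ∏ i, π (toS n m (f i)) = 1 := by
      rw [← Finset.prod_mul_distrib]; exact Finset.prod_eq_one fun i _ => hu i
    have := congrArg (fun z => (∏ i, u i) * z) h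
    simp only [← mul_assoc, h2] at this
    simpa using this
  · intro h; rw [h, mul_zero]

lemma connA_lin (hfh : ∀ i, (f i).IsHomogeneous (d i)) (π : Sp n m →ₐ[ℂ] B) (u : Fin m → B)
    (hu : ∀ i, u i * π (toS n m (f i)) = 1) (hh : ∀ j, π (hpoly n m f j) = 0) :
    π (linForm n m d) = 0 := by
  have h1 := fun j => (hpoly_img_iff π u hu j).1 (hh j)
  have h2 : ∑ j, π (X (Sum.inr j)) * ∑ i, π (X (Sum.inl i)) * u i * π (toS n m (pderiv j (f i))) = 0 :=
    Finset.sum_eq_zero fun j _ => by rw [h1 j, mul_zero]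
  simp only [Finset.mul_sum] at h2
  rw [Finset.sum_comm] at h2
  rw [← h2, linForm, map_sum]
  refine Finset.sum_congr rfl fun i _ => ?_
  have := euler_img hfh π i
  have h3 : ∑ x, π (X (Sum.inr x)) * (π (X (Sum.inl i)) * u i * π (toS n m (pderiv x (f i)))) =
      π (X (Sum.inl i)) * u i * ∑ j, π (X (Sum.inr j)) * π (toS n m (pderiv j (f i))) := by
    rw [Finset.mul_sum]
    exact Finset.sum_congr rfl fun j _ => by ring
  rw [h3, this, map_mul, map_natCast]
  linear_combination (-(d i : B) * π (X (Sum.inl i))) * hu i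

lemma det_zero_of_vecMul {p : ℕ} (N : Matrix (Fin p) (Fin p) B) (v : Fin p → B) (i : Fin p)
    (hv : v i = 1) (h : Matrix.vecMul v N = 0) : N.det = 0 := by
  have h1 : Matrix.vecMul (Matrix.vecMul v N) N.adjugate = 0 := by rw [h, Matrix.zero_vecMul]
  rw [Matrix.vecMul_vecMul, Matrix.mul_adjugate] at h1
  have := congrFun h1 i
  simpa [Matrix.vecMul_smul, hv] using this

lemma connA_min (π : Sp n m →ₐ[ℂ] B) (u : Fin m → B)
    (hu : ∀ i, u i * π (toS n m (f i)) = 1) (hh : ∀ j, π (hpoly n m f j) = 0) :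
    minorsIdeal (m + 1) (Qs1 n m f) ≤ RingHom.ker π := by
  classical
  have h1 := fun j => (hpoly_img_iff π u hu j).1 (hh j)
  rw [minorsIdeal_eq, Ideal.span_le]
  rintro _ ⟨c, rfl⟩
  change π _ = 0
  rw [AlgHom.map_det]
  refine det_zero_of_vecMul _ (Fin.cons 1 (fun i => - (π (X (Sum.inl i)) * u i))) 0 rfl ?_
  funext k
  simp only [Matrix.vecMul, dotProduct, Fin.sum_univ_succ, Fin.cons_zero, Fin.cons_succ, Pi.zero_apply]
  simp only [AlgHom.mapMatrix_apply, Matrix.map_apply, Matrix.submatrix_apply, id, finSuccEquiv_zero,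
    finSuccEquiv_succ]
  rcases c k with l | j
  · simp only [Qs1, Matrix.of_apply, Option.elim, Sum.elim_inl, Q1]
    rw [Finset.sum_eq_single l.1]
    · simp only [if_true]
      linear_combination (-π (X (Sum.inl l.1))) * hu l
    · intro i _ hi
      simp [hi]
    · simp
  · simp only [Qs1, Matrix.of_apply, Option.elim, Sum.elim_inr, Q1, map_zero, mul_zero, zero_add]
    simp only [neg_mul, Finset.sum_neg_distrib, h1 j, neg_zero]

lemma connB_minor (hm : 0 < m) (π : Sp n m →ₐ[ℂ] B) (u : Fin m → B)
    (hu : ∀ i, u i * π (toS n m (f i)) = 1)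
    (hI : minorsIdeal (m + 1) (Qs1 n m f) ≤ RingHom.ker π) (j j' : Fin n) :
    (∑ k : {k : Fin m // (k : ℕ) ≠ 0}, π (X (Sum.inl k.1)) * u k * π (toS n m (pderiv j' (f k)))) *
        π (toS n m (pderiv j (f ⟨0, hm⟩))) =
    (∑ k : {k : Fin m // (k : ℕ) ≠ 0}, π (X (Sum.inl k.1)) * u k * π (toS n m (pderiv j (f k)))) *
        π (toS n m (pderiv j' (f ⟨0, hm⟩))) := by
  classical
  by_cases hj : j = j'
  · rw [hj]
  let ι := Fin 2 ⊕ {k : Fin m // (k : ℕ) ≠ 0}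
  let r : ι → Option (Fin m) := Sum.elim ![none, some ⟨0, hm⟩] (fun k => some k.1)
  let c : ι → Col n m := Sum.elim ![Sum.inr j', Sum.inr j] (fun k => Sum.inl k)
  have hr : Function.Injective r := by
    rintro (a | a) (b | b) h
    · fin_cases a <;> fin_cases b <;> simp [r] at h ⊢
    · have := b.2
      fin_cases a
      · simp [r] at h
      · simp only [r] at h
        exact absurd (congrArg Fin.val (Option.some_injective _ h)) (Ne.symm this)
    · have := a.2
      fin_cases b
      · simp [r] at h
      · simp only [r] at h
        exact absurd (congrArg Fin.val (Option.some_injective _ h)) this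
    · exact congrArg Sum.inr (Subtype.ext (Option.some_injective _ h))
  have hc : Function.Injective c := by
    rintro (a | a) (b | b) h
    · fin_cases a <;> fin_cases b <;> simp [c, hj, Ne.symm hj] at h ⊢
    · fin_cases a <;> simp [c] at h
    · fin_cases b <;> simp [c] at h
    · exact congrArg Sum.inr (Sum.inl_injective h)
  have hcard : Fintype.card (Fin (m + 1)) = Fintype.card ι := by
    have h1 : Fintype.card {k : Fin m // (k : ℕ) ≠ 0} = m - 1 := by
      have e : Fintype.card {k : Fin m // ¬ (k = ⟨0, hm⟩)} = m - 1 := by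
        rw [Fintype.card_subtype_compl, Fintype.card_fin, Fintype.card_subtype_eq]
      rw [← e]
      exact Fintype.card_congr (Equiv.subtypeEquivRight fun k => by simp [Fin.ext_iff])
    simp only [ι, Fintype.card_sum, Fintype.card_fin, h1]; omega
  let e : Fin (m + 1) ≃ ι := Fintype.equivOfCardEq hcard
  have hmem : ((Qs1 n m f).submatrix (r ∘ e) (c ∘ e)).det ∈ minorsIdeal (m + 1) (Qs1 n m f) :=
    Ideal.subset_span ⟨r ∘ e, c ∘ e, hr.comp e.injective, hc.comp e.injective, rfl⟩
  have h0 : π ((Qs1 n m f).submatrix r c).det = 0 := by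
    have := hI hmem
    have e2 : (Qs1 n m f).submatrix (r ∘ e) (c ∘ e) = ((Qs1 n m f).submatrix r c).submatrix e e := rfl
    rw [e2, Matrix.det_submatrix_equiv_self] at this
    exact this
  rw [AlgHom.map_det] at h0
  let D : Matrix {k : Fin m // (k : ℕ) ≠ 0} {k : Fin m // (k : ℕ) ≠ 0} B :=
    Matrix.diagonal fun k => π (toS n m (f k))
  let D' : Matrix {k : Fin m // (k : ℕ) ≠ 0} {k : Fin m // (k : ℕ) ≠ 0} B :=
    Matrix.diagonal fun k => u k
  have hD : D' * D = 1 := by simp [D, D', hu]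
  have hD2 : D * D' = 1 := by
    simp only [D, D', Matrix.diagonal_mul_diagonal, mul_comm, hu, Matrix.diagonal_one]
  letI : Invertible D := ⟨D', hD, hD2⟩
  let p : Fin m → Fin n → B := fun i j => π (toS n m (pderiv j (f i)))
  let A : Matrix (Fin 2) (Fin 2) B := !![0, 0; p ⟨0, hm⟩ j', p ⟨0, hm⟩ j]
  let Bm : Matrix (Fin 2) {k : Fin m // (k : ℕ) ≠ 0} B := Matrix.of ![fun k => π (X (Sum.inl k.1)), 0]
  let Cm : Matrix {k : Fin m // (k : ℕ) ≠ 0} (Fin 2) B := Matrix.of fun k => ![p k j', p k j]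
  have hblk : π.mapMatrix ((Qs1 n m f).submatrix r c) = Matrix.fromBlocks A Bm Cm D := by
    ext (a | a) (b | b)
    · fin_cases a <;> fin_cases b <;> simp [A, r, c, Qs1, Q1, p]
    · fin_cases a
      · simp [Bm, r, c, Qs1, Q1]
      · have := b.2
        have h2 : ¬ ((⟨0, hm⟩ : Fin m) = b.1) := fun h => this (by rw [← h])
        simp [Bm, r, c, Qs1, Q1, h2]
    · fin_cases b <;> simp [Cm, r, c, Qs1, Q1, p]
    · by_cases hab : a = b
      · subst hab; simp [D, r, c, Qs1, Q1]
      · have h2 : ¬ (a.1 = b.1) := fun h => hab (Subtype.ext h)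
        simp [D, r, c, Qs1, Q1, hab, h2]
  rw [hblk, Matrix.det_fromBlocks₂₂] at h0
  have hdet : D'.det * D.det = 1 := by rw [← Matrix.det_mul, hD, Matrix.det_one]
  have h3 : (A - Bm * D' * Cm).det = 0 := by
    have := congrArg (fun z => D'.det * z) h0
    simp only [← mul_assoc, hdet, mul_zero, one_mul] at this
    exact this
  rw [Matrix.det_fin_two] at h3
  have hB0 : ∀ l, (Bm * D' * Cm) 0 l = ∑ k : {k : Fin m // (k : ℕ) ≠ 0}, π (X (Sum.inl k.1)) * u k * Cm k l := by
    intro l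
    simp only [Matrix.mul_apply (M := Bm * D'), D', Matrix.mul_diagonal]
    simp [Bm]
  have hB1 : ∀ l, (Bm * D' * Cm) 1 l = 0 := by
    intro l
    simp only [Matrix.mul_apply (M := Bm * D'), D', Matrix.mul_diagonal]
    simp [Bm]
  simp only [Matrix.sub_apply, hB0, hB1] at h3
  simp [A, Cm] at h3
  simp only [p] at h3
  linear_combination -h3

lemma connB (hm : 0 < m) (hfh : ∀ i, (f i).IsHomogeneous (d i)) (hd : ∀ i, 1 ≤ d i)
    (π : Sp n m →ₐ[ℂ] B) (u : Fin m → B)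
    (hu : ∀ i, u i * π (toS n m (f i)) = 1)
    (hI : minorsIdeal (m + 1) (Qs1 n m f) ≤ RingHom.ker π) (hl : π (linForm n m d) = 0) (j : Fin n) :
    π (hpoly n m f j) = 0 := by
  classical
  rw [hpoly_img_iff π u hu]
  have hsplit : ∀ F : Fin m → B, ∑ i, F i = F ⟨0, hm⟩ + ∑ k : {k : Fin m // (k : ℕ) ≠ 0}, F k := by
    intro F
    rw [← Finset.add_sum_erase _ _ (Finset.mem_univ (⟨0, hm⟩ : Fin m))]
    congr 1
    refine (Finset.sum_subtype _ (fun x => ?_) F)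
    simp [Fin.ext_iff]
  let a : Fin n → B := fun j =>
    ∑ k : {k : Fin m // (k : ℕ) ≠ 0}, π (X (Sum.inl k.1)) * u k * π (toS n m (pderiv j (f k)))
  have hmin : ∀ j', a j' * π (toS n m (pderiv j (f ⟨0, hm⟩))) = a j * π (toS n m (pderiv j' (f ⟨0, hm⟩))) :=
    fun j' => connB_minor hm π u hu hI j j'
  have hsum : ∑ j', π (X (Sum.inr j')) * a j' =
      ∑ k : {k : Fin m // (k : ℕ) ≠ 0}, (d k : B) * π (X (Sum.inl k.1)) := by
    simp only [a, Finset.mul_sum]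
    rw [Finset.sum_comm]
    refine Finset.sum_congr rfl fun k _ => ?_
    have h3 : ∑ x, π (X (Sum.inr x)) * (π (X (Sum.inl k.1)) * u k * π (toS n m (pderiv x (f k)))) =
      π (X (Sum.inl k.1)) * u k * ∑ j, π (X (Sum.inr j)) * π (toS n m (pderiv j (f k))) := by
      rw [Finset.mul_sum]
      exact Finset.sum_congr rfl fun j _ => by ring
    rw [h3, euler_img hfh π]
    linear_combination ((d k : B) * π (X (Sum.inl k.1))) * hu k
  have hl' : (d ⟨0, hm⟩ : B) * π (X (Sum.inl ⟨0, hm⟩)) +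
      ∑ k : {k : Fin m // (k : ℕ) ≠ 0}, (d k : B) * π (X (Sum.inl k.1)) = 0 := by
    rw [← hsplit (fun i => (d i : B) * π (X (Sum.inl i))), ← hl, linForm, map_sum]
    simp
  have hmul : (∑ j', π (X (Sum.inr j')) * a j') * π (toS n m (pderiv j (f ⟨0, hm⟩))) =
      a j * ((d ⟨0, hm⟩ : B) * π (toS n m (f ⟨0, hm⟩))) := by
    rw [← euler_img hfh π, Finset.sum_mul, Finset.mul_sum]
    refine Finset.sum_congr rfl fun j' _ => ?_
    linear_combination (π (X (Sum.inr j'))) * hmin j'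
  have hdu : algebraMap ℂ B ((d ⟨0, hm⟩ : ℂ)⁻¹) * (d ⟨0, hm⟩ : B) = 1 := by
    have h0 : (d ⟨0, hm⟩ : ℂ) ≠ 0 := by
      have := hd ⟨0, hm⟩
      exact_mod_cast (by omega : d ⟨0, hm⟩ ≠ 0)
    rw [← map_natCast (algebraMap ℂ B), ← map_mul, inv_mul_cancel₀ h0, map_one]
  rw [hsplit]
  change _ + a j = 0
  rw [hsum] at hmul
  set δ := algebraMap ℂ B ((d ⟨0, hm⟩ : ℂ)⁻¹)
  set D := (d ⟨0, hm⟩ : B)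
  set P := π (toS n m (pderiv j (f ⟨0, hm⟩)))
  set s0 := π (X (Sum.inl (⟨0, hm⟩ : Fin m)))
  set w := π (toS n m (f ⟨0, hm⟩))
  have key : D * (s0 * P + w * a j) = 0 := by linear_combination P * hl' - hmul
  have key2 : s0 * P + w * a j = 0 := by
    linear_combination δ * key - (s0 * P + w * a j) * hdu
  linear_combination u ⟨0, hm⟩ * key2 - a j * hu ⟨0, hm⟩

lemma units_of_prod (π : Sp n m →ₐ[ℂ] B) (h : IsUnit (π (toS n m (∏ i, f i)))) :
    ∃ u : Fin m → B, ∀ i, u i * π (toS n m (f i)) = 1 := by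
  classical
  have : ∀ i, ∃ u : B, u * π (toS n m (f i)) = 1 := by
    intro i
    obtain ⟨v, hv⟩ := h.exists_left_inv
    refine ⟨v * π (toS n m ((Finset.univ.erase i).prod f)), ?_⟩
    rw [← Finset.mul_prod_erase _ _ (Finset.mem_univ i), map_mul, map_mul] at hv
    rw [← hv]; ring
  choose u hu using this
  exact ⟨u, hu⟩

lemma qs1_fix (ψ : Sp n m →ₐ[ℂ] Sp n m) (h1 : ∀ j, ψ (X (Sum.inr j)) = X (Sum.inr j))
    (h2 : ∀ i : Fin m, (i : ℕ) ≠ 0 → ψ (X (Sum.inl i)) = X (Sum.inl i)) :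
    (∀ q, ψ (toS n m q) = toS n m q) ∧
    ∀ g ∈ minorsIdeal (m + 1) (Qs1 n m f), ψ g ∈ minorsIdeal (m + 1) (Qs1 n m f) := by
  have ht : ∀ q, ψ (toS n m q) = toS n m q := by
    have : ψ.comp (toS n m) = toS n m := by
      refine MvPolynomial.algHom_ext fun j => ?_
      simp [toS, h1]
    exact fun q => DFunLike.congr_fun this q
  refine ⟨ht, ?_⟩
  have hent : ∀ i c, ψ (Qs1 n m f i c) = Qs1 n m f i c := by
    rintro (_ | i) (k | j)
    · exact h2 k.1 k.2
    · exact map_zero _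
    · exact ht _
    · exact ht _
  intro g hg
  have hle : minorsIdeal (m + 1) (Qs1 n m f) ≤ (minorsIdeal (m + 1) (Qs1 n m f)).comap ψ := by
    conv_lhs => rw [minorsIdeal]
    rw [Ideal.span_le]
    rintro _ ⟨r, c, hr, hc, rfl⟩
    change ψ _ ∈ minorsIdeal (m + 1) (Qs1 n m f)
    rw [AlgHom.map_det]
    have : ψ.mapMatrix ((Qs1 n m f).submatrix r c) = (Qs1 n m f).submatrix r c := by
      ext i k
      simp [hent]
    rw [this]
    exact Ideal.subset_span ⟨r, c, hr, hc, rfl⟩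
  exact hle hg

lemma exists_psi (hm : 0 < m) (hd : ∀ i, 1 ≤ d i) : ∃ ψ : Sp n m →ₐ[ℂ] Sp n m,
    (∀ j, ψ (X (Sum.inr j)) = X (Sum.inr j)) ∧
    (∀ i : Fin m, (i : ℕ) ≠ 0 → ψ (X (Sum.inl i)) = X (Sum.inl i)) ∧
    ψ (linForm n m d) = 0 ∧ ∀ g, g - ψ g ∈ Ideal.span {linForm n m d} := by
  classical
  have h0 : (d ⟨0, hm⟩ : ℂ) ≠ 0 := by
    have := hd ⟨0, hm⟩
    exact_mod_cast (by omega : d ⟨0, hm⟩ ≠ 0)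
  let δ : Sp n m := C ((d ⟨0, hm⟩ : ℂ)⁻¹)
  have hδ : δ * (d ⟨0, hm⟩ : Sp n m) = 1 := by
    rw [← map_natCast (C : ℂ →+* Sp n m), ← map_mul, inv_mul_cancel₀ h0, map_one]
  let ψ : Sp n m →ₐ[ℂ] Sp n m := aeval (Sum.elim
    (fun i : Fin m => if (i : ℕ) = 0 then X (Sum.inl i) - δ * linForm n m d else X (Sum.inl i))
    (fun j => X (Sum.inr j)))
  have h1 : ∀ j, ψ (X (Sum.inr j)) = X (Sum.inr j) := fun j => by simp [ψ]
  have h2 : ∀ i : Fin m, (i : ℕ) ≠ 0 → ψ (X (Sum.inl i)) = X (Sum.inl i) := fun i hi => by simp [ψ, hi]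
  have h3 : ψ (X (Sum.inl ⟨0, hm⟩)) = X (Sum.inl ⟨0, hm⟩) - δ * linForm n m d := by simp [ψ]
  refine ⟨ψ, h1, h2, ?_, ?_⟩
  · have e : ∀ i : Fin m, ψ ((d i : Sp n m) * X (Sum.inl i)) =
        (d i : Sp n m) * X (Sum.inl i) - if i = ⟨0, hm⟩ then linForm n m d else 0 := by
      intro i
      rw [map_mul, map_natCast]
      by_cases hi : i = ⟨0, hm⟩
      · subst hi
        rw [h3, if_pos rfl]
        linear_combination (-linForm n m d) * hδ
      · rw [h2 i (fun h => hi (Fin.ext h)), if_neg hi, sub_zero]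
    conv_lhs => rw [linForm, map_sum]
    simp only [e, Finset.sum_sub_distrib]
    simp [linForm]
  · intro g
    rw [← Ideal.Quotient.eq]
    have : (Ideal.Quotient.mkₐ ℂ (Ideal.span {linForm n m d})) =
        (Ideal.Quotient.mkₐ ℂ (Ideal.span {linForm n m d})).comp ψ := by
      refine MvPolynomial.algHom_ext fun v => ?_
      rcases v with i | j
      · by_cases hi : (i : ℕ) = 0
        · have : i = ⟨0, hm⟩ := Fin.ext hi
          subst this
          rw [AlgHom.comp_apply, h3]
          refine Ideal.Quotient.eq.2 ?_
          rw [sub_sub_cancel]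
          exact Ideal.mul_mem_left _ _ (Ideal.mem_span_singleton_self _)
        · rw [AlgHom.comp_apply, h2 i hi]
      · rw [AlgHom.comp_apply, h1]
    exact DFunLike.congr_fun this g

end conn

end PartP5

/-- Under the SNC hypothesis and `m ≥ n+1`, the likelihood ideal equals the
determinantal ideal `I_{m+1}(Q^s_{∖1}) + ⟨Σ d_i s_i⟩`. -/
theorem likelihood_ideal_eq_determinantal (n m : ℕ) (hn : 2 ≤ n) (hm : n + 1 ≤ m)
    (f : Fin m → Rp n) (d : Fin m → ℕ)
    (hf0 : ∀ i, f i ≠ 0) (hfh : ∀ i, (f i).IsHomogeneous (d i)) (hd : ∀ i, 1 ≤ d i)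
    (hsnc : SNC n m f) :
    IA n m f = minorsIdeal (m + 1) (Qs1 n m f) + Ideal.span {linForm n m d} := by
  have hm0 : 0 < m := by omega
  set F : Sp n m := toS n m (∏ i, f i) with hF
  have hunit : ∀ J : Ideal (Localization.Away F),
      IsUnit (((Ideal.Quotient.mkₐ ℂ J).comp (IsScalarTower.toAlgHom ℂ (Sp n m) (Localization.Away F))) F) := by
    intro J
    rw [AlgHom.comp_apply]
    exact IsUnit.map _ (IsLocalization.Away.algebraMap_isUnit F)
  have hker : ∀ (J : Ideal (Localization.Away F)) (g : Sp n m),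
      ((Ideal.Quotient.mkₐ ℂ J).comp (IsScalarTower.toAlgHom ℂ (Sp n m) (Localization.Away F))) g = 0 ↔
        algebraMap (Sp n m) (Localization.Away F) g ∈ J := fun J g => Ideal.Quotient.eq_zero_iff_mem
  apply le_antisymm
  · intro g hg
    set I := minorsIdeal (m + 1) (Qs1 n m f) + Ideal.span {linForm n m d} with hI
    let J : Ideal (Localization.Away F) := I.map (algebraMap (Sp n m) (Localization.Away F))
    obtain ⟨u, hu⟩ := units_of_prod _ (hunit J)
    have hhJ := connB hm0 hfh hd _ u hu (fun x hx => (hker J x).2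
      (Ideal.mem_map_of_mem _ (Ideal.mem_sup_left hx)))
      ((hker J _).2 (Ideal.mem_map_of_mem _ (Ideal.mem_sup_right (Ideal.mem_span_singleton_self _))))
    have hgJ : algebraMap (Sp n m) (Localization.Away F) g ∈ J := by
      have h1 : algebraMap (Sp n m) (Localization.Away F) g ∈ Ideal.span (Set.range fun j =>
        algebraMap (Sp n m) (Localization.Away F) (hpoly n m f j)) := hg
      refine (Ideal.span_le.2 ?_) h1
      rintro _ ⟨j, rfl⟩
      exact (hker J _).1 (hhJ j)
    rw [IsLocalization.algebraMap_mem_map_algebraMap_iff (Submonoid.powers F)] at hgJ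
    obtain ⟨_, ⟨k, rfl⟩, hk⟩ := hgJ
    obtain ⟨ψ, h1, h2, h3, h4⟩ := exists_psi (n := n) (d := d) hm0 hd
    obtain ⟨h5, h6⟩ := qs1_fix (f := f) ψ h1 h2
    have h7 : ψ g ∈ minorsIdeal (m + 1) (Qs1 n m f) := by
      refine saturated hn hm hfh hd hsnc _ k ?_
      obtain ⟨a, ha, b, hb, hab⟩ := Submodule.mem_sup.1 hk
      obtain ⟨b', rfl⟩ := Ideal.mem_span_singleton'.1 hb
      have h8 := congrArg ψ hab
      simp only [map_add, map_mul, map_pow, h3, mul_zero, add_zero, hF, h5] at h8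
      rw [← h8]
      exact h6 a ha
    have : g = ψ g + (g - ψ g) := by ring
    rw [this]
    exact Ideal.add_mem _ (Ideal.mem_sup_left h7) (Ideal.mem_sup_right (h4 g))
  · let J : Ideal (Localization.Away F) := Ideal.span (Set.range fun j =>
      algebraMap (Sp n m) (Localization.Away F) (hpoly n m f j))
    obtain ⟨u, hu⟩ := units_of_prod _ (hunit J)
    have hh : ∀ j, ((Ideal.Quotient.mkₐ ℂ J).comp
        (IsScalarTower.toAlgHom ℂ (Sp n m) (Localization.Away F))) (hpoly n m f j) = 0 :=
      fun j => (hker J _).2 (Ideal.subset_span ⟨j, rfl⟩)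
    refine sup_le ?_ ?_
    · intro g hg
      exact (hker J g).1 (connA_min _ u hu hh hg)
    · rw [Ideal.span_le, Set.singleton_subset_iff]
      exact (hker J _).1 (connA_lin hfh _ u hu hh)
end
end

section
/- Assume m ≥ n+1 and that f_1,…,f_m satisfy the SNC hypothesis. Then the kernel of the R-linear map R^{m+n−1} → R^m given by v ↦ Q_{∖1}·v is generated as an R-module by the circuit vectors c_T, where T ranges over all (m+1)-element subsets of the column index set {1,…,m+n−1}. (Each c_T lies in the kernel by Laplace expansion; the content is that together they generate it.) -/
open MvPolynomial

noncomputable section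

/-- Linear order on the columns of `Q_{∖1}`: diagonal columns first, then Jacobian columns. -/
def colIdx (n m : ℕ) : Col n m → ℕ :=
  Sum.elim (fun k => ((k : Fin m) : ℕ)) (fun j => m + (j : ℕ))

instance (n m : ℕ) : LinearOrder (Col n m) :=
  LinearOrder.lift' (colIdx n m) (by
    rintro (⟨k, hk⟩ | j) (⟨k', hk'⟩ | j') h <;>
      simp only [colIdx, Sum.elim_inl, Sum.elim_inr] at h
    · exact congrArg Sum.inl (Subtype.ext (Fin.val_injective h))
    · exact absurd h (by have := k.isLt; omega)
    · exact absurd h (by have := k'.isLt; omega)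
    · exact congrArg Sum.inr (Fin.val_injective (by omega)))

/-- The circuit vector `c_T` attached to an `(m+1)`-element subset `T` of the columns of
`Q_{∖1}`: its entry at the `k`-th smallest element `t_k` of `T` is
`(−1)^k · det(Q_{∖1}[T ∖ {t_k}])` (the columns of `T ∖ {t_k}` taken in increasing order,
via `k.succAbove`), and it vanishes outside `T`. -/
def circuit (n m : ℕ) (f : Fin m → Rp n) (T : Finset (Col n m)) (hT : T.card = m + 1) :
    Col n m → Rp n := fun c =>
  ∑ k : Fin (m + 1),
    if c = T.orderEmbOfFin hT k then
      (-1 : Rp n) ^ (k : ℕ) *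
        ((Q1 n m f).submatrix id fun l : Fin m => T.orderEmbOfFin hT (k.succAbove l)).det
    else 0

open scoped Pointwise

theorem acyc {R : Type*} [CommRing R] (as : List R) : ∀ (C : ℕ → Type*) [∀ k, AddCommGroup (C k)]
    [∀ k, Module R (C k)] (d : ∀ k, C (k+1) →ₗ[R] C k) (_ : ∀ k u, d k (d (k+1) u) = 0)
    (_ : ∀ k, as.length < k → Subsingleton (C k))
    (_ : ∀ k, RingTheory.Sequence.IsWeaklyRegular (C k) as)
    (_ : ∀ a ∈ as, ∀ k, ∃ N : ℕ, ∀ u : C (k+1), d k u = 0 → ∃ w, d (k+1) w = a ^ N • u),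
    ∀ k (u : C (k+1)), d k u = 0 → ∃ w, d (k+1) w = u := by
  induction as with
  | nil =>
    intro C _ _ d hdd hC _ _ k u _
    have := hC (k+1) (by simp)
    exact ⟨0, Subsingleton.elim _ _⟩
  | cons a as ih =>
    intro C _ _ d hdd hC hreg hkill
    have hreg1 : ∀ k, IsSMulRegular (C k) a := fun k =>
      ((RingTheory.Sequence.isWeaklyRegular_cons_iff _ _ _).1 (hreg k)).1
    have hreg2 : ∀ k, RingTheory.Sequence.IsWeaklyRegular (QuotSMulTop a (C k)) as := fun k =>
      ((RingTheory.Sequence.isWeaklyRegular_cons_iff _ _ _).1 (hreg k)).2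
    let C' : ℕ → Type _ := fun k => QuotSMulTop a (C (k+1))
    let d' : ∀ k, C' (k+1) →ₗ[R] C' k := fun k => QuotSMulTop.map a (d (k+1))
    have hd' : ∀ k (x : C (k+2)), d' k (Submodule.Quotient.mk x) = Submodule.Quotient.mk (d (k+1) x) :=
      fun k x => rfl
    have hmk0 : ∀ k (x : C k), (Submodule.Quotient.mk x : QuotSMulTop a (C k)) = 0 ↔
        ∃ y, a • y = x := by
      intro k x
      rw [Submodule.Quotient.mk_eq_zero, Submodule.mem_smul_pointwise_iff_exists]
      simp
    have hmkeq : ∀ k (x z : C k), (Submodule.Quotient.mk x : QuotSMulTop a (C k)) =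
        Submodule.Quotient.mk z ↔ ∃ y, a • y = x - z := by
      intro k x z
      rw [← hmk0, Submodule.Quotient.mk_sub, sub_eq_zero]
    have key := ih C' d' ?_ ?_ (fun k => hreg2 (k+1)) ?_
    · have inj : ∀ k (u : C (k+1)), d k u = 0 → (∃ w, d (k+1) w = a • u) → ∃ w, d (k+1) w = u := by
        rintro k u hu ⟨w, hw⟩
        obtain ⟨w', hw'⟩ := key k (Submodule.Quotient.mk w)
          (by rw [hd', hmk0]; exact ⟨u, hw.symm⟩)
        obtain ⟨w', rfl⟩ := Submodule.Quotient.mk_surjective _ w'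
        rw [hd', hmkeq] at hw'
        obtain ⟨y, hy⟩ := hw'
        refine ⟨-y, hreg1 _ ?_⟩
        have := congrArg (d (k+1)) hy
        rw [map_sub, hdd, hw, map_smul] at this
        simp only [map_neg, smul_neg, this]
        simp
      intro k u hu
      obtain ⟨N, hN⟩ := hkill a (by simp) k
      replace hN := hN u hu
      induction N with
      | zero => simpa using hN
      | succ N ihN =>
        apply ihN
        apply inj
        · simp [hu]
        · simpa [pow_succ', mul_smul] using hN
    · intro k u
      obtain ⟨u, rfl⟩ := Submodule.Quotient.mk_surjective _ u
      rw [hd', hd', hdd]; rfl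
    · intro k hk
      have := hC (k+1) (by simpa using hk)
      exact (Submodule.Quotient.mk_surjective _).subsingleton
    · intro b hb k
      obtain ⟨N, hN⟩ := hkill b (by simp [hb]) k
      obtain ⟨N', hN'⟩ := hkill b (by simp [hb]) (k+1)
      refine ⟨N + N', fun u hu => ?_⟩
      obtain ⟨u, rfl⟩ := Submodule.Quotient.mk_surjective _ u
      rw [hd', hmk0] at hu
      obtain ⟨x, hx⟩ := hu
      have hdx : d k x = 0 := by
        apply hreg1
        simp only [smul_zero]
        rw [← map_smul, hx, hdd]
      obtain ⟨w, hw⟩ := hN x hdx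
      obtain ⟨w', hw'⟩ := hN' (b ^ N • u - a • w) (by
        rw [map_sub, map_smul, map_smul, hw, ← hx, smul_comm, sub_self])
      refine ⟨Submodule.Quotient.mk w', ?_⟩
      rw [hd', hw', ← Submodule.Quotient.mk_smul, hmkeq]
      refine ⟨-(b ^ N' • w), ?_⟩
      rw [smul_sub, smul_smul, ← pow_add, add_comm N' N, smul_comm _ a w]
      simp

theorem wreg_pi {R : Type*} [CommRing R] {ι : Type*} (as : List R) :
    ∀ (M : Type*) [AddCommGroup M] [Module R M], RingTheory.Sequence.IsWeaklyRegular M as →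
      RingTheory.Sequence.IsWeaklyRegular (ι → M) as := by
  induction as with
  | nil => intro M _ _ _; exact RingTheory.Sequence.IsWeaklyRegular.nil _ _
  | cons a as ih =>
    intro M _ _ h
    rw [RingTheory.Sequence.isWeaklyRegular_cons_iff] at h ⊢
    refine ⟨fun x y hxy => funext fun i => h.1 (congrFun hxy i), ?_⟩
    have h2 := ih _ h.2
    let g : (ι → M) →ₗ[R] (ι → QuotSMulTop a M) :=
      LinearMap.pi fun i => (Submodule.mkQ _).comp (LinearMap.proj i)
    have hg : Function.Surjective g := by
      intro y
      choose x hx using fun i => Submodule.Quotient.mk_surjective _ (y i)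
      exact ⟨x, funext hx⟩
    have hk : LinearMap.ker g = a • (⊤ : Submodule R (ι → M)) := by
      ext x
      rw [LinearMap.mem_ker, Submodule.mem_smul_pointwise_iff_exists]
      constructor
      · intro hx
        have : ∀ i, ∃ y, a • y = x i := by
          intro i
          have h3 : (Submodule.Quotient.mk (x i) : QuotSMulTop a M) = 0 := congrFun hx i
          rw [Submodule.Quotient.mk_eq_zero, Submodule.mem_smul_pointwise_iff_exists] at h3
          obtain ⟨y, _, hy⟩ := h3
          exact ⟨y, hy⟩
        choose y hy using this
        exact ⟨y, trivial, funext hy⟩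
      · rintro ⟨y, _, rfl⟩
        funext i
        change (Submodule.Quotient.mk (a • y i) : QuotSMulTop a M) = 0
        rw [Submodule.Quotient.mk_eq_zero, Submodule.mem_smul_pointwise_iff_exists]
        exact ⟨y i, trivial, rfl⟩
    have e : QuotSMulTop a (ι → M) ≃ₗ[R] (ι → QuotSMulTop a M) :=
      (Submodule.quotEquivOfEq _ _ hk.symm).trans (g.quotKerEquivOfSurjective hg)
    exact (e.isWeaklyRegular_congr as).2 h2

open MvPolynomial in
theorem wreg_X (n : ℕ) : RingTheory.Sequence.IsWeaklyRegular (MvPolynomial (Fin n) ℂ)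
    (List.ofFn (fun i : Fin n => (X i : MvPolynomial (Fin n) ℂ))) := by
  rw [RingTheory.Sequence.isWeaklyRegular_iff_Fin]
  intro i
  have hi : (i : ℕ) < n := by simpa using i.2
  have hI : Ideal.ofList ((List.ofFn (fun i : Fin n => (X i : MvPolynomial (Fin n) ℂ))).take i) =
      Ideal.span (X '' {j : Fin n | (j : ℕ) < i}) := by
    unfold Ideal.ofList
    congr 1
    ext r
    simp only [Set.mem_ofPred_eq, Set.mem_image, List.mem_take_iff_getElem, List.getElem_ofFn]
    constructor
    · rintro ⟨j, hj, rfl⟩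
      simp only [List.length_ofFn] at hj
      exact ⟨⟨j, by omega⟩, by simp; omega, rfl⟩
    · rintro ⟨j, hj, rfl⟩
      exact ⟨j, by simp; omega, rfl⟩
  rw [isSMulRegular_quotient_iff_mem_of_smul_mem]
  intro p hp
  simp only [smul_eq_mul, Ideal.mul_top, hI, mem_ideal_span_X_image] at hp ⊢
  intro s hs
  have hget : (List.ofFn (fun i : Fin n => (X i : MvPolynomial (Fin n) ℂ)))[i] = X ⟨i, hi⟩ := by
    simp
  rw [hget] at hp
  obtain ⟨j, hj, hj'⟩ := hp (Finsupp.single ⟨i, hi⟩ 1 + s) (by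
    rw [mem_support_iff, coeff_X_mul]; exact mem_support_iff.1 hs)
  refine ⟨j, hj, ?_⟩
  have : (⟨i, hi⟩ : Fin n) ≠ j := by
    rintro rfl
    simp at hj
  simpa [Finsupp.single_apply, this] using hj'

section Fermion
variable {R : Type*} [CommRing R] {κ : Type*} [LinearOrder κ] [Fintype κ]

/-- sign of inserting `j` into `S` -/
def fsgn (R : Type*) [CommRing R] {κ : Type*} [LinearOrder κ] (j : κ) (S : Finset κ) : R :=
  ∏ t ∈ S, if t < j then -1 else 1

/-- contraction with a functional `g` -/
def fcon (g : κ → R) : Module.End R (Finset κ → R) where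
  toFun u := fun S => ∑ j, if j ∈ S then 0 else g j * (fsgn R j S * u (insert j S))
  map_add' u v := by
    funext S
    simp only [Pi.add_apply, ← Finset.sum_add_distrib]
    refine Finset.sum_congr rfl fun j _ => ?_
    split_ifs <;> ring
  map_smul' r u := by
    funext S
    simp only [Pi.smul_apply, smul_eq_mul, Finset.mul_sum, RingHom.id_apply]
    refine Finset.sum_congr rfl fun j _ => ?_
    split_ifs <;> ring

/-- wedge with a vector `w` -/
def fwed (w : κ → R) : Module.End R (Finset κ → R) where
  toFun u := fun S => ∑ j, if j ∈ S then w j * (fsgn R j S * u (S.erase j)) else 0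
  map_add' u v := by
    funext S
    simp only [Pi.add_apply, ← Finset.sum_add_distrib]
    refine Finset.sum_congr rfl fun j _ => ?_
    split_ifs <;> ring
  map_smul' r u := by
    funext S
    simp only [Pi.smul_apply, smul_eq_mul, Finset.mul_sum, RingHom.id_apply]
    refine Finset.sum_congr rfl fun j _ => ?_
    split_ifs <;> ring

theorem fsgn_insert (j k : κ) (S : Finset κ) (hk : k ∉ S) :
    fsgn R j (insert k S) = (if k < j then -1 else 1) * fsgn R j S := by
  simp [fsgn, Finset.prod_insert hk]

theorem fsgn_erase (j k : κ) (S : Finset κ) (hk : k ∈ S) :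
    fsgn R j S = (if k < j then -1 else 1) * fsgn R j (S.erase k) := by
  simp only [fsgn]
  exact (Finset.mul_prod_erase S _ hk).symm

theorem fsgn_sq (j : κ) (S : Finset κ) : fsgn R j S * fsgn R j S = 1 := by
  rw [fsgn, ← Finset.prod_mul_distrib]
  refine Finset.prod_eq_one fun t _ => ?_
  split_ifs <;> simp

theorem fcon_fcon (g h : κ → R) (u : Finset κ → R) :
    fcon g (fcon h u) = - fcon h (fcon g u) := by
  funext S
  simp only [fcon, LinearMap.coe_mk, AddHom.coe_mk, Pi.neg_apply]
  rw [← add_eq_zero_iff_eq_neg]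
  have key : ∀ (g h : κ → R), (∑ j, if j ∈ S then 0 else
      g j * (fsgn R j S * ∑ k, if k ∈ insert j S then 0 else
        h k * (fsgn R k (insert j S) * u (insert k (insert j S))))) =
      ∑ j, ∑ k, if j ∈ S ∨ k ∈ S ∨ j = k then 0 else
        g j * h k * (if j < k then -1 else 1) * (fsgn R j S * fsgn R k S * u (insert k (insert j S))) := by
    intro g h
    refine Finset.sum_congr rfl fun j _ => ?_
    by_cases hj : j ∈ S
    · simp [hj]
    · simp only [hj, if_false, Finset.mul_sum, false_or]
      refine Finset.sum_congr rfl fun k _ => ?_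
      by_cases hk : k ∈ S
      · simp [hk]
      · by_cases hjk : j = k
        · simp [hjk]
        · rw [if_neg (by simp [hk, Ne.symm hjk]), if_neg (by simp [hk, hjk]), fsgn_insert _ _ _ hj]
          ring
  rw [key, key, Finset.sum_comm, ← Finset.sum_add_distrib]
  refine Finset.sum_eq_zero fun k _ => ?_
  rw [← Finset.sum_add_distrib]
  refine Finset.sum_eq_zero fun j _ => ?_
  by_cases hc : j ∈ S ∨ k ∈ S ∨ j = k
  · rw [if_pos hc, if_pos (by tauto), add_zero]
  · have hjk : j ≠ k := by tauto
    have hc' : ¬(k ∈ S ∨ j ∈ S ∨ k = j) := by tauto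
    rw [if_neg hc, if_neg hc', Finset.insert_comm j k]
    rcases lt_or_gt_of_ne hjk with h1 | h1
    · rw [if_pos h1, if_neg h1.not_gt]; ring
    · rw [if_pos h1, if_neg h1.not_gt]; ring

theorem fcon_fwed (g w : κ → R) (u : Finset κ → R) :
    fcon g (fwed w u) + fwed w (fcon g u) = (∑ j, g j * w j) • u := by
  funext S
  simp only [fcon, fwed, LinearMap.coe_mk, AddHom.coe_mk, Pi.add_apply, Pi.smul_apply, smul_eq_mul,
    Finset.mul_sum, Finset.sum_mul]
  have e1 : (∑ j, if j ∈ S then 0 else ∑ k, g j * (fsgn R j S * (if k ∈ insert j S then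
      w k * (fsgn R k (insert j S) * u ((insert j S).erase k)) else 0))) =
      ∑ j, ∑ k, ((if j ∉ S ∧ k = j then g j * w j * u S else 0) +
        if j ∉ S ∧ k ∈ S then g j * w k * (if j < k then -1 else 1) *
          (fsgn R j S * fsgn R k S * u ((insert j S).erase k)) else 0) := by
    refine Finset.sum_congr rfl fun j _ => ?_
    by_cases hj : j ∈ S
    · simp [hj]
    · rw [if_neg hj]
      refine Finset.sum_congr rfl fun k _ => ?_
      by_cases hjk : k = j
      · subst hjk
        simp only [Finset.mem_insert_self, if_true, hj, not_false_eq_true, true_and, if_false,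
          Finset.erase_insert hj, fsgn_insert _ _ _ hj, lt_irrefl]
        linear_combination (g k * w k * u S) * fsgn_sq (R := R) k S
      · by_cases hk : k ∈ S
        · simp only [Finset.mem_insert, hk, hj, hjk, or_true, if_true, not_false_eq_true, true_and,
            if_false, fsgn_insert _ _ _ hj]
          ring
        · simp [hk, hjk]
  have e2 : (∑ k, if k ∈ S then w k * (fsgn R k S * ∑ j, if j ∈ S.erase k then 0 else
      g j * (fsgn R j (S.erase k) * u (insert j (S.erase k)))) else 0) =
      ∑ k, ∑ j, ((if j ∈ S ∧ k = j then g j * w j * u S else 0) -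
        if j ∉ S ∧ k ∈ S then g j * w k * (if j < k then -1 else 1) *
          (fsgn R j S * fsgn R k S * u ((insert j S).erase k)) else 0) := by
    refine Finset.sum_congr rfl fun k _ => ?_
    by_cases hk : k ∈ S
    · rw [if_pos hk, Finset.mul_sum, Finset.mul_sum]
      refine Finset.sum_congr rfl fun j _ => ?_
      by_cases hjk : k = j
      · subst hjk
        have := fsgn_erase (R := R) k k S hk
        simp only [lt_irrefl, if_false, one_mul] at this
        simp only [Finset.mem_erase, ne_eq, not_true, if_false, ← this, hk,
          Finset.insert_erase hk, and_self, if_true, and_true]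
        linear_combination (g k * w k * u S) * fsgn_sq (R := R) k S
      · by_cases hj : j ∈ S
        · simp [hj, hjk, Ne.symm hjk]
        · have h3 := fsgn_erase (R := R) j k S hk
          have h4 : insert j (S.erase k) = (insert j S).erase k := by
            rw [Finset.erase_insert_of_ne (Ne.symm hjk)]
          rw [if_neg (by simp [hj]), if_neg (by simp [hj]), if_pos ⟨hj, hk⟩, h3, h4]
          rcases lt_or_gt_of_ne hjk with h1 | h1
          · rw [if_pos h1, if_neg h1.not_gt]; ring
          · rw [if_pos h1, if_neg h1.not_gt]; ring
    · rw [if_neg hk]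
      symm
      refine Finset.sum_eq_zero fun j _ => ?_
      by_cases hjk : k = j
      · subst hjk; simp [hk]
      · simp [hk, hjk]
  have e2' := e2
  simp only [Finset.mul_sum] at e2'
  rw [e1, e2', Finset.sum_comm (γ := κ) (s := Finset.univ) (t := Finset.univ)
    (f := fun k j => _ - _), ← Finset.sum_add_distrib]
  refine Finset.sum_congr rfl fun j _ => ?_
  rw [← Finset.sum_add_distrib]
  rw [Finset.sum_eq_single j]
  · by_cases hj : j ∈ S <;> simp [hj]
  · intro k _ hk
    simp [hk]
  · simp

/-- full contraction -/
def fdet : ∀ (k : ℕ) (_ : Fin k → κ → R), (Finset κ → R) →ₗ[R] R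
  | 0, _ => LinearMap.proj ∅
  | k+1, g => (fdet k (fun i => g i.succ)).comp (fcon (g 0))

theorem fcon_single (g : κ → R) (k : ℕ) (T : Finset κ) (hT : T.card = k + 1) :
    fcon g (Pi.single T 1) = ∑ i : Fin (k+1), ((-1) ^ (i : ℕ) * g (T.orderEmbOfFin hT i)) •
      (Pi.single (T.erase (T.orderEmbOfFin hT i)) 1 : Finset κ → R) := by
  have hs : ∀ i : Fin (k+1), fsgn R (T.orderEmbOfFin hT i) T = (-1) ^ (i : ℕ) := by
    intro i
    have : T = Finset.univ.map (T.orderEmbOfFin hT).toEmbedding := by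
      ext x
      have := Finset.range_orderEmbOfFin T hT
      rw [← Finset.mem_coe, ← this]; simp
    generalize hx : T.orderEmbOfFin hT i = x
    rw [fsgn, this]
    subst hx
    rw [Finset.prod_map, Finset.prod_ite]
    have hI : (Finset.univ.filter fun x : Fin (k+1) => x < i) = Finset.Iio i := by
      ext; simp
    simp [hI]
  funext S
  rw [Finset.sum_apply]
  have h1 : fcon g (Pi.single T 1) S = ∑ j ∈ T, (fsgn R j T * g j) *
      (Pi.single (T.erase j) 1 : Finset κ → R) S := by
    simp only [fcon, LinearMap.coe_mk, AddHom.coe_mk]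
    rw [← Finset.sum_subset (Finset.subset_univ T)]
    · refine Finset.sum_congr rfl fun j hj => ?_
      by_cases hS : j ∈ S
      · rw [if_pos hS, Pi.single_eq_of_ne, mul_zero]
        rintro rfl; simp at hS
      · rw [if_neg hS]
        by_cases hST : S = T.erase j
        · subst hST
          have := fsgn_erase (R := R) j j T hj
          simp only [lt_irrefl, if_false, one_mul] at this
          rw [this, Finset.insert_erase hj]; simp; ring
        · rw [Pi.single_eq_of_ne hST, Pi.single_eq_of_ne]
          · simp
          · rintro rfl
            exact hST (Finset.erase_insert hS).symm
    · intro j _ hj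
      split_ifs with h
      · rfl
      · rw [Pi.single_eq_of_ne]
        · simp
        · rintro rfl; simp at hj
  rw [h1]
  symm
  refine Finset.sum_bij (fun i _ => T.orderEmbOfFin hT i) (by simp) (by simp) ?_ ?_
  · intro b hb
    have := Finset.range_orderEmbOfFin T hT
    rw [← Finset.mem_coe, ← this] at hb
    obtain ⟨i, hi⟩ := hb
    exact ⟨i, Finset.mem_univ _, hi⟩
  · intro i _
    rw [hs]; rfl

theorem fdet_single : ∀ (k : ℕ) (g : Fin k → κ → R) (T : Finset κ) (hT : T.card = k),
    fdet k g (Pi.single T 1) = (Matrix.of fun i j => g i (T.orderEmbOfFin hT j)).det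
  | 0, g, T, hT => by
    rw [Finset.card_eq_zero] at hT
    subst hT
    simp [fdet]
  | k+1, g, T, hT => by
    rw [fdet, LinearMap.comp_apply, fcon_single _ _ _ hT, map_sum, Matrix.det_succ_row_zero]
    refine Finset.sum_congr rfl fun i _ => ?_
    have hc : (T.erase (T.orderEmbOfFin hT i)).card = k := by
      rw [Finset.card_erase_of_mem (Finset.orderEmbOfFin_mem _ _ _), hT]; rfl
    rw [map_smul, fdet_single k _ _ hc, smul_eq_mul]
    congr 1
    have := Finset.orderEmbOfFin_unique hc (f := fun l => T.orderEmbOfFin hT (i.succAbove l))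
      (by intro l; simp [Fin.succAbove_ne])
      ((T.orderEmbOfFin hT).strictMono.comp (Fin.strictMono_succAbove i))
    rw [← this]
    rfl
end Fermion

section Cplx
variable {R : Type*} [CommRing R] [IsDomain R] [CharZero R] {κ : Type} [LinearOrder κ] [Fintype κ]
  {m : ℕ}

/-- iterated contraction, head applied first -/
def fit : List (κ → R) → Module.End R (Finset κ → R)
  | [] => LinearMap.id
  | g :: l => (fit l).comp (fcon g)

theorem fdet_eq : ∀ (k : ℕ) (g : Fin k → κ → R) (u : Finset κ → R),
    fdet k g u = fit (List.ofFn g) u ∅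
  | 0, g, u => by simp [fdet, fit]
  | k+1, g, u => by
    rw [fdet, List.ofFn_succ, fit, LinearMap.comp_apply, LinearMap.comp_apply, fdet_eq]

theorem fcon_self (g : κ → R) (u : Finset κ → R) : fcon g (fcon g u) = 0 := by
  have h := fcon_fcon g g u
  funext S
  exact self_eq_neg.1 (congrFun h S)

theorem fit_fcon (l : List (κ → R)) (h : κ → R) : ∀ u : Finset κ → R,
    fit l (fcon h u) = (-1 : R) ^ l.length • fcon h (fit l u) := by
  induction l with
  | nil => intro u; simp [fit]
  | cons g l ih =>
    intro u
    simp only [fit, LinearMap.comp_apply]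
    rw [fcon_fcon, map_neg, ih]
    simp [pow_succ]

theorem fit_fcon_mem (l : List (κ → R)) (h : κ → R) (hl : h ∈ l) : ∀ u : Finset κ → R,
    fit l (fcon h u) = 0 := by
  induction l with
  | nil => simp at hl
  | cons g l ih =>
    intro u
    simp only [fit, LinearMap.comp_apply]
    rcases List.mem_cons.1 hl with rfl | hl
    · rw [fcon_self, map_zero]
    · rw [fcon_fcon, map_neg, ih hl, neg_zero]

theorem fcon_single_empty (c : κ) (u : Finset κ → R) :
    fcon (Pi.single c 1) u ∅ = u {c} := by
  simp only [fcon, LinearMap.coe_mk, AddHom.coe_mk]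
  rw [Finset.sum_eq_single c]
  · simp [fsgn]
  · intro b _ hb; simp [hb]
  · simp

/-- support in degree `p` -/
def FDeg (p : ℕ) (u : Finset κ → R) : Prop := ∀ S, S.card ≠ p → u S = 0

theorem FDeg.con {p : ℕ} {u : Finset κ → R} (hu : FDeg (p+1) u) (g : κ → R) :
    FDeg p (fcon g u) := by
  intro S hS
  simp only [fcon, LinearMap.coe_mk, AddHom.coe_mk]
  refine Finset.sum_eq_zero fun j _ => ?_
  split_ifs with h
  · rfl
  · rw [hu _ (by rw [Finset.card_insert_of_notMem h]; omega)]; simp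

theorem FDeg.wed {p : ℕ} {u : Finset κ → R} (hu : FDeg p u) (w : κ → R) :
    FDeg (p+1) (fwed w u) := by
  intro S hS
  simp only [fwed, LinearMap.coe_mk, AddHom.coe_mk]
  refine Finset.sum_eq_zero fun j _ => ?_
  split_ifs with h
  · have h1 := Finset.card_erase_of_mem h
    have h2 := Finset.card_pos.2 ⟨j, h⟩
    rw [hu _ (by omega)]; simp
  · rfl

/-- iterated wedge, head applied last -/
def wit : List (κ → R) → (Finset κ → R) → (Finset κ → R)
  | [], v => v
  | w :: l, v => fwed w (wit l v)

theorem wit_deg (l : List (κ → R)) {p : ℕ} {v : Finset κ → R} (hv : FDeg p v) :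
    FDeg (p + l.length) (wit l v) := by
  induction l with
  | nil => exact hv
  | cons w l ih => exact ih.wed w

theorem fcon_wit (l : List (κ → R)) (g : κ → R) (hl : ∀ w ∈ l, ∑ j, g j * w j = 0)
    (v : Finset κ → R) (hv : fcon g v = 0) : fcon g (wit l v) = 0 := by
  induction l with
  | nil => exact hv
  | cons w l ih =>
    have h1 := fcon_fwed g w (wit l v)
    rw [hl w (by simp), ih (fun w hw => hl w (by simp [hw])), map_zero, add_zero, zero_smul] at h1
    exact h1

theorem fit_wit (Q : Fin m → κ → R) (w : Fin m → κ → R) (δ : R)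
    (hw : ∀ i j, ∑ c, Q i c * w j c = if i = j then δ else 0)
    (v : Finset κ → R) (hv : ∀ i, fcon (Q i) v = 0) (l : List (Fin m)) (hl : l.Nodup) :
    fit (l.map Q) (wit (l.map w) v) = δ ^ l.length • v := by
  induction l with
  | nil => simp [fit, wit]
  | cons i l ih =>
    rw [List.nodup_cons] at hl
    simp only [List.map_cons, fit, wit, LinearMap.comp_apply]
    have h1 := fcon_fwed (Q i) (w i) (wit (l.map w) v)
    rw [hw, if_pos rfl, fcon_wit (l.map w) (Q i) ?_ v (hv i), map_zero, add_zero] at h1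
    · rw [h1, map_smul, ih hl.2, smul_smul, List.length_cons, pow_succ']
    · intro x hx
      obtain ⟨j, hj, rfl⟩ := List.mem_map.1 hx
      rw [hw, if_neg]
      rintro rfl; exact hl.1 hj

/-- iterated `ε_i φ_i` -/
def eit (Q w : Fin m → κ → R) : List (Fin m) → (Finset κ → R) → (Finset κ → R)
  | [], x => x
  | i :: l, x => fwed (w i) (fcon (Q i) (eit Q w l x))

theorem eit_zero (Q w : Fin m → κ → R) (l : List (Fin m)) : eit Q w l 0 = 0 := by
  induction l with
  | nil => rfl
  | cons i l ih => simp [eit, ih]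

theorem fcon_eit (Q w : Fin m → κ → R) (δ : R)
    (hw : ∀ i j, ∑ c, Q i c * w j c = if i = j then δ else 0) (i : Fin m) (l : List (Fin m))
    (hi : i ∉ l) (x : Finset κ → R) : fcon (Q i) (eit Q w l x) = eit Q w l (fcon (Q i) x) := by
  induction l with
  | nil => rfl
  | cons j l ih =>
    simp only [List.mem_cons, not_or] at hi
    simp only [eit]
    have h1 := fcon_fwed (Q i) (w j) (fcon (Q j) (eit Q w l x))
    rw [hw, if_neg hi.1, zero_smul, fcon_fcon, map_neg, ih hi.2] at h1
    rw [← sub_eq_zero, sub_eq_add_neg]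
    exact h1

theorem eit_eq_zero (Q w : Fin m → κ → R) (δ : R)
    (hw : ∀ i j, ∑ c, Q i c * w j c = if i = j then δ else 0) (l : List (Fin m)) (hl : l.Nodup) :
    ∀ x : Finset κ → R, fit (l.map Q) x = 0 → eit Q w l x = 0 := by
  induction l with
  | nil => intro x hx; exact hx
  | cons i l ih =>
    intro x hx
    rw [List.nodup_cons] at hl
    rw [eit, fcon_eit Q w δ hw i l hl.1, ih hl.2 _ hx, map_zero]

/-- Koszul-type differential -/
def kd (Q : Fin m → κ → R) : Module.End R ((Fin m → ℕ) → Finset κ → R) where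
  toFun u := fun α => ∑ i, fcon (Q i) (u (α + Pi.single i 1))
  map_add' u v := by
    funext α
    simp [Finset.sum_add_distrib]
  map_smul' r u := by
    funext α
    simp [Finset.smul_sum]

theorem kd_apply (Q : Fin m → κ → R) (u : (Fin m → ℕ) → Finset κ → R) (α : Fin m → ℕ) :
    kd Q u α = ∑ i, fcon (Q i) (u (α + Pi.single i 1)) := rfl

theorem kd_kd (Q : Fin m → κ → R) (u : (Fin m → ℕ) → Finset κ → R) : kd Q (kd Q u) = 0 := by
  funext α S
  simp only [kd_apply, map_sum]
  refine self_eq_neg.1 ?_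
  conv_rhs => rw [Finset.sum_comm]
  simp only [Finset.sum_apply, ← Finset.sum_neg_distrib]
  refine Finset.sum_congr rfl fun i _ => Finset.sum_congr rfl fun j _ => ?_
  rw [fcon_fcon, add_right_comm]
  rfl

/-- homotopy -/
def kh (w : Fin m → κ → R) (i : Fin m) (u : (Fin m → ℕ) → Finset κ → R) :
    (Fin m → ℕ) → Finset κ → R :=
  fun α => if α i = 0 then 0 else fwed (w i) (u (α - Pi.single i 1))

/-- residual -/
def kq (Q w : Fin m → κ → R) (i : Fin m) (u : (Fin m → ℕ) → Finset κ → R) :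
    (Fin m → ℕ) → Finset κ → R :=
  fun α => if α i = 0 then fwed (w i) (fcon (Q i) (u α)) else 0

theorem kd_kh (Q w : Fin m → κ → R) (δ : R)
    (hw : ∀ i j, ∑ c, Q i c * w j c = if i = j then δ else 0) (i : Fin m)
    (u : (Fin m → ℕ) → Finset κ → R) :
    kd Q (kh w i u) + kh w i (kd Q u) = δ • u - kq Q w i u := by
  funext α
  simp only [Pi.add_apply, Pi.sub_apply, Pi.smul_apply, kd_apply]
  have hdiag := fcon_fwed (Q i) (w i) (u α)
  rw [hw, if_pos rfl] at hdiag
  have hii : kh w i u (α + Pi.single i 1) = fwed (w i) (u α) := by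
    simp [kh]
  by_cases hα : α i = 0
  · rw [Finset.sum_eq_single i]
    · rw [hii]
      simp only [kh, kq, hα, if_true]
      rw [← hdiag]; abel
    · intro j _ hj
      simp [kh, hα, Pi.single_apply, Ne.symm hj]
    · simp
  · have h1 : kh w i (kd Q u) α = ∑ j, fwed (w i) (fcon (Q j) (u (α - Pi.single i 1 + Pi.single j 1))) := by
      simp [kh, hα, kd_apply]
    have hcancel : α - Pi.single i 1 + Pi.single i 1 = α := by
      funext j
      by_cases hj : j = i
      · subst hj; simp; omega
      · simp [hj]
    rw [h1, ← Finset.sum_add_distrib, Finset.sum_eq_single i]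
    · rw [hii, hcancel, hdiag]
      simp [kq, hα]
    · intro j _ hj
      have h2 := fcon_fwed (Q j) (w i) (u (α - Pi.single i 1 + Pi.single j 1))
      rw [hw, if_neg hj, zero_smul] at h2
      have h3 : α + Pi.single j 1 - Pi.single i 1 = α - Pi.single i 1 + Pi.single j 1 := by
        funext k
        by_cases hk : k = i
        · subst hk; simp [Ne.symm hj]
        · simp [hk]
      have h4 : kh w i u (α + Pi.single j 1) = fwed (w i) (u (α - Pi.single i 1 + Pi.single j 1)) := by
        simp [kh, hα, h3]
      rw [h4, h2]
    · simp

/-- bihomogeneous -/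
def KHom (a p : ℕ) (u : (Fin m → ℕ) → Finset κ → R) : Prop :=
  ∀ α S, ¬ (∑ i, α i = a ∧ S.card = p) → u α S = 0

theorem KHom.deg {a p : ℕ} {u : (Fin m → ℕ) → Finset κ → R} (hu : KHom a p u) (α : Fin m → ℕ) :
    FDeg p (u α) := fun S hS => hu α S (fun h => hS h.2)

theorem KHom.zero {a p : ℕ} {u : (Fin m → ℕ) → Finset κ → R} (hu : KHom a p u) {α : Fin m → ℕ}
    (hα : ∑ i, α i ≠ a) : u α = 0 := funext fun S => hu α S (fun h => hα h.1)

theorem KHom.mk' {a p : ℕ} {u : (Fin m → ℕ) → Finset κ → R} (h1 : ∀ α, FDeg p (u α))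
    (h2 : ∀ α, ∑ i, α i ≠ a → u α = 0) : KHom a p u := by
  intro α S h
  by_cases ha : ∑ i, α i = a
  · exact h1 α S (fun hp => h ⟨ha, hp⟩)
  · rw [h2 α ha]; rfl

theorem FDeg.zero (p : ℕ) : FDeg p (0 : Finset κ → R) := fun _ _ => rfl

theorem FDeg.sum {ι : Type*} (s : Finset ι) (p : ℕ) (f : ι → Finset κ → R)
    (h : ∀ i, FDeg p (f i)) : FDeg p (∑ i ∈ s, f i) := by
  intro S hS
  rw [Finset.sum_apply]
  exact Finset.sum_eq_zero fun i _ => h i S hS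

theorem sum_add_single (α : Fin m → ℕ) (i : Fin m) :
    ∑ j, (α + Pi.single i 1 : Fin m → ℕ) j = ∑ j, α j + 1 := by
  simp [Finset.sum_add_distrib]

theorem sum_sub_single (α : Fin m → ℕ) (i : Fin m) (hi : α i ≠ 0) :
    ∑ j, (α - Pi.single i 1 : Fin m → ℕ) j + 1 = ∑ j, α j := by
  rw [← sum_add_single _ i]
  refine Finset.sum_congr rfl fun j _ => ?_
  by_cases hj : j = i
  · subst hj; simp; omega
  · simp [hj]

theorem KHom.kd {a p : ℕ} {u : (Fin m → ℕ) → Finset κ → R} (hu : KHom (a+1) (p+1) u)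
    (Q : Fin m → κ → R) : KHom a p (kd Q u) := by
  refine KHom.mk' (fun α => ?_) fun α hα => ?_
  · rw [kd_apply]
    exact FDeg.sum _ _ _ fun i => (hu.deg _).con _
  rw [kd_apply]
  refine Finset.sum_eq_zero fun i _ => ?_
  rw [hu.zero, map_zero]
  rw [sum_add_single]; omega

theorem KHom.kh {a p : ℕ} {u : (Fin m → ℕ) → Finset κ → R} (hu : KHom a p u)
    (w : Fin m → κ → R) (i : Fin m) : KHom (a+1) (p+1) (kh w i u) := by
  refine KHom.mk' (fun α => ?_) fun α hα => ?_
  · simp only [_root_.kh]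
    split_ifs
    · exact FDeg.zero _
    · exact (hu.deg _).wed _
  · simp only [_root_.kh]
    split_ifs with h
    · rfl
    · have := sum_sub_single α i h
      rw [hu.zero, map_zero]
      omega

theorem KHom.kq {a p : ℕ} {u : (Fin m → ℕ) → Finset κ → R} (hu : KHom a (p+1) u)
    (Q w : Fin m → κ → R) (i : Fin m) : KHom a (p+1) (kq Q w i u) := by
  refine KHom.mk' (fun α => ?_) fun α hα => ?_
  · simp only [_root_.kq]
    split_ifs
    · exact ((hu.deg _).con _).wed _
    · exact FDeg.zero _
  · simp only [_root_.kq]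
    split_ifs with h
    · rw [hu.zero hα, map_zero, map_zero]
    · rfl

/-- iterated residual -/
def kqit (Q w : Fin m → κ → R) : List (Fin m) → ((Fin m → ℕ) → Finset κ → R) →
    ((Fin m → ℕ) → Finset κ → R)
  | [], u => u
  | i :: l, u => kq Q w i (kqit Q w l u)

theorem kqit_apply (Q w : Fin m → κ → R) (l : List (Fin m)) (u : (Fin m → ℕ) → Finset κ → R)
    (α : Fin m → ℕ) : kqit Q w l u α = if ∀ i ∈ l, α i = 0 then eit Q w l (u α) else 0 := by
  induction l with
  | nil => simp [kqit, eit]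
  | cons i l ih =>
    simp only [kqit, kq, ih, eit, List.forall_mem_cons]
    by_cases h1 : α i = 0
    · by_cases h2 : ∀ i ∈ l, α i = 0
      · rw [if_pos h1, if_pos h2, if_pos ⟨h1, h2⟩]
      · rw [if_pos h1, if_neg h2, if_neg (fun h => h2 h.2), map_zero, map_zero]
    · rw [if_neg h1, if_neg (fun h => h1 h.1)]

theorem kq_kill (Q w : Fin m → κ → R) (δ : R)
    (hw : ∀ i j, ∑ c, Q i c * w j c = if i = j then δ else 0) {a p : ℕ}
    (u : (Fin m → ℕ) → Finset κ → R) (hu : KHom a (p+1) u) (hdu : kd Q u = 0)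
    (l : List (Fin m)) :
    kd Q (kqit Q w l u) = 0 ∧ KHom a (p+1) (kqit Q w l u) ∧
    ∃ v, KHom (a+1) (p+2) v ∧ kd Q v = δ ^ l.length • u - kqit Q w l u := by
  induction l with
  | nil => exact ⟨hdu, hu, 0, fun _ _ _ => rfl, by simp [kqit]⟩
  | cons i l ih =>
    obtain ⟨h1, h2, v, hv, hv'⟩ := ih
    have h3 := kd_kh Q w δ hw i (kqit Q w l u)
    rw [h1] at h3
    have h0 : kh w i (0 : (Fin m → ℕ) → Finset κ → R) = 0 := by
      funext α; simp [kh]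
    rw [h0, add_zero] at h3
    refine ⟨?_, h2.kq Q w i, δ • v + kh w i (kqit Q w l u), ?_, ?_⟩
    · have h4 := congrArg (kd Q) h3
      rw [kd_kd, map_sub, map_smul, h1, smul_zero, zero_sub] at h4
      exact neg_eq_zero.1 h4.symm
    · intro α S h
      have e1 := hv α S h
      have e2 := h2.kh w i α S h
      simp [e1, e2]
    · rw [map_add, map_smul, hv', h3, kqit, List.length_cons, pow_succ', mul_smul, smul_sub]
      abel

/-- the circuit map -/
def gam (Q : Fin m → κ → R) : (Finset κ → R) →ₗ[R] (κ → R) :=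
  LinearMap.pi fun c => fdet (m+1) (Fin.cons (Pi.single c 1) Q)

theorem gam_apply (Q : Fin m → κ → R) (u : Finset κ → R) (c : κ) :
    gam Q u c = (-1) ^ m * fit (List.ofFn Q) u {c} := by
  change fdet (m+1) (Fin.cons (Pi.single c 1) Q) u = _
  rw [fdet_eq, List.ofFn_succ, fit, LinearMap.comp_apply]
  simp only [Fin.cons_zero, Fin.cons_succ]
  rw [fit_fcon, List.length_ofFn, Pi.smul_apply, fcon_single_empty, smul_eq_mul]

theorem fcon_empty (g : κ → R) (u : Finset κ → R) : fcon g u ∅ = ∑ c, g c * u {c} := by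
  simp [fcon, fsgn]

theorem Q_gam (Q : Fin m → κ → R) (u : Finset κ → R) (i : Fin m) :
    ∑ c, Q i c * gam Q u c = 0 := by
  have h : fit (List.ofFn Q) (fcon (Q i) u) ∅ = 0 := by
    rw [fit_fcon_mem]
    · rfl
    · simp
  rw [fit_fcon, Pi.smul_apply, fcon_empty, List.length_ofFn, smul_eq_mul, Finset.mul_sum] at h
  rw [← h]
  refine Finset.sum_congr rfl fun c _ => ?_
  rw [gam_apply]; ring

theorem fit_deg (l : List (κ → R)) {p : ℕ} : ∀ {v : Finset κ → R}, FDeg (p + l.length) v →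
    FDeg p (fit l v) := by
  induction l with
  | nil => intro v hv; exact hv
  | cons w l ih => intro v hv; exact ih (FDeg.con hv w)

theorem gam_eq_zero (Q : Fin m → κ → R) (u : Finset κ → R) (hu : FDeg (m+1) u)
    (h : gam Q u = 0) : fit (List.ofFn Q) u = 0 := by
  funext S
  by_cases hS : S.card = 1
  · obtain ⟨c, rfl⟩ := Finset.card_eq_one.1 hS
    have := congrFun h c
    rw [gam_apply] at this
    simpa using this
  · refine fit_deg (p := 1) (List.ofFn Q) (by rwa [List.length_ofFn, add_comm]) S hS

theorem gam_surj (Q w : Fin m → κ → R) (δ : R)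
    (hw : ∀ i j, ∑ c, Q i c * w j c = if i = j then δ else 0) (v : κ → R)
    (hv : ∀ i, ∑ c, Q i c * v c = 0) : ∃ u, FDeg (m+1) u ∧ gam Q u = δ ^ m • v := by
  have hs : FDeg 0 (Pi.single ∅ 1 : Finset κ → R) := by
    intro S hS
    rw [Pi.single_eq_of_ne]
    rintro rfl; simp at hS
  let V : Finset κ → R := fwed v (Pi.single ∅ 1)
  have hV1 : FDeg 1 V := hs.wed v
  have hV2 : ∀ i, fcon (Q i) V = 0 := by
    intro i
    have h1 := fcon_fwed (Q i) v (Pi.single ∅ 1)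
    have h2 : fcon (Q i) (Pi.single ∅ 1 : Finset κ → R) = 0 := by
      funext S
      simp only [fcon, LinearMap.coe_mk, AddHom.coe_mk]
      refine Finset.sum_eq_zero fun j _ => ?_
      rw [Pi.single_eq_of_ne (Finset.insert_ne_empty _ _)]
      simp
    rw [hv, h2, map_zero, add_zero, zero_smul] at h1
    exact h1
  have hV3 : ∀ c, V {c} = v c := by
    intro c
    simp [V, fwed, fsgn]
  have h4 := fit_wit Q w δ hw V hV2 (List.finRange m) (List.nodup_finRange m)
  refine ⟨(-1 : R) ^ m • wit ((List.finRange m).map w) V, ?_, ?_⟩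
  · have := wit_deg ((List.finRange m).map w) hV1
    intro S hS
    rw [Pi.smul_apply, this S, smul_zero]
    simpa [add_comm] using hS
  · funext c
    rw [gam_apply, map_smul, List.ofFn_eq_map, h4]
    simp only [Pi.smul_apply, smul_eq_mul, hV3, List.length_finRange]
    rw [← mul_assoc, ← mul_pow]; simp

/-- index types of the complex in degree at least two -/
abbrev bix (m : ℕ) (κ : Type) (k : ℕ) : Type :=
  {p : (Fin m → ℕ) × Finset κ // ∑ i, p.1 i = k ∧ p.2.card = m + k + 1}

/-- index types of the complex -/
def bidx (m : ℕ) (κ : Type) : ℕ → Type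
  | 0 => Fin m
  | 1 => κ
  | k+2 => bix m κ k

open Classical in
/-- extension by zero -/
def bext (R : Type*) [CommRing R] (m : ℕ) (κ : Type) (k : ℕ) :
    (bix m κ k → R) →ₗ[R] ((Fin m → ℕ) → Finset κ → R) where
  toFun u := fun α S => if h : ∑ i, α i = k ∧ S.card = m + k + 1 then u ⟨(α, S), h⟩ else 0
  map_add' u v := by
    funext α S
    simp only [Pi.add_apply]
    split_ifs <;> simp
  map_smul' r u := by
    funext α S
    simp only [Pi.smul_apply, RingHom.id_apply]
    split_ifs <;> simp

/-- restriction -/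
def bres (R : Type*) [CommRing R] (m : ℕ) (κ : Type) (k : ℕ) :
    ((Fin m → ℕ) → Finset κ → R) →ₗ[R] (bix m κ k → R) where
  toFun u := fun p => u p.1.1 p.1.2
  map_add' u v := rfl
  map_smul' r u := rfl

theorem bext_hom (k : ℕ) (u : bix m κ k → R) : KHom k (m+k+1) (bext R m κ k u) := by
  intro α S h
  simp [bext, h]

theorem bres_bext (k : ℕ) (u : bix m κ k → R) : bres R m κ k (bext R m κ k u) = u := by
  funext p
  exact dif_pos p.2

theorem bext_bres (k : ℕ) (u : (Fin m → ℕ) → Finset κ → R) (hu : KHom k (m+k+1) u) :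
    bext R m κ k (bres R m κ k u) = u := by
  funext α S
  by_cases h : ∑ i, α i = k ∧ S.card = m + k + 1
  · exact dif_pos h
  · rw [hu α S h]; exact dif_neg h

/-- the differential in lowest degree -/
def bd0 (Q : Fin m → κ → R) : (κ → R) →ₗ[R] (Fin m → R) := Matrix.mulVecLin (Matrix.of Q)

/-- the circuit differential -/
def bd1 (Q : Fin m → κ → R) : (bix m κ 0 → R) →ₗ[R] (κ → R) :=
  (gam Q).comp ((LinearMap.proj 0).comp (bext R m κ 0))

/-- the higher differentials -/
def bd2 (Q : Fin m → κ → R) (k : ℕ) : (bix m κ (k+1) → R) →ₗ[R] (bix m κ k → R) :=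
  (bres R m κ k).comp ((kd Q).comp (bext R m κ (k+1)))

theorem bd01 (Q : Fin m → κ → R) (u : bix m κ 0 → R) : bd0 Q (bd1 Q u) = 0 := by
  funext i
  exact Q_gam Q (bext R m κ 0 u 0) i

theorem bd12 (Q : Fin m → κ → R) (u : bix m κ 1 → R) : bd1 Q (bd2 Q 0 u) = 0 := by
  simp only [bd1, bd2, LinearMap.comp_apply]
  rw [bext_bres _ _ ((bext_hom _ _).kd Q)]
  funext c
  rw [gam_apply, LinearMap.proj_apply, kd_apply, map_sum]
  rw [Finset.sum_eq_zero]
  · simp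
  · intro i _
    apply fit_fcon_mem
    simp

theorem bd22 (Q : Fin m → κ → R) (k : ℕ) (u : bix m κ (k+2) → R) :
    bd2 Q k (bd2 Q (k+1) u) = 0 := by
  simp only [bd2, LinearMap.comp_apply]
  rw [bext_bres _ _ ((bext_hom _ _).kd Q), kd_kd, map_zero]

theorem bkill0 (Q w : Fin m → κ → R) (δ : R)
    (hw : ∀ i j, ∑ c, Q i c * w j c = if i = j then δ else 0)
    (v : κ → R) (hv : bd0 Q v = 0) : ∃ u, bd1 Q u = δ ^ m • v := by
  obtain ⟨u, hu, hu'⟩ := gam_surj Q w δ hw v (fun i => congrFun hv i)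
  classical
  refine ⟨bres R m κ 0 (fun α => if α = 0 then u else 0), ?_⟩
  simp only [bd1, LinearMap.comp_apply]
  rw [bext_bres]
  · simpa using hu'
  · refine KHom.mk' (fun α => ?_) fun α hα => ?_
    · split_ifs
      · exact hu
      · exact FDeg.zero _
    · rw [if_neg]
      rintro rfl
      simp at hα

theorem bkill1 (Q w : Fin m → κ → R) (δ : R)
    (hw : ∀ i j, ∑ c, Q i c * w j c = if i = j then δ else 0)
    (u : bix m κ 0 → R) (hu : bd1 Q u = 0) : ∃ v, bd2 Q 0 v = δ ^ m • u := by
  have h0 : kd Q (bext R m κ 0 u) = 0 := by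
    funext α
    rw [kd_apply]
    refine Finset.sum_eq_zero fun i _ => ?_
    rw [(bext_hom 0 u).zero, map_zero]
    rw [sum_add_single]; omega
  obtain ⟨-, -, v, hv, hv'⟩ := kq_kill Q w δ hw _ (bext_hom 0 u) h0 (List.finRange m)
  have h1 : kqit Q w (List.finRange m) (bext R m κ 0 u) = 0 := by
    funext α
    rw [kqit_apply]
    split_ifs with h
    · have hα : α = 0 := funext fun i => h i (by simp)
      subst hα
      apply eit_eq_zero Q w δ hw _ (List.nodup_finRange m)
      rw [← List.ofFn_eq_map]
      exact gam_eq_zero Q _ ((bext_hom 0 u).deg 0) hu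
    · rfl
  rw [h1, sub_zero, List.length_finRange] at hv'
  refine ⟨bres R m κ (0+1) v, ?_⟩
  simp only [bd2, LinearMap.comp_apply]
  rw [bext_bres _ _ hv, hv', map_smul, bres_bext]

theorem bkill2 (Q w : Fin m → κ → R) (δ : R)
    (hw : ∀ i j, ∑ c, Q i c * w j c = if i = j then δ else 0) (k : ℕ)
    (u : bix m κ (k+1) → R) (hu : bd2 Q k u = 0) : ∃ v, bd2 Q (k+1) v = δ ^ m • u := by
  have h0 : kd Q (bext R m κ (k+1) u) = 0 := by
    have := congrArg (bext R m κ k) hu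
    simp only [bd2, LinearMap.comp_apply, map_zero] at this
    rwa [bext_bres _ _ ((bext_hom _ _).kd Q)] at this
  obtain ⟨-, -, v, hv, hv'⟩ := kq_kill Q w δ hw _ (bext_hom (k+1) u) h0 (List.finRange m)
  have h1 : kqit Q w (List.finRange m) (bext R m κ (k+1) u) = 0 := by
    funext α
    rw [kqit_apply]
    split_ifs with h
    · have hα : α = 0 := funext fun i => h i (by simp)
      subst hα
      rw [(bext_hom (k+1) u).zero (by simp), eit_zero]
      rfl
    · rfl
  rw [h1, sub_zero, List.length_finRange] at hv'
  refine ⟨bres R m κ (k+1+1) v, ?_⟩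
  simp only [bd2, LinearMap.comp_apply]
  rw [bext_bres _ _ hv, hv', map_smul, bres_bext]

/-- the differentials of the Buchsbaum-Rim complex -/
def bd (Q : Fin m → κ → R) : ∀ k, (bidx m κ (k+1) → R) →ₗ[R] (bidx m κ k → R)
  | 0 => bd0 (κ := κ) Q
  | 1 => bd1 (κ := κ) Q
  | k+2 => bd2 (κ := κ) Q k

theorem bd_bd (Q : Fin m → κ → R) : ∀ k u, bd Q k (bd Q (k+1) u) = 0
  | 0, u => bd01 (κ := κ) Q u
  | 1, u => bd12 (κ := κ) Q u
  | k+2, u => bd22 (κ := κ) Q k u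

theorem bd_kill (Q w : Fin m → κ → R) (δ : R)
    (hw : ∀ i j, ∑ c, Q i c * w j c = if i = j then δ else 0) :
    ∀ k u, bd Q k u = 0 → ∃ v, bd Q (k+1) v = δ ^ m • u
  | 0, u, hu => bkill0 (κ := κ) Q w δ hw u hu
  | 1, u, hu => bkill1 (κ := κ) Q w δ hw u hu
  | k+2, u, hu => bkill2 (κ := κ) Q w δ hw k u hu

theorem bidx_empty (n : ℕ) (hκ : Fintype.card κ + 1 ≤ m + n) (hn : 1 ≤ n) (k : ℕ) (hk : n < k) :
    IsEmpty (bidx m κ k) := by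
  match k, hk with
  | 0, hk => omega
  | 1, hk => omega
  | k+2, hk =>
    refine ⟨fun p => ?_⟩
    have := p.2.2
    have := Finset.card_le_univ p.1.2
    omega

theorem br_exact (as : List R) (Q : Fin m → κ → R) (has : RingTheory.Sequence.IsWeaklyRegular R as)
    (hκ : Fintype.card κ + 1 ≤ m + as.length) (hn : 1 ≤ as.length)
    (hrad : ∀ I : Ideal R, (∀ (w : Fin m → κ → R) (δ : R),
      (∀ i j, ∑ c, Q i c * w j c = if i = j then δ else 0) → δ ^ m ∈ I) → ∀ a ∈ as, a ∈ I.radical)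
    (v : κ → R) (hv : ∀ i, ∑ c, Q i c * v c = 0) : ∃ u, FDeg (m+1) u ∧ gam Q u = v := by
  obtain ⟨u, hu⟩ := acyc as (fun k => bidx m κ k → R) (bd Q) (bd_bd Q)
    (fun k hk => by
      have := bidx_empty (m := m) (κ := κ) _ hκ hn k hk
      infer_instance) (fun k => wreg_pi as R has)
    (by
      intro a ha k
      let I : Ideal R :=
        { carrier := {r | ∀ u, bd Q k u = 0 → ∃ w, bd Q (k+1) w = r • u}
          add_mem' := by
            intro r s hr hs u hu
            obtain ⟨x, hx⟩ := hr u hu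
            obtain ⟨y, hy⟩ := hs u hu
            exact ⟨x + y, by rw [map_add, hx, hy, add_smul]⟩
          zero_mem' := fun u hu => ⟨0, by simp⟩
          smul_mem' := by
            intro r s hs u hu
            obtain ⟨y, hy⟩ := hs u hu
            exact ⟨r • y, by rw [map_smul, hy, smul_smul, smul_eq_mul]⟩ }
      obtain ⟨N, hN⟩ := hrad I (fun w δ hw => bd_kill Q w δ hw k) a ha
      exact ⟨N, hN⟩) 0 v (funext hv)
  exact ⟨_, (bext_hom 0 u).deg 0, hu⟩
end Cplx

theorem rank_at (n m : ℕ) (f : Fin m → Rp n) (d : Fin m → ℕ)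
    (hfh : ∀ i, (f i).IsHomogeneous (d i)) (hd : ∀ i, 1 ≤ d i) (hsnc : SNC n m f)
    (p : Fin n → ℂ) (hp : p ≠ 0) (y : Fin m → ℂ)
    (hy : ∀ c, ∑ i, y i * eval p (Q1 n m f i c) = 0) : y = 0 := by
  have heul : ∀ i, ∑ j, eval p (pderiv j (f i)) * p j = d i * eval p (f i) := by
    intro i
    have := congrArg (eval p) (hfh i).sum_X_mul_pderiv
    simp only [map_sum, map_mul, eval_X, nsmul_eq_mul, map_natCast] at this
    rw [← this]
    exact Finset.sum_congr rfl fun j _ => mul_comm _ _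
  have hJ : ∀ j, ∑ i, y i * eval p (pderiv j (f i)) = 0 := fun j => by
    simpa [Q1] using hy (Sum.inr j)
  have hk : ∀ k : Fin m, (k : ℕ) ≠ 0 → y k * eval p (f k) = 0 := by
    intro k hk
    have := hy (Sum.inl ⟨k, hk⟩)
    simp only [Q1, Matrix.of_apply, Sum.elim_inl] at this
    rw [Finset.sum_eq_single k] at this
    · simpa using this
    · intro b _ hb; simp [hb]
    · simp
  have hsum : ∑ i, y i * (d i * eval p (f i)) = 0 := by
    simp_rw [← heul, Finset.mul_sum]
    rw [Finset.sum_comm]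
    refine Finset.sum_eq_zero fun j _ => ?_
    simp_rw [← mul_assoc]
    rw [← Finset.sum_mul, hJ, zero_mul]
  have hall : ∀ k : Fin m, y k * eval p (f k) = 0 := by
    intro k
    by_cases h0 : (k : ℕ) = 0
    · rw [Finset.sum_eq_single k] at hsum
      · have hdk : (d k : ℂ) ≠ 0 := by exact_mod_cast (by have := hd k; omega)
        have : (d k : ℂ) * (y k * eval p (f k)) = 0 := by rw [← hsum]; ring
        exact (mul_eq_zero.1 this).resolve_left hdk
      · intro b _ hb
        have : (b : ℕ) ≠ 0 := fun h => hb (Fin.ext (by omega))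
        have := hk b this
        calc y b * (d b * eval p (f b)) = d b * (y b * eval p (f b)) := by ring
          _ = 0 := by rw [this, mul_zero]
      · simp
    · exact hk k h0
  set I : Finset (Fin m) := Finset.univ.filter fun i => eval p (f i) = 0 with hI
  have hIf : ∀ i ∈ I, eval p (f i) = 0 := fun i hi => by simpa [hI] using hi
  have hyI : ∀ i, i ∉ I → y i = 0 := fun i hi =>
    (mul_eq_zero.1 (hall i)).resolve_right (by simpa [hI] using hi)
  have hcard : I.card ≤ n := by
    by_contra hlt
    obtain ⟨I', hI', hc⟩ := Finset.exists_subset_card_eq (s := I) (n := n) (by omega)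
    have hn0 : 1 ≤ n := by
      rcases Nat.eq_zero_or_pos n with h | h
      · subst h; exact absurd (Subsingleton.elim p 0) hp
      · exact h
    have hr := hsnc.2 I' (by omega) hc.le p hp (fun i hi => hIf i (hI' hi))
    set M := (Matrix.of fun (i : I') (j : Fin n) => eval p (pderiv j (f i.1)))
    have hMp : M.mulVec p = 0 := by
      ext i
      change ∑ j, eval p (pderiv j (f i.1)) * p j = 0
      rw [heul, hIf _ (hI' i.2), mul_zero]
    have hrn := LinearMap.finrank_range_add_finrank_ker M.mulVecLin
    rw [← Matrix.rank, hr, hc] at hrn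
    simp only [Module.finrank_fin_fun] at hrn
    have hk0 : LinearMap.ker M.mulVecLin = ⊥ := Submodule.finrank_eq_zero.1 (by omega)
    exact hp ((Submodule.mem_bot ℂ).1 (hk0 ▸ (LinearMap.mem_ker.2 hMp)))
  by_cases h1 : 1 ≤ I.card
  · have hr := hsnc.2 I h1 hcard p hp hIf
    set M := (Matrix.of fun (i : I) (j : Fin n) => eval p (pderiv j (f i.1)))
    have hli : LinearIndependent ℂ M.row := by
      rw [linearIndependent_iff_card_eq_finrank_span, Set.finrank, ← Matrix.rank_eq_finrank_span_row, hr]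
      simp
    have := Fintype.linearIndependent_iff.1 hli (fun i => y i) (by
      ext j
      have := hJ j
      rw [← Finset.sum_subset (Finset.subset_univ I) (fun i _ hi => by rw [hyI i hi, zero_mul]),
        ← Finset.sum_coe_sort] at this
      simpa [M, Matrix.row] using this)
    ext i
    by_cases hi : i ∈ I
    · exact this ⟨i, hi⟩
    · exact hyI i hi
  · have : I = ∅ := Finset.card_eq_zero.1 (by omega)
    ext i
    exact hyI i (by simp [this])

theorem rinv_at (n m : ℕ) (f : Fin m → Rp n) (d : Fin m → ℕ)
    (hfh : ∀ i, (f i).IsHomogeneous (d i)) (hd : ∀ i, 1 ≤ d i) (hsnc : SNC n m f)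
    (p : Fin n → ℂ) (hp : p ≠ 0) :
    ∃ B : Matrix (Col n m) (Fin m) ℂ, (Q1 n m f).map (eval p) * B = 1 := by
  classical
  have hinj : Function.Injective ((Q1 n m f).map (eval p)).vecMul := by
    rw [← Matrix.coe_vecMulLinear, ← LinearMap.ker_eq_bot, LinearMap.ker_eq_bot']
    intro y hy
    refine rank_at n m f d hfh hd hsnc p hp y fun c => ?_
    have := congrFun hy c
    simpa [Matrix.vecMul, dotProduct] using this
  rw [Matrix.vecMul_injective_iff] at hinj
  have hr := hinj.rank_matrix
  rw [← Matrix.mulVec_surjective_iff_exists_right_inverse, ← Matrix.coe_mulVecLin,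
    ← LinearMap.range_eq_top]
  apply Submodule.eq_top_of_finrank_eq
  rw [← Matrix.rank, hr]
  simp

theorem hrad_Q1 (n m : ℕ) (f : Fin m → Rp n) (d : Fin m → ℕ)
    (hfh : ∀ i, (f i).IsHomogeneous (d i)) (hd : ∀ i, 1 ≤ d i) (hsnc : SNC n m f)
    (I : Ideal (Rp n))
    (hI : ∀ (w : Fin m → Col n m → Rp n) (δ : Rp n),
      (∀ i j, ∑ c, Q1 n m f i c * w j c = if i = j then δ else 0) → δ ^ m ∈ I) (j : Fin n) :
    (X j : Rp n) ∈ I.radical := by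
  classical
  rw [← MvPolynomial.vanishingIdeal_zeroLocus_eq_radical (K := ℂ), mem_vanishingIdeal_iff]
  intro p hpI
  rw [mem_zeroLocus_iff] at hpI
  by_contra hne
  have hp : p ≠ 0 := by
    rintro rfl
    simp at hne
  obtain ⟨B, hB⟩ := rinv_at n m f d hfh hd hsnc p hp
  obtain ⟨B', hB'⟩ : ∃ B' : Matrix (Col n m) (Fin m) (Rp n), B' = Matrix.of fun c i => C (B c i) :=
    ⟨_, rfl⟩
  obtain ⟨A, hA⟩ : ∃ A : Matrix (Fin m) (Fin m) (Rp n), A = Q1 n m f * B' := ⟨_, rfl⟩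
  have hdet : eval p A.det = 1 := by
    rw [RingHom.map_det]
    have : (eval p).mapMatrix A = 1 := by
      rw [hA, RingHom.mapMatrix_apply, Matrix.map_mul, ← hB]
      congr 1
      ext i j
      simp [hB']
    rw [this, Matrix.det_one]
  have := hpI _ (hI (fun j c => (B' * A.adjugate) c j) A.det (by
    intro i j
    change (Q1 n m f * (B' * A.adjugate)) i j = _
    rw [← Matrix.mul_assoc, ← hA, Matrix.mul_adjugate, Matrix.smul_apply, Matrix.one_apply]
    simp))
  rw [map_pow, aeval_eq_eval, hdet] at this
  simp at this

theorem gam_single {R : Type*} [CommRing R] {κ : Type} [LinearOrder κ] [Fintype κ] {m : ℕ}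
    (Q : Fin m → κ → R) (T : Finset κ) (hT : T.card = m + 1) (c : κ) :
    gam Q (Pi.single T 1) c = ∑ k : Fin (m + 1),
    if c = T.orderEmbOfFin hT k then
      (-1 : R) ^ (k : ℕ) *
        ((Matrix.of Q).submatrix id fun l : Fin m => T.orderEmbOfFin hT (k.succAbove l)).det
    else 0 := by
  change fdet (m+1) (Fin.cons (Pi.single c 1) Q) (Pi.single T 1) = _
  rw [fdet_single _ _ _ hT, Matrix.det_succ_row_zero]
  refine Finset.sum_congr rfl fun k _ => ?_
  simp only [Matrix.of_apply, Fin.cons_zero]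
  by_cases h : c = T.orderEmbOfFin hT k
  · rw [if_pos h, ← h, Pi.single_eq_same, mul_one]
    rfl
  · rw [if_neg h, Pi.single_eq_of_ne (Ne.symm h), mul_zero, zero_mul]

/-- basis vector of the exterior algebra -/
def sgv (R : Type*) [CommRing R] {κ : Type} [LinearOrder κ] (T : Finset κ) : Finset κ → R :=
  Pi.single T 1

theorem sgv_sum {R : Type*} [CommRing R] {κ : Type} [LinearOrder κ] [Fintype κ]
    (u : Finset κ → R) : u = ∑ T, u T • sgv R T := by
  funext S
  rw [Finset.sum_apply, Finset.sum_eq_single S]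
  · simp [sgv]
  · intro b _ hb
    rw [Pi.smul_apply, sgv, Pi.single_eq_of_ne (Ne.symm hb), smul_zero]
  · simp

theorem gam_circuit (n m : ℕ) (f : Fin m → Rp n) (T : Finset (Col n m)) (hT : T.card = m + 1) :
    gam (fun i c => Q1 n m f i c) (sgv (Rp n) T) = circuit n m f T hT := by
  funext c
  refine (gam_single (fun i c => Q1 n m f i c) T hT c).trans ?_
  rw [circuit]
  refine Finset.sum_congr rfl fun k _ => ?_
  by_cases h : c = T.orderEmbOfFin hT k
  · rw [if_pos h, if_pos h]; rfl
  · rw [if_neg h, if_neg h]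

/-- Under the SNC hypothesis, the kernel of `v ↦ Q_{∖1}·v` is generated by
the circuit vectors `c_T`, `T` ranging over `(m+1)`-element subsets of the columns. -/
theorem ker_generated_by_circuits (n m : ℕ) (hn : 2 ≤ n) (hm : n + 1 ≤ m)
    (f : Fin m → Rp n) (d : Fin m → ℕ)
    (hf0 : ∀ i, f i ≠ 0) (hfh : ∀ i, (f i).IsHomogeneous (d i)) (hd : ∀ i, 1 ≤ d i)
    (hsnc : SNC n m f) :
    LinearMap.ker (Q1 n m f).mulVecLin =
      Submodule.span (Rp n)
        {v | ∃ T : Finset (Col n m), ∃ hT : T.card = m + 1, v = circuit n m f T hT} := by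
  have hmem : ∀ v : Col n m → Rp n, v ∈ LinearMap.ker (Q1 n m f).mulVecLin ↔
      ∀ i, ∑ c, Q1 n m f i c * v c = 0 := by
    intro v
    rw [LinearMap.mem_ker, funext_iff]
    rfl
  apply le_antisymm
  · intro v hv
    have hcard : Fintype.card (Col n m) + 1 ≤
        m + (List.ofFn (fun i : Fin n => (X i : Rp n))).length := by
      rw [List.length_ofFn, Fintype.card_sum, Fintype.card_fin]
      have : Fintype.card {k : Fin m // (k : ℕ) ≠ 0} < Fintype.card (Fin m) :=
        Fintype.card_subtype_lt (x := ⟨0, by omega⟩) (by simp)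
      rw [Fintype.card_fin] at this
      omega
    obtain ⟨u, hu, rfl⟩ := br_exact (List.ofFn (fun i : Fin n => (X i : Rp n))) (fun i c => Q1 n m f i c)
      (wreg_X n) hcard (by rw [List.length_ofFn]; omega)
      (by
        intro I hI a ha
        obtain ⟨j, rfl⟩ := (List.mem_ofFn' _ _).1 ha
        exact hrad_Q1 n m f d hfh hd hsnc I hI j) v ((hmem v).1 hv)
    rw [sgv_sum u, map_sum]
    refine Submodule.sum_mem _ fun T _ => ?_
    rw [map_smul]
    by_cases hT : T.card = m + 1
    · rw [gam_circuit n m f T hT]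
      exact Submodule.smul_mem _ _ (Submodule.subset_span ⟨T, hT, rfl⟩)
    · rw [hu T hT, zero_smul]
      exact Submodule.zero_mem _
  · rw [Submodule.span_le]
    rintro v ⟨T, hT, rfl⟩
    rw [SetLike.mem_coe, hmem, ← gam_circuit]
    exact Q_gam (fun i c => Q1 n m f i c) _
end
end
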